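/- Let K be an algebraically closed field. Let A_7 be the algebra given by the quiver with vertices 1, 2, 3, 4 and arrows α: 1 → 2, β: 2 → 1, δ: 2 → 3, γ: 3 → 2, ε: 3 → 4, ξ: 4 → 3, bound by the relations βα = δγ, γδ = εξ, αδε = 0 and ξγβ = 0. Then A_7 has exactly 108 isomorphism classes of basic support τ-tilting modules. -/

import Mathlib

/- Formalization of statements from
   "Report on the finiteness of silting objects"
   by T. Aihara, T. Honma, K. Miyamoto, Q. Wang. -/

open CategoryTheory CategoryTheory.Limits

universe u v w

noncomputable section
namespace PaperSilting
/-! ### Module-theoretic notions.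

We model right `Λ`-modules as left modules over the opposite ring; all the
definitions below are stated for left modules over a ring `R` and are applied
with `R := Λᵐᵒᵖ`. -/

/-- The category of `R`-modules (in `Type 0`). -/
abbrev ModCat (R : Type) [Ring R] := ModuleCat.{0} R

variable {R : Type} [Ring R]

/-- The module object `M` is finitely generated. -/
def IsFGMod {R : Type} [Ring R] (M : ModCat R) : Prop := Module.Finite R M

/-- Indecomposable module object. -/
def IsIndecMod {R : Type} [Ring R] (M : ModCat R) : Prop :=
  ¬ IsZero M ∧ ∀ A B : ModCat R, Nonempty (M ≅ A ⊞ B) → IsZero A ∨ IsZero B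

/-- `N` belongs to `add M`, i.e. `N` is a direct summand of a finite direct sum
of copies of `M`. -/
def MemAddMod {R : Type} [Ring R] (N M : ModCat R) : Prop :=
  ∃ (k : ℕ) (g : N ⟶ ⨁ (fun _ : Fin k => M)) (h : (⨁ (fun _ : Fin k => M)) ⟶ N),
    g ≫ h = 𝟙 N

/-- A basic module: it has no direct summand of the form `N ⊕ N` with `N ≠ 0`. -/
def IsBasicMod {R : Type} [Ring R] (M : ModCat R) : Prop :=
  ∀ N X : ModCat R, Nonempty (M ≅ (N ⊞ N) ⊞ X) → IsZero N

/-- `M` is τ-rigid, i.e. `Hom(M, τM) = 0`: there is a projective presentation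
`P₁ → P₀ → M → 0` by finitely generated projectives such that
`Hom(P₀, M) → Hom(P₁, M)` is surjective (Adachi–Iyama–Reiten). -/
def IsTauRigidMod {R : Type} [Ring R] (M : ModCat R) : Prop :=
  ∃ (P₁ P₀ : ModCat R) (f : P₁ ⟶ P₀) (g : P₀ ⟶ M),
    Projective P₁ ∧ Projective P₀ ∧ IsFGMod P₁ ∧ IsFGMod P₀ ∧
    Function.Surjective g ∧ Function.Exact f g ∧
    ∀ h : P₁ ⟶ M, ∃ k : P₀ ⟶ M, f ≫ k = h

/-- A τ-rigid pair `(M, P)`: `M` is a τ-rigid module and `P` is a finitely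
generated projective with `Hom(P, M) = 0`. -/
def IsTauRigidPairMod {R : Type} [Ring R] (M P : ModCat R) : Prop :=
  IsFGMod M ∧ IsTauRigidMod M ∧ IsFGMod P ∧ Projective P ∧ ∀ f : P ⟶ M, f = 0

/-- `M` is a support τ-tilting module: `(M, P)` is a maximal τ-rigid pair for
some projective `P` (Adachi–Iyama–Reiten; equivalently, `M` is the `0`-th
cohomology of a two-term silting complex in `K^b(proj)`). -/
def IsSupportTauTiltingMod {R : Type} [Ring R] (M : ModCat R) : Prop :=
  ∃ P : ModCat R, IsTauRigidPairMod M P ∧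
    ∀ N Q : ModCat R, IsTauRigidPairMod (M ⊞ N) (P ⊞ Q) → MemAddMod N M ∧ MemAddMod Q P

/-- The ring `R` admits only finitely many basic support τ-tilting modules up
to isomorphism. -/
def IsTauTiltingFiniteRing (R : Type) [Ring R] : Prop :=
  ∃ (n : ℕ) (f : Fin n → ModCat R),
    ∀ M : ModCat R, IsSupportTauTiltingMod M → IsBasicMod M → ∃ i, Nonempty (M ≅ f i)

/-- The ring `R` admits only finitely many finitely generated indecomposable
modules up to isomorphism. -/
def IsRepFiniteRing (R : Type) [Ring R] : Prop :=
  ∃ (n : ℕ) (f : Fin n → ModCat R),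
    ∀ M : ModCat R, IsFGMod M → IsIndecMod M → ∃ i, Nonempty (M ≅ f i)

/-- `R` has exactly `n` isomorphism classes of basic support τ-tilting modules. -/
def SupportTauTiltingCount (R : Type) [Ring R] (n : ℕ) : Prop :=
  ∃ f : Fin n → ModCat R,
    (∀ i, IsSupportTauTiltingMod (f i) ∧ IsBasicMod (f i)) ∧
    (∀ i j, Nonempty (f i ≅ f j) → i = j) ∧
    (∀ M : ModCat R, IsSupportTauTiltingMod M → IsBasicMod M → ∃ i, Nonempty (M ≅ f i))

/-- An algebra `Λ` is τ-tilting-finite (with respect to right modules,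
i.e. left `Λᵐᵒᵖ`-modules). -/
def IsTauTiltingFinite (Λ : Type) [Ring Λ] : Prop := IsTauTiltingFiniteRing Λᵐᵒᵖ

/-- An algebra `Λ` is representation-finite (with respect to right modules). -/
def IsRepFinite (Λ : Type) [Ring Λ] : Prop := IsRepFiniteRing Λᵐᵒᵖ
/-- The defining relations of the algebra `A₇`, as relations on the free algebra on
the idempotents `e_1, …, e_4` and the arrows of its quiver. -/
def A7Rel (K : Type) [Field K] : FreeAlgebra K (Fin 10) → FreeAlgebra K (Fin 10) → Prop := fun u v =>
  (u, v) ∈ ([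
    (FreeAlgebra.ι K (0 : Fin 10) * FreeAlgebra.ι K (0 : Fin 10), FreeAlgebra.ι K (0 : Fin 10)),
    (FreeAlgebra.ι K (0 : Fin 10) * FreeAlgebra.ι K (1 : Fin 10), (0 : FreeAlgebra K (Fin 10))),
    (FreeAlgebra.ι K (0 : Fin 10) * FreeAlgebra.ι K (2 : Fin 10), (0 : FreeAlgebra K (Fin 10))),
    (FreeAlgebra.ι K (0 : Fin 10) * FreeAlgebra.ι K (3 : Fin 10), (0 : FreeAlgebra K (Fin 10))),
    (FreeAlgebra.ι K (1 : Fin 10) * FreeAlgebra.ι K (0 : Fin 10), (0 : FreeAlgebra K (Fin 10))),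
    (FreeAlgebra.ι K (1 : Fin 10) * FreeAlgebra.ι K (1 : Fin 10), FreeAlgebra.ι K (1 : Fin 10)),
    (FreeAlgebra.ι K (1 : Fin 10) * FreeAlgebra.ι K (2 : Fin 10), (0 : FreeAlgebra K (Fin 10))),
    (FreeAlgebra.ι K (1 : Fin 10) * FreeAlgebra.ι K (3 : Fin 10), (0 : FreeAlgebra K (Fin 10))),
    (FreeAlgebra.ι K (2 : Fin 10) * FreeAlgebra.ι K (0 : Fin 10), (0 : FreeAlgebra K (Fin 10))),
    (FreeAlgebra.ι K (2 : Fin 10) * FreeAlgebra.ι K (1 : Fin 10), (0 : FreeAlgebra K (Fin 10))),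
    (FreeAlgebra.ι K (2 : Fin 10) * FreeAlgebra.ι K (2 : Fin 10), FreeAlgebra.ι K (2 : Fin 10)),
    (FreeAlgebra.ι K (2 : Fin 10) * FreeAlgebra.ι K (3 : Fin 10), (0 : FreeAlgebra K (Fin 10))),
    (FreeAlgebra.ι K (3 : Fin 10) * FreeAlgebra.ι K (0 : Fin 10), (0 : FreeAlgebra K (Fin 10))),
    (FreeAlgebra.ι K (3 : Fin 10) * FreeAlgebra.ι K (1 : Fin 10), (0 : FreeAlgebra K (Fin 10))),
    (FreeAlgebra.ι K (3 : Fin 10) * FreeAlgebra.ι K (2 : Fin 10), (0 : FreeAlgebra K (Fin 10))),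
    (FreeAlgebra.ι K (3 : Fin 10) * FreeAlgebra.ι K (3 : Fin 10), FreeAlgebra.ι K (3 : Fin 10)),
    (FreeAlgebra.ι K (0 : Fin 10) + FreeAlgebra.ι K (1 : Fin 10) + FreeAlgebra.ι K (2 : Fin 10) + FreeAlgebra.ι K (3 : Fin 10), 1),
    (FreeAlgebra.ι K (4 : Fin 10), FreeAlgebra.ι K (0 : Fin 10) * FreeAlgebra.ι K (4 : Fin 10) * FreeAlgebra.ι K (1 : Fin 10)),
    (FreeAlgebra.ι K (5 : Fin 10), FreeAlgebra.ι K (1 : Fin 10) * FreeAlgebra.ι K (5 : Fin 10) * FreeAlgebra.ι K (0 : Fin 10)),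
    (FreeAlgebra.ι K (6 : Fin 10), FreeAlgebra.ι K (1 : Fin 10) * FreeAlgebra.ι K (6 : Fin 10) * FreeAlgebra.ι K (2 : Fin 10)),
    (FreeAlgebra.ι K (7 : Fin 10), FreeAlgebra.ι K (2 : Fin 10) * FreeAlgebra.ι K (7 : Fin 10) * FreeAlgebra.ι K (1 : Fin 10)),
    (FreeAlgebra.ι K (8 : Fin 10), FreeAlgebra.ι K (2 : Fin 10) * FreeAlgebra.ι K (8 : Fin 10) * FreeAlgebra.ι K (3 : Fin 10)),
    (FreeAlgebra.ι K (9 : Fin 10), FreeAlgebra.ι K (3 : Fin 10) * FreeAlgebra.ι K (9 : Fin 10) * FreeAlgebra.ι K (2 : Fin 10)),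
    (FreeAlgebra.ι K (5 : Fin 10) * FreeAlgebra.ι K (4 : Fin 10), FreeAlgebra.ι K (6 : Fin 10) * FreeAlgebra.ι K (7 : Fin 10)),
    (FreeAlgebra.ι K (7 : Fin 10) * FreeAlgebra.ι K (6 : Fin 10), FreeAlgebra.ι K (8 : Fin 10) * FreeAlgebra.ι K (9 : Fin 10)),
    (FreeAlgebra.ι K (4 : Fin 10) * FreeAlgebra.ι K (6 : Fin 10) * FreeAlgebra.ι K (8 : Fin 10), (0 : FreeAlgebra K (Fin 10))),
    (FreeAlgebra.ι K (9 : Fin 10) * FreeAlgebra.ι K (7 : Fin 10) * FreeAlgebra.ι K (5 : Fin 10), (0 : FreeAlgebra K (Fin 10)))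
  ] : List ((FreeAlgebra K (Fin 10)) × (FreeAlgebra K (Fin 10))))

/-- the algebra `A₇`, presented by quiver and relations. -/
def A7 (K : Type) [Field K] : Type := RingQuot (A7Rel K)

instance (K : Type) [Field K] : Ring (A7 K) :=
  inferInstanceAs (Ring (RingQuot (A7Rel K)))

instance (K : Type) [Field K] : Algebra K (A7 K) :=
  inferInstanceAs (Algebra K (RingQuot (A7Rel K)))

/-!
Sending a basic support τ-tilting module `M` to the class `Fac M` of quotients of sums of copies of
`M` identifies basic support τ-tilting modules with the torsion classes generated by one module.
The algebra `A₇` has the nilpotent central element `z = αβ + βα + γδ + ξε`. If `z` is nilpotent and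
central, then every module of a torsion class is an iterated extension of modules of that class
killed by `z`, so the torsion class is determined by the latter, and a generator of these lifts to
a generator of the whole class.

The modules over `A₇` killed by `z` are direct sums of 24 string modules `S a`, all of them thin.
Hence a torsion class is determined by the set of strings `a` with `S a` in it, and the sets that
occur are the closed sets of the Galois connection attached to the relation `Hom(S a, S b) = 0`.
These closed sets are the extents of the formal concepts of that relation between strings; it is
computed combinatorially and has 108 concepts.
-/

/-! ### Direct summands and the Krull–Schmidt theorem -/

section KrullSchmidt

/-- `X` is isomorphic to a direct summand of `M`. -/
def IsSummand (Λ : Type u) [Ring Λ] (X M : Type v) [AddCommGroup X] [Module Λ X]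
    [AddCommGroup M] [Module Λ M] : Prop :=
  ∃ (i : X →ₗ[Λ] M) (p : M →ₗ[Λ] X), Function.LeftInverse p i

/-- `X` lies in `add M`, the class of direct summands of finite powers of `M`. -/
def InAdd (Λ : Type u) [Ring Λ] (X M : Type v) [AddCommGroup X] [Module Λ X]
    [AddCommGroup M] [Module Λ M] : Prop :=
  ∃ k : ℕ, IsSummand Λ X (Fin k → M)

/-- Indecomposable modules, as the nonzero modules with no nontrivial idempotent endomorphism. -/
def IsIndec (Λ : Type u) [Ring Λ] (X : Type v) [AddCommGroup X] [Module Λ X] : Prop :=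
  Nontrivial X ∧ ∀ e : Module.End Λ X, IsIdempotentElem e → e = 0 ∨ e = 1

/-- Basic modules, i.e. modules without repeated nonzero direct summands. -/
def IsBasic (Λ : Type u) [Ring Λ] (M : Type v) [AddCommGroup M] [Module Λ M] : Prop :=
  ∀ N : ModuleCat.{v} Λ, IsSummand Λ (N × N) M → Subsingleton N

variable {Λ : Type u} [Ring Λ] {X Y Z M N A B : Type v}
  [AddCommGroup X] [Module Λ X] [AddCommGroup Y] [Module Λ Y] [AddCommGroup Z] [Module Λ Z]
  [AddCommGroup M] [Module Λ M] [AddCommGroup N] [Module Λ N]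
  [AddCommGroup A] [Module Λ A] [AddCommGroup B] [Module Λ B]

namespace IsSummand

theorem refl : IsSummand Λ X X := ⟨LinearMap.id, LinearMap.id, fun _ => rfl⟩

theorem of_equiv (e : X ≃ₗ[Λ] Y) : IsSummand Λ X Y := ⟨e, e.symm, e.symm_apply_apply⟩

theorem trans (h : IsSummand Λ X Y) (h' : IsSummand Λ Y Z) : IsSummand Λ X Z := by
  obtain ⟨i, p, hp⟩ := h
  obtain ⟨i', p', hp'⟩ := h'
  exact ⟨i' ∘ₗ i, p ∘ₗ p', hp'.comp hp⟩

theorem prodMap (h : IsSummand Λ X A) (h' : IsSummand Λ Y B) : IsSummand Λ (X × Y) (A × B) := by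
  obtain ⟨i, p, hp⟩ := h
  obtain ⟨i', p', hp'⟩ := h'
  exact ⟨i.prodMap i', p.prodMap p', fun x => Prod.ext (hp x.1) (hp' x.2)⟩

theorem fst : IsSummand Λ A (A × B) := ⟨.inl Λ A B, .fst Λ A B, fun _ => rfl⟩

theorem snd : IsSummand Λ B (A × B) := ⟨.inr Λ A B, .snd Λ A B, fun _ => rfl⟩

theorem powMap (ι : Type) (h : IsSummand Λ X A) : IsSummand Λ (ι → X) (ι → A) := by
  obtain ⟨i, p, hp⟩ := h
  exact ⟨i.compLeft ι, p.compLeft ι, fun x => funext fun j => hp (x j)⟩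

theorem of_subsingleton [Subsingleton X] : IsSummand Λ X M :=
  ⟨0, 0, fun _ => Subsingleton.elim _ _⟩

theorem of_isCompl {P Q : Submodule Λ M} (h : IsCompl P Q) : IsSummand Λ P M :=
  ⟨P.subtype, P.projectionOnto Q h, P.projectionOnto_apply_left h⟩

theorem finite (h : IsSummand Λ X M) [Module.Finite Λ M] : Module.Finite Λ X := by
  obtain ⟨_, p, hp⟩ := h
  exact .of_surjective p hp.surjective

theorem projective (h : IsSummand Λ X M) [Module.Projective Λ M] : Module.Projective Λ X := by
  obtain ⟨i, p, hp⟩ := h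
  exact .of_split i p (LinearMap.ext hp)

theorem exists_equiv_prod (h : IsSummand Λ X M) :
    ∃ C : Submodule Λ M, Nonempty (M ≃ₗ[Λ] X × C) := by
  obtain ⟨i, p, hp⟩ := h
  let q : M →ₗ[Λ] LinearMap.ker p :=
    (LinearMap.id - i ∘ₗ p).codRestrict _ fun m => by simp [hp (p m)]
  refine ⟨LinearMap.ker p, ⟨.ofLinearMap (p.prod q) (i.coprod (LinearMap.ker p).subtype) ?_ ?_⟩⟩
  · ext x
    · simp [hp x]
    · simp [q, hp x]
    · simp
    · simp [q]
  · ext x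
    simp [q]

theorem inAdd (h : IsSummand Λ X M) : InAdd Λ X M :=
  ⟨1, h.trans (of_equiv (LinearEquiv.funUnique (Fin 1) Λ M).symm)⟩

end IsSummand

namespace InAdd

theorem trans (h : InAdd Λ X Y) (h' : InAdd Λ Y Z) : InAdd Λ X Z := by
  obtain ⟨k, hk⟩ := h
  obtain ⟨l, hl⟩ := h'
  have e : (Fin k → Fin l → Z) ≃ₗ[Λ] (Fin (k * l) → Z) :=
    (LinearEquiv.curry Λ Z (Fin k) (Fin l)).symm ≪≫ₗ
      LinearEquiv.funCongrLeft Λ Z finProdFinEquiv.symm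
  exact ⟨k * l, (hk.trans (hl.powMap _)).trans (.of_equiv e)⟩

theorem prod (h : InAdd Λ X Z) (h' : InAdd Λ Y Z) : InAdd Λ (X × Y) Z := by
  obtain ⟨k, hk⟩ := h
  obtain ⟨l, hl⟩ := h'
  have e : ((Fin k → Z) × (Fin l → Z)) ≃ₗ[Λ] (Fin (k + l) → Z) :=
    (LinearEquiv.sumArrowLequivProdArrow (Fin k) (Fin l) Λ Z).symm ≪≫ₗ
      LinearEquiv.funCongrLeft Λ Z finSumFinEquiv.symm
  exact ⟨k + l, (hk.prodMap hl).trans (.of_equiv e)⟩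

theorem of_subsingleton [Subsingleton X] : InAdd Λ X M := ⟨0, .of_subsingleton⟩

theorem finite (h : InAdd Λ X M) [Module.Finite Λ M] : Module.Finite Λ X := by
  obtain ⟨k, hk⟩ := h
  exact hk.finite

theorem projective (h : InAdd Λ X M) [Module.Projective Λ M] : Module.Projective Λ X := by
  obtain ⟨k, hk⟩ := h
  have : Module.Projective Λ (Fin k → M) :=
    .of_equiv (DFinsupp.linearEquivFunOnFintype (R := Λ) (M := fun _ : Fin k => M))
  exact hk.projective

theorem hom_eq_zero (h : InAdd Λ X M) (h0 : ∀ f : M →ₗ[Λ] N, f = 0) (f : X →ₗ[Λ] N) :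
    f = 0 := by
  obtain ⟨k, i, p, hp⟩ := h
  have hfp : f ∘ₗ p = 0 := LinearMap.pi_ext' fun j => by
    rw [h0 ((f ∘ₗ p) ∘ₗ LinearMap.single Λ (fun _ => M) j), LinearMap.zero_comp]
  ext x
  rw [← hp x]
  exact LinearMap.congr_fun hfp (i x)

end InAdd

theorem exists_minimal_length (p : ModuleCat.{v} Λ → Prop) (h : ∃ M, p M) :
    ∃ M, p M ∧ ∀ N, p N → Module.length Λ M ≤ Module.length Λ N := by
  obtain ⟨M, hM, hmin⟩ := (InvImage.wf (fun M : ModuleCat.{v} Λ => Module.length Λ M)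
    (wellFounded_lt (α := ℕ∞))).has_min {M | p M} h
  exact ⟨M, hM, fun N hN => not_lt.1 (hmin N hN)⟩

theorem IsIndec.nonempty_equiv_of_isSummand (h : IsIndec Λ X) [Nontrivial Y]
    (hs : IsSummand Λ Y X) : Nonempty (Y ≃ₗ[Λ] X) := by
  obtain ⟨i, p, hp⟩ := hs
  have hpi : p ∘ₗ i = LinearMap.id := LinearMap.ext hp
  have idem : IsIdempotentElem (i ∘ₗ p : Module.End Λ X) := by
    ext x
    simp [hp (p x)]
  rcases h.2 _ idem with h0 | h1
  · obtain ⟨y, hy⟩ := exists_ne (0 : Y)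
    refine absurd ?_ hy
    have := LinearMap.congr_fun h0 (i y)
    rw [LinearMap.comp_apply, hp, LinearMap.zero_apply] at this
    rw [← hp y, this, map_zero]
  · exact ⟨.ofLinearMap i p h1 hpi⟩

variable [IsArtinianRing Λ]

theorem IsIndec.isNilpotent_or_isUnit (h : IsIndec Λ X) [Module.Finite Λ X]
    (φ : Module.End Λ X) : IsNilpotent φ ∨ IsUnit φ := by
  obtain ⟨n, hn, hn1⟩ := (φ.eventually_isCompl_ker_pow_range_pow.and
    (Filter.eventually_ge_atTop 1)).exists
  let e : Module.End Λ X := Submodule.projection _ _ hn.symm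
  have he : ∀ x, e ((φ ^ n) x) = (φ ^ n) x := fun x =>
    Submodule.projection_apply_of_mem_left hn.symm ⟨x, rfl⟩
  rcases h.2 e (Submodule.isIdempotentElem_projection hn.symm) with h0 | h1
  · exact .inl ⟨n, LinearMap.ext fun x => by rw [← he, h0]; rfl⟩
  · right
    have hs : Function.Surjective φ := fun x => by
      obtain ⟨y, hy⟩ : x ∈ LinearMap.range (φ ^ n) := by
        have := Submodule.projection_apply_mem hn.symm x
        rwa [show Submodule.projection _ _ hn.symm x = x from LinearMap.congr_fun h1 x] at this
      exact ⟨(φ ^ (n - 1)) y, by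
        rw [← hy, ← Module.End.mul_apply, ← pow_succ', Nat.sub_add_cancel hn1]⟩
    exact (Module.End.isUnit_iff φ).2 (IsNoetherian.bijective_of_surjective_endomorphism φ hs)

theorem IsIndec.isSummand_or_of_prod (h : IsIndec Λ X) [Module.Finite Λ X]
    (hs : IsSummand Λ X (A × B)) : IsSummand Λ X A ∨ IsSummand Λ X B := by
  obtain ⟨i, p, hp⟩ := hs
  let a : Module.End Λ X := (p ∘ₗ .inl Λ A B) ∘ₗ (.fst Λ A B ∘ₗ i)
  let b : Module.End Λ X := (p ∘ₗ .inr Λ A B) ∘ₗ (.snd Λ A B ∘ₗ i)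
  have hab : b = 1 - a := by
    refine eq_sub_of_add_eq' (LinearMap.ext fun x => ?_)
    have : p ((i x).1, 0) + p (0, (i x).2) = x := by
      rw [← map_add]
      simp [hp x]
    simpa [a, b] using this
  have of_isUnit : ∀ {C : Type v} [AddCommGroup C] [Module Λ C] (u : X →ₗ[Λ] C) (w : C →ₗ[Λ] X),
      IsUnit (w ∘ₗ u : Module.End Λ X) → IsSummand Λ X C := fun u w hu => by
    obtain ⟨c, hc⟩ := hu.exists_left_inv
    exact ⟨u, c ∘ₗ w, LinearMap.congr_fun hc⟩
  rcases h.isNilpotent_or_isUnit a with ha | ha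
  · have hb : IsUnit b := hab ▸ ha.isUnit_one_sub
    exact .inr (of_isUnit _ _ hb)
  · exact .inl (of_isUnit _ _ ha)

theorem IsIndec.isSummand_of_inAdd (h : IsIndec Λ X) [Module.Finite Λ X] (hs : InAdd Λ X M) :
    IsSummand Λ X M := by
  obtain ⟨k, hk⟩ := hs
  induction k with
  | zero =>
    have := h.1
    obtain ⟨i, p, hp⟩ := hk
    exact absurd hp.injective.subsingleton (not_subsingleton X)
  | succ k ih =>
    have e := (Fin.consLinearEquiv Λ fun _ : Fin (k + 1) => M).symm
    exact (h.isSummand_or_of_prod (hk.trans (.of_equiv e))).elim id ih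

theorem IsIndec.nonempty_equiv_or_isSummand (hX : IsIndec Λ X) (hY : IsIndec Λ Y)
    [Module.Finite Λ Y] (h : IsSummand Λ Y (X × A)) :
    Nonempty (Y ≃ₗ[Λ] X) ∨ IsSummand Λ Y A :=
  have := hY.1
  (hY.isSummand_or_of_prod h).imp_left hX.nonempty_equiv_of_isSummand

theorem exists_isIndec_isSummand [Module.Finite Λ M] [Nontrivial M] :
    ∃ X : ModuleCat.{v} Λ, IsIndec Λ X ∧ IsSummand Λ X M := by
  obtain ⟨X, ⟨hX, hXM⟩, hmin⟩ := exists_minimal_length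
    (fun X : ModuleCat.{v} Λ => Nontrivial X ∧ IsSummand Λ X M) ⟨.of Λ M, ‹_›, .refl⟩
  have : Module.Finite Λ X := hXM.finite
  refine ⟨X, ⟨hX, fun e he => or_iff_not_imp_left.2 fun h0 => ?_⟩, hXM⟩
  have hr : IsSummand Λ (LinearMap.range e) X := by
    refine ⟨(LinearMap.range e).subtype, e.rangeRestrict, fun ⟨_, x, hx⟩ => Subtype.ext ?_⟩
    subst hx
    exact LinearMap.congr_fun he x
  have hnt : Nontrivial (LinearMap.range e) := by
    rwa [Submodule.nontrivial_iff_ne_bot, ne_eq, LinearMap.range_eq_bot]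
  have htop : LinearMap.range e = ⊤ := by
    by_contra hne
    exact (hmin (.of Λ (LinearMap.range e)) ⟨hnt, hr.trans hXM⟩).not_gt (Submodule.length_lt hne)
  ext x
  obtain ⟨y, rfl⟩ := LinearMap.range_eq_top.1 htop x
  exact LinearMap.congr_fun he y

theorem krullSchmidt_induction {motive : ModuleCat.{v} Λ → Prop}
    (subsingleton : ∀ M : ModuleCat.{v} Λ, Subsingleton M → motive M)
    (prod : ∀ M X C : ModuleCat.{v} Λ, Module.Finite Λ M → IsIndec Λ X → (M ≃ₗ[Λ] X × C) →
      motive C → motive M)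
    (M : ModuleCat.{v} Λ) (hM : Module.Finite Λ M) : motive M := by
  induction hn : Module.length Λ M using WellFoundedLT.induction generalizing M with
  | _ n ih =>
    rcases subsingleton_or_nontrivial M with hs | hs
    · exact subsingleton M hs
    obtain ⟨X, hX, hXM⟩ := exists_isIndec_isSummand (Λ := Λ) (M := M)
    obtain ⟨C, ⟨e⟩⟩ := hXM.exists_equiv_prod
    have := hX.1
    have := hXM.finite
    have hlt : Module.length Λ C < n := by
      rw [← hn, e.length_eq, Module.length_prod]
      exact ENat.lt_add_left Module.length_ne_top Module.length_pos
    exact prod M X (.of Λ C) hM hX e (ih _ hlt _ inferInstance rfl)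

theorem InAdd.of_isIndec [Module.Finite Λ M]
    (h : ∀ X : ModuleCat.{v} Λ, IsIndec Λ X → IsSummand Λ X M → InAdd Λ X N) : InAdd Λ M N := by
  refine krullSchmidt_induction (motive := fun M => (∀ X : ModuleCat.{v} Λ, IsIndec Λ X →
    IsSummand Λ X M → InAdd Λ X N) → InAdd Λ M N) (fun _ _ _ => .of_subsingleton) ?_
    (.of Λ M) ‹_› h
  intro M X C _ hX e ih h
  have hC : InAdd Λ C N := ih fun Y hY hYC =>
    h Y hY ((hYC.trans .snd).trans (.of_equiv e.symm))
  exact (IsSummand.of_equiv e).inAdd.trans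
    ((h X hX (IsSummand.fst.trans (.of_equiv e.symm))).prod hC)

theorem exists_inAdd_generator (Q : ModuleCat.{v} Λ → Prop)
    (summand : ∀ X Y : ModuleCat.{v} Λ, IsSummand Λ X Y → Q Y → Q X)
    (prod : ∀ X Y : ModuleCat.{v} Λ, Q X → Q Y → Q (.of Λ (X × Y)))
    (subsingleton : ∀ X : ModuleCat.{v} Λ, Subsingleton X → Q X)
    (W : ModuleCat.{v} Λ) (hW : Module.Finite Λ W) :
    ∃ P : ModuleCat.{v} Λ, Q P ∧ InAdd Λ P W ∧
      ∀ U : ModuleCat.{v} Λ, Q U → InAdd Λ U W → InAdd Λ U P := by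
  refine krullSchmidt_induction (motive := fun W => ∃ P : ModuleCat.{v} Λ, Q P ∧ InAdd Λ P W ∧
      ∀ U : ModuleCat.{v} Λ, Q U → InAdd Λ U W → InAdd Λ U P)
    (fun W hs => ⟨W, subsingleton W hs, IsSummand.refl.inAdd, fun U _ h => h⟩) ?_ W hW
  intro W X C _ hX e ih
  obtain ⟨P, hP, hPC, hPmax⟩ := ih
  have hPW : InAdd Λ P W := hPC.trans (IsSummand.snd.trans (.of_equiv e.symm)).inAdd
  have of_isIndec : ∀ P' : ModuleCat.{v} Λ, InAdd Λ P P' → (Q X → InAdd Λ X P') →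
      ∀ U : ModuleCat.{v} Λ, Q U → InAdd Λ U W → InAdd Λ U P' := fun P' hPP' hXP' U hU hUW => by
    have := hUW.finite
    refine .of_isIndec fun Y hY hYU => ?_
    have := hYU.finite
    have hYW := hY.isSummand_of_inAdd (hYU.inAdd.trans hUW)
    rcases hX.nonempty_equiv_or_isSummand hY (hYW.trans (.of_equiv e)) with ⟨⟨e'⟩⟩ | h
    · exact (IsSummand.of_equiv e').inAdd.trans
        (hXP' (summand X U ((IsSummand.of_equiv e'.symm).trans hYU) hU))
    · exact (hPmax Y (summand _ _ hYU hU) h.inAdd).trans hPP'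
  by_cases hQX : Q X
  · exact ⟨.of Λ (X × P), prod X P hQX hP,
      (IsSummand.fst.trans (.of_equiv e.symm)).inAdd.prod hPW,
      of_isIndec _ IsSummand.snd.inAdd fun _ => IsSummand.fst.inAdd⟩
  · exact ⟨P, hP, hPW, of_isIndec P IsSummand.refl.inAdd fun h => absurd h hQX⟩

theorem IsBasic.isSummand_of_inAdd [Module.Finite Λ M] [Module.Finite Λ N] (hM : IsBasic Λ M)
    (h : InAdd Λ M N) : IsSummand Λ M N := by
  refine krullSchmidt_induction (motive := fun M => ∀ N : ModuleCat.{v} Λ, Module.Finite Λ N →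
    IsBasic Λ M → InAdd Λ M N → IsSummand Λ M N) (fun _ _ _ _ _ _ => .of_subsingleton) ?_
    (.of Λ M) ‹_› (.of Λ N) ‹_› hM h
  intro M X C _ hX e ih N _ hM h
  have hXM : IsSummand Λ X M := IsSummand.fst.trans (.of_equiv e.symm)
  have hCM : IsSummand Λ C M := IsSummand.snd.trans (.of_equiv e.symm)
  have := hXM.finite
  have := hCM.finite
  have hXN : IsSummand Λ X N := hX.isSummand_of_inAdd (hXM.inAdd.trans h)
  obtain ⟨D, ⟨e'⟩⟩ := hXN.exists_equiv_prod
  have hCD : InAdd Λ C D := .of_isIndec fun Y hY hYC => by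
    have := hYC.finite
    have hYN : IsSummand Λ Y N := hY.isSummand_of_inAdd ((hYC.trans hCM).inAdd.trans h)
    rcases hX.nonempty_equiv_or_isSummand hY (hYN.trans (.of_equiv e')) with ⟨⟨e''⟩⟩ | hYD
    · have hXX : IsSummand Λ (X × X) M :=
        (IsSummand.prodMap .refl ((IsSummand.of_equiv e''.symm).trans hYC)).trans
          (.of_equiv e.symm)
      have := hX.1
      exact absurd (hM X hXX) (not_subsingleton X)
    · exact hYD.inAdd
  have hCD' : IsSummand Λ C D :=
    ih (.of Λ D) inferInstance (fun U hU => hM U (hU.trans hCM)) hCD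
  exact (IsSummand.of_equiv e).trans ((IsSummand.prodMap .refl hCD').trans (.of_equiv e'.symm))

theorem IsBasic.nonempty_equiv [Module.Finite Λ M] [Module.Finite Λ N] (hM : IsBasic Λ M)
    (hN : IsBasic Λ N) (h : InAdd Λ M N) (h' : InAdd Λ N M) : Nonempty (M ≃ₗ[Λ] N) := by
  obtain ⟨i, p, hp⟩ := hM.isSummand_of_inAdd h
  obtain ⟨i', p', hp'⟩ := hN.isSummand_of_inAdd h'
  have hii' : Function.Bijective (i ∘ₗ i') :=
    IsArtinian.bijective_of_injective_endomorphism _ (hp.injective.comp hp'.injective)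
  exact ⟨.ofBijective i ⟨hp.injective, Function.Surjective.of_comp (f := i) (g := i') hii'.2⟩⟩

end KrullSchmidt

/-! ### Torsion classes and relative projectivity -/

section TorsionClasses

/-- Classes of modules. The module structure is unbundled so that a class can be applied to
submodules and quotients directly. -/
abbrev ModuleClass (Λ : Type u) [Ring Λ] :=
  ∀ (M : Type u) [AddCommGroup M] [Module Λ M], Prop

/-- Classes of finitely generated modules closed under quotients and finite direct sums. -/
structure IsFacClosed {Λ : Type u} [Ring Λ] (T : ModuleClass Λ) : Prop where
  finite : ∀ {M : Type u} [AddCommGroup M] [Module Λ M], T M → Module.Finite Λ M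
  quot : ∀ {M N : Type u} [AddCommGroup M] [Module Λ M] [AddCommGroup N] [Module Λ N]
    (f : M →ₗ[Λ] N), Function.Surjective f → T M → T N
  prod : ∀ {M N : Type u} [AddCommGroup M] [Module Λ M] [AddCommGroup N] [Module Λ N],
    T M → T N → T (M × N)
  zero : ∀ {M : Type u} [AddCommGroup M] [Module Λ M], Subsingleton M → T M

/-- Torsion classes of finitely generated modules: closed under quotients and extensions. -/
structure IsTorsionClass {Λ : Type u} [Ring Λ] (T : ModuleClass Λ) : Prop where
  finite : ∀ {M : Type u} [AddCommGroup M] [Module Λ M], T M → Module.Finite Λ M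
  quot : ∀ {M N : Type u} [AddCommGroup M] [Module Λ M] [AddCommGroup N] [Module Λ N]
    (f : M →ₗ[Λ] N), Function.Surjective f → T M → T N
  ext : ∀ {M : Type u} [AddCommGroup M] [Module Λ M] (N : Submodule Λ M), T N → T (M ⧸ N) → T M
  zero : ∀ {M : Type u} [AddCommGroup M] [Module Λ M], Subsingleton M → T M

/-- `Y` lies in `Fac X`, i.e. it is a quotient of a finite power of `X`. -/
def Generates (Λ : Type u) [Ring Λ] (X Y : Type u) [AddCommGroup X] [Module Λ X]
    [AddCommGroup Y] [Module Λ Y] : Prop :=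
  ∃ (k : ℕ) (g : (Fin k → X) →ₗ[Λ] Y), Function.Surjective g

/-- `X` is Ext-projective in `T`: every short exact sequence in `T` ending at `X` splits. -/
def IsExtProjective {Λ : Type u} [Ring Λ] (T : ModuleClass Λ) (X : Type u) [AddCommGroup X]
    [Module Λ X] : Prop :=
  T X ∧ ∀ {E : Type u} [AddCommGroup E] [Module Λ E] (p : E →ₗ[Λ] X), T E →
    Function.Surjective p → T (LinearMap.ker p) → ∃ s : X →ₗ[Λ] E, p ∘ₗ s = LinearMap.id

/-- `Hom(f, Y)` is surjective. If `P₁ → P₀ → X → 0` is a projective presentation with first map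
`f`, this is the condition `Hom(Y, τX) = 0` when the presentation is minimal. -/
def PrecompSurjective {Λ : Type u} [Ring Λ] {P₁ P₀ : Type u} [AddCommGroup P₁] [Module Λ P₁]
    [AddCommGroup P₀] [Module Λ P₀] (f : P₁ →ₗ[Λ] P₀) (Y : Type u) [AddCommGroup Y]
    [Module Λ Y] : Prop :=
  ∀ k : P₁ →ₗ[Λ] Y, ∃ m : P₀ →ₗ[Λ] Y, m ∘ₗ f = k

/-- The modules of `T` annihilated by `z`. -/
def killedBy {Λ : Type u} [Ring Λ] (T : ModuleClass Λ) (z : Λ) : ModuleClass Λ :=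
  fun M _ _ => T M ∧ ∀ m : M, z • m = 0

variable {Λ : Type u} [Ring Λ] {T : ModuleClass Λ} {X Y Z M N A B C E P₁ P₀ : Type u}
  [AddCommGroup X] [Module Λ X] [AddCommGroup Y] [Module Λ Y] [AddCommGroup Z] [Module Λ Z]
  [AddCommGroup M] [Module Λ M] [AddCommGroup N] [Module Λ N]
  [AddCommGroup A] [Module Λ A] [AddCommGroup B] [Module Λ B]
  [AddCommGroup C] [Module Λ C] [AddCommGroup E] [Module Λ E]
  [AddCommGroup P₁] [Module Λ P₁] [AddCommGroup P₀] [Module Λ P₀]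

theorem exists_comp_eq_of_ker_le_ker {σ : A →ₗ[Λ] B} (hσ : Function.Surjective σ)
    {g : A →ₗ[Λ] C} (h : LinearMap.ker σ ≤ LinearMap.ker g) : ∃ g' : B →ₗ[Λ] C, g' ∘ₗ σ = g :=
  ⟨(LinearMap.ker σ).liftQ g h ∘ₗ (σ.quotKerEquivOfSurjective hσ).symm, by ext a; simp⟩

theorem exists_comp_eq_of_pow {g : M →ₗ[Λ] N} (h : ∀ u : X →ₗ[Λ] N, ∃ v : X →ₗ[Λ] M, g ∘ₗ v = u)
    {l : ℕ} (u : (Fin l → X) →ₗ[Λ] N) : ∃ v : (Fin l → X) →ₗ[Λ] M, g ∘ₗ v = u := by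
  choose v hv using fun j => h (u ∘ₗ LinearMap.single Λ (fun _ => X) j)
  refine ⟨LinearMap.lsum Λ (fun _ => X) ℕ v, LinearMap.pi_ext' fun j => ?_⟩
  rw [← hv j]
  ext x
  simp only [LinearMap.comp_apply, LinearMap.single_apply, LinearMap.lsum_piSingle]

namespace IsTorsionClass

theorem of_exact (hT : IsTorsionClass T) {j : Y →ₗ[Λ] E} {p : E →ₗ[Λ] X} (h : Function.Exact j p)
    (hp : Function.Surjective p) (hY : T Y) (hX : T X) : T E :=
  hT.ext (LinearMap.range j) (hT.quot _ j.surjective_rangeRestrict hY)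
    (hT.quot _ (h.linearEquivOfSurjective hp).symm.surjective hX)

theorem of_ker (hT : IsTorsionClass T) {p : E →ₗ[Λ] X} (hp : Function.Surjective p)
    (hk : T (LinearMap.ker p)) (hX : T X) : T E :=
  hT.of_exact (LinearMap.exact_subtype_ker_map p) hp hk hX

theorem isFacClosed (hT : IsTorsionClass T) : IsFacClosed T where
  finite := hT.finite
  quot := hT.quot
  zero := hT.zero
  prod {M N} _ _ _ _ hM hN :=
    hT.of_exact (Function.Exact.inl_snd (R := Λ) (M := M) (N := N)) Prod.snd_surjective hM hN

end IsTorsionClass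

namespace IsFacClosed

theorem killedBy (hT : IsFacClosed T) (z : Λ) : IsFacClosed (killedBy T z) where
  finite h := hT.finite h.1
  quot f hf h := ⟨hT.quot f hf h.1, fun m => by
    obtain ⟨x, rfl⟩ := hf m
    rw [← map_smul, h.2, map_zero]⟩
  zero h := ⟨hT.zero h, fun m => Subsingleton.elim _ _⟩
  prod h h' := ⟨hT.prod h.1 h'.1, fun m => Prod.ext (h.2 _) (h'.2 _)⟩

theorem of_isSummand (hT : IsFacClosed T) (h : IsSummand Λ X Y) (hY : T Y) : T X := by
  obtain ⟨_, p, hp⟩ := h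
  exact hT.quot p hp.surjective hY

theorem pow (hT : IsFacClosed T) (hY : T Y) (k : ℕ) : T (Fin k → Y) := by
  induction k with
  | zero => exact hT.zero inferInstance
  | succ k ih =>
    exact hT.quot _ (Fin.consLinearEquiv Λ (fun _ : Fin (k + 1) => Y)).surjective (hT.prod hY ih)

theorem of_generates (hT : IsFacClosed T) (h : Generates Λ X Y) (hX : T X) : T Y := by
  obtain ⟨k, g, hg⟩ := h
  exact hT.quot g hg (hT.pow hX k)

end IsFacClosed

namespace Generates

theorem of_forall_mem_range [Module.Finite Λ Y]
    (h : ∀ y : Y, ∃ (g : X →ₗ[Λ] Y) (x : X), g x = y) : Generates Λ X Y := by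
  obtain ⟨n, s, hs⟩ := Module.Finite.exists_fin (R := Λ) (M := Y)
  choose g x hx using h
  refine ⟨n, LinearMap.lsum Λ (fun _ => X) ℕ fun j => g (s j), ?_⟩
  rw [← LinearMap.range_eq_top, eq_top_iff, ← hs, Submodule.span_le]
  rintro _ ⟨j, rfl⟩
  exact ⟨Pi.single j (x (s j)), by rw [LinearMap.lsum_piSingle, hx]⟩

theorem of_inAdd (h : InAdd Λ Y X) : Generates Λ X Y := by
  obtain ⟨k, _, p, hp⟩ := h
  exact ⟨k, p, hp.surjective⟩

theorem of_surjective (f : X →ₗ[Λ] Y) (hf : Function.Surjective f) : Generates Λ X Y :=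
  ⟨1, f ∘ₗ LinearMap.proj 0, hf.comp fun x => ⟨fun _ => x, rfl⟩⟩

theorem trans (h : Generates Λ X Y) (h' : Generates Λ Y Z) : Generates Λ X Z := by
  obtain ⟨k, g, hg⟩ := h
  obtain ⟨l, g', hg'⟩ := h'
  let e : (Fin l → Fin k → X) ≃ₗ[Λ] (Fin (l * k) → X) :=
    (LinearEquiv.curry Λ X (Fin l) (Fin k)).symm ≪≫ₗ
      LinearEquiv.funCongrLeft Λ X finProdFinEquiv.symm
  exact ⟨l * k, g' ∘ₗ g.compLeft (Fin l) ∘ₗ e.symm.toLinearMap,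
    (hg'.comp hg.comp_left).comp e.symm.surjective⟩

theorem prod (h : Generates Λ X Y) (h' : Generates Λ X Z) : Generates Λ X (Y × Z) := by
  obtain ⟨k, g, hg⟩ := h
  obtain ⟨l, g', hg'⟩ := h'
  let e : ((Fin k → X) × (Fin l → X)) ≃ₗ[Λ] (Fin (k + l) → X) :=
    (LinearEquiv.sumArrowLequivProdArrow (Fin k) (Fin l) Λ X).symm ≪≫ₗ
      LinearEquiv.funCongrLeft Λ X finSumFinEquiv.symm
  exact ⟨k + l, g.prodMap g' ∘ₗ e.symm.toLinearMap, (hg.prodMap hg').comp e.symm.surjective⟩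

theorem finite [Module.Finite Λ X] (h : Generates Λ X Y) : Module.Finite Λ Y := by
  obtain ⟨k, g, hg⟩ := h
  exact .of_surjective g hg

end Generates

namespace PrecompSurjective

variable {f : P₁ →ₗ[Λ] P₀}

theorem of_surjective [Module.Projective Λ P₁] {g : M →ₗ[Λ] N} (hg : Function.Surjective g)
    (h : PrecompSurjective f M) : PrecompSurjective f N := by
  intro k
  obtain ⟨k', rfl⟩ := Module.projective_lifting_property g k hg
  obtain ⟨m, rfl⟩ := h k'
  exact ⟨g ∘ₗ m, rfl⟩

theorem of_ker [Module.Projective Λ P₀] {g : M →ₗ[Λ] N} (hg : Function.Surjective g)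
    (h : PrecompSurjective f N) (h' : PrecompSurjective f (LinearMap.ker g)) :
    PrecompSurjective f M := by
  intro k
  obtain ⟨m, hm⟩ := h (g ∘ₗ k)
  obtain ⟨m', rfl⟩ := Module.projective_lifting_property g m hg
  have hk : ∀ x, g (m' (f x)) = g (k x) := LinearMap.congr_fun hm
  obtain ⟨l, hl⟩ := h' ((k - m' ∘ₗ f).codRestrict _ fun x => by simp [hk])
  refine ⟨m' + (LinearMap.ker g).subtype ∘ₗ l, LinearMap.ext fun x => ?_⟩
  have hlx : l (f x) = _ := LinearMap.congr_fun hl x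
  simp [hlx]

theorem pow (h : PrecompSurjective f M) (ι : Type) : PrecompSurjective f (ι → M) := by
  intro k
  choose m hm using fun j => h (LinearMap.proj j ∘ₗ k)
  exact ⟨LinearMap.pi m, LinearMap.ext fun x => funext fun j => LinearMap.congr_fun (hm j) x⟩

theorem prod (h : PrecompSurjective f M) (h' : PrecompSurjective f N) :
    PrecompSurjective f (M × N) := by
  intro k
  obtain ⟨m, hm⟩ := h (LinearMap.fst Λ M N ∘ₗ k)
  obtain ⟨m', hm'⟩ := h' (LinearMap.snd Λ M N ∘ₗ k)
  exact ⟨m.prod m', LinearMap.ext fun x =>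
    Prod.ext (LinearMap.congr_fun hm x) (LinearMap.congr_fun hm' x)⟩

theorem of_generates [Module.Projective Λ P₁] (hg : Generates Λ M N)
    (h : PrecompSurjective f M) : PrecompSurjective f N := by
  obtain ⟨k, g, hg⟩ := hg
  exact (h.pow _).of_surjective hg

theorem exists_lift [Module.Projective Λ P₀] {π : P₀ →ₗ[Λ] X} (hπ : Function.Surjective π)
    (hex : Function.Exact f π) {g : M →ₗ[Λ] N} (hg : Function.Surjective g)
    (hker : PrecompSurjective f (LinearMap.ker g)) (u : X →ₗ[Λ] N) :
    ∃ v : X →ₗ[Λ] M, g ∘ₗ v = u := by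
  obtain ⟨m, hm⟩ := Module.projective_lifting_property g (u ∘ₗ π) hg
  have hgm : ∀ x, g (m x) = u (π x) := LinearMap.congr_fun hm
  obtain ⟨m', hm'⟩ := hker ((m ∘ₗ f).codRestrict _ fun c => by
    simp [hgm, hex.apply_apply_eq_zero])
  obtain ⟨v, hv⟩ := exists_comp_eq_of_ker_le_ker hπ
    (g := m - (LinearMap.ker g).subtype ∘ₗ m') fun a ha => by
      obtain ⟨y, rfl⟩ := (hex a).1 ha
      have hmy : m' (f y) = _ := LinearMap.congr_fun hm' y
      simp [hmy]
  refine ⟨v, LinearMap.ext fun x => ?_⟩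
  obtain ⟨p, rfl⟩ := hπ x
  have hvp : v (π p) = _ := LinearMap.congr_fun hv p
  simp [hvp, hgm]

theorem isExtProjective [Module.Projective Λ P₀] {π : P₀ →ₗ[Λ] X} (hπ : Function.Surjective π)
    (hex : Function.Exact f π) (hX : T X)
    (hT : ∀ (Y : Type u) [AddCommGroup Y] [Module Λ Y], T Y → PrecompSurjective f Y) :
    IsExtProjective T X :=
  ⟨hX, fun _ _ hp hk => exists_lift hπ hex hp (hT _ hk) LinearMap.id⟩

theorem isTorsionClass_generates [Module.Finite Λ X] [Module.Projective Λ P₀]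
    [Module.Projective Λ P₁] {π : P₀ →ₗ[Λ] X} (hπ : Function.Surjective π)
    (hex : Function.Exact f π) (hX : PrecompSurjective f X) :
    IsTorsionClass (fun Y _ _ => Generates Λ X Y : ModuleClass Λ) where
  finite h := h.finite
  quot f hf h := h.trans (.of_surjective f hf)
  zero h := ⟨0, 0, fun _ => ⟨0, Subsingleton.elim _ _⟩⟩
  ext {M} _ _ N hN hMN := by
    have hker : PrecompSurjective f (LinearMap.ker N.mkQ) := by
      rw [Submodule.ker_mkQ]
      exact hX.of_generates hN
    obtain ⟨l, g, hg⟩ := hMN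
    obtain ⟨v, hv⟩ := exists_comp_eq_of_pow (exists_lift hπ hex N.mkQ_surjective hker) g
    have hsum : Generates Λ X (N × (Fin l → X)) := hN.prod ⟨l, LinearMap.id, fun x => ⟨x, rfl⟩⟩
    refine hsum.trans (.of_surjective (N.subtype.coprod v) fun m => ?_)
    obtain ⟨b, hb⟩ := hg (N.mkQ m)
    have hmem : m - v b ∈ N := by
      rw [← N.ker_mkQ, LinearMap.mem_ker, map_sub, ← hb, ← hv, LinearMap.comp_apply, sub_self]
    exact ⟨(⟨_, hmem⟩, b), by simp⟩

end PrecompSurjective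

namespace IsExtProjective

theorem exists_section (hT : IsTorsionClass T) (hY : IsExtProjective T Y) {p : E →ₗ[Λ] X}
    (hp : Function.Surjective p) (hk : T (LinearMap.ker p)) (q : Y →ₗ[Λ] X) :
    ∃ s : Y →ₗ[Λ] E, p ∘ₗ s = q := by
  let F : Submodule Λ (E × Y) := LinearMap.ker (p.coprod (-q))
  have hF : ∀ a : E × Y, a ∈ F ↔ p a.1 = q a.2 := fun a => by
    simp [F, LinearMap.mem_ker, ← sub_eq_add_neg, sub_eq_zero]
  let r : F →ₗ[Λ] Y := LinearMap.snd Λ E Y ∘ₗ F.subtype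
  have hr : Function.Surjective r := fun y => by
    obtain ⟨e, he⟩ := hp (q y)
    exact ⟨⟨(e, y), (hF _).2 he⟩, rfl⟩
  let j : LinearMap.ker p →ₗ[Λ] LinearMap.ker r :=
    ((LinearMap.inl Λ E Y ∘ₗ (LinearMap.ker p).subtype).codRestrict F
      fun c => (hF _).2 (by simp)).codRestrict (LinearMap.ker r) fun _ => rfl
  have hj : Function.Surjective j := by
    rintro ⟨⟨⟨e, y⟩, h₁⟩, h₂ : y = 0⟩
    subst h₂
    exact ⟨⟨e, by simpa using (hF _).1 h₁⟩, rfl⟩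
  have hkr : T (LinearMap.ker r) := hT.quot j hj hk
  obtain ⟨s, hs⟩ := hY.2 r (hT.of_ker hr hkr hY.1) hr hkr
  refine ⟨LinearMap.fst Λ E Y ∘ₗ F.subtype ∘ₗ s, LinearMap.ext fun y => ?_⟩
  have hsy : (s y).1.2 = y := LinearMap.congr_fun hs y
  exact ((hF _).1 (s y).2).trans (congrArg q hsy)

theorem of_isSummand (hT : IsTorsionClass T) (h : IsSummand Λ X Y) (hY : IsExtProjective T Y) :
    IsExtProjective T X := by
  refine ⟨hT.isFacClosed.of_isSummand h hY.1, fun p _ hp hk => ?_⟩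
  obtain ⟨i, q, hq⟩ := h
  obtain ⟨s, rfl⟩ := hY.exists_section hT hp hk q
  exact ⟨s ∘ₗ i, LinearMap.ext hq⟩

end IsExtProjective

theorem exists_pushout {π : A →ₗ[Λ] X} (hπ : Function.Surjective π)
    (k : LinearMap.ker π →ₗ[Λ] Y) :
    ∃ (E : ModuleCat.{u} Λ) (a : A →ₗ[Λ] E) (j : Y →ₗ[Λ] E) (p : E →ₗ[Λ] X),
      Function.Injective j ∧ Function.Exact j p ∧ Function.Surjective p ∧ p ∘ₗ a = π ∧
      a ∘ₗ (LinearMap.ker π).subtype = j ∘ₗ k ∧ Function.Surjective (a.coprod j) := by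
  let S : Submodule Λ (A × Y) := LinearMap.range ((LinearMap.ker π).subtype.prod (-k))
  let p : ((A × Y) ⧸ S) →ₗ[Λ] X := S.liftQ (π ∘ₗ LinearMap.fst Λ A Y) (by
    rintro _ ⟨x, rfl⟩
    simp)
  have hglue : (S.mkQ ∘ₗ .inl Λ A Y) ∘ₗ (LinearMap.ker π).subtype = (S.mkQ ∘ₗ .inr Λ A Y) ∘ₗ k := by
    ext x
    refine sub_eq_zero.1 ((map_sub S.mkQ _ _).symm.trans ?_)
    rw [← LinearMap.mem_ker, Submodule.ker_mkQ]
    exact ⟨x, by simp⟩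
  refine ⟨.of Λ ((A × Y) ⧸ S), S.mkQ ∘ₗ .inl Λ A Y, S.mkQ ∘ₗ .inr Λ A Y, p, ?_, ?_, ?_, rfl,
    hglue, ?_⟩
  · rw [← LinearMap.ker_eq_bot, eq_bot_iff]
    intro y hy
    rw [LinearMap.ker_comp, Submodule.ker_mkQ] at hy
    obtain ⟨x, hx⟩ := hy
    have hx0 : x = 0 := Subtype.ext (congrArg Prod.fst hx)
    have hy0 : -k x = y := congrArg Prod.snd hx
    rw [Submodule.mem_bot, ← hy0, hx0, map_zero, neg_zero]
  · intro e
    obtain ⟨⟨a, y⟩, rfl⟩ := S.mkQ_surjective e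
    refine ⟨fun ha : π a = 0 => ⟨k ⟨a, ha⟩ + y, ?_⟩, ?_⟩
    · have hk : S.mkQ (a, 0) = S.mkQ (0, k ⟨a, ha⟩) := LinearMap.congr_fun hglue ⟨a, ha⟩
      calc S.mkQ (0, k ⟨a, ha⟩ + y) = S.mkQ (0, k ⟨a, ha⟩) + S.mkQ (0, y) := by
            rw [← map_add, Prod.mk_add_mk, add_zero]
        _ = S.mkQ (a, y) := by rw [← hk, ← map_add, Prod.mk_add_mk, add_zero, zero_add]
    · rintro ⟨y', hy'⟩
      exact (congrArg p hy'.symm).trans (map_zero π)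
  · exact fun x => (hπ x).imp' (fun a => S.mkQ (a, 0)) fun _ h => h
  · intro e
    obtain ⟨⟨a, y⟩, rfl⟩ := S.mkQ_surjective e
    exact ⟨(a, y), by simp⟩

theorem IsExtProjective.exists_extend (hT : IsTorsionClass T) {z : Λ}
    (hX : IsExtProjective (killedBy T z) X) {π : A →ₗ[Λ] X} (hπ : Function.Surjective π)
    (hA : ∀ a : A, z • a = 0) (hY : killedBy T z Y) (k : LinearMap.ker π →ₗ[Λ] Y) :
    ∃ m : A →ₗ[Λ] Y, m ∘ₗ (LinearMap.ker π).subtype = k := by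
  obtain ⟨E, a, j, p, hj, hjp, hp, rfl, hglue, hsurj⟩ := exists_pushout hπ k
  have hE : killedBy T z E := by
    refine ⟨hT.of_exact hjp hp hY.1 hX.1.1, fun e => ?_⟩
    obtain ⟨x, rfl⟩ := hsurj e
    rw [← map_smul, show z • x = 0 from Prod.ext (hA x.1) (hY.2 x.2), map_zero]
  have hker : killedBy T z (LinearMap.ker p) := by
    refine (hT.isFacClosed.killedBy z).quot
      (j.codRestrict (LinearMap.ker p) hjp.apply_apply_eq_zero) ?_ hY
    rintro ⟨e, he⟩
    obtain ⟨y, rfl⟩ := (hjp e).1 he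
    exact ⟨y, rfl⟩
  obtain ⟨s, hs⟩ := hX.2 p hE hp hker
  have hsp : ∀ x, p (s x) = x := LinearMap.congr_fun hs
  choose m hm using fun x => (hjp (a x - s (p (a x)))).1 (by rw [map_sub, hsp, sub_self])
  let je := LinearEquiv.ofInjective j hj
  refine ⟨je.symm.toLinearMap ∘ₗ
    (a - s ∘ₗ p ∘ₗ a).codRestrict (LinearMap.range j) fun x => ⟨m x, hm x⟩, ?_⟩
  ext x
  have hx : p (a x) = 0 := x.2
  have hax : a x = j (k x) := LinearMap.congr_fun hglue x
  have hval : a x - s (p (a x)) = j (k x) := by rw [hx, map_zero, sub_zero, hax]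
  exact (LinearEquiv.symm_apply_eq je).2 (Subtype.ext hval)

end TorsionClasses

section ProjectivePresentations

/-- Projective covers, characterised by the property that an endomorphism of the source commuting
with the cover is bijective. -/
structure IsProjectiveCover {Λ : Type u} [Ring Λ] {P M : Type v} [AddCommGroup P] [Module Λ P]
    [AddCommGroup M] [Module Λ M] (σ : P →ₗ[Λ] M) : Prop where
  finite : Module.Finite Λ P
  projective : Module.Projective Λ P
  surjective : Function.Surjective σ
  bijective_of_comp_eq : ∀ φ : P →ₗ[Λ] P, σ ∘ₗ φ = σ → Function.Bijective φ

/-- A presentation `P₁ → P₀ → X → 0` of `X` by finitely generated projective modules. -/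
structure IsProjectivePresentation {Λ : Type u} [Ring Λ] {P₁ P₀ X : Type v} [AddCommGroup P₁]
    [Module Λ P₁] [AddCommGroup P₀] [Module Λ P₀] [AddCommGroup X] [Module Λ X]
    (f : P₁ →ₗ[Λ] P₀) (π : P₀ →ₗ[Λ] X) : Prop where
  finite₁ : Module.Finite Λ P₁
  projective₁ : Module.Projective Λ P₁
  finite₀ : Module.Finite Λ P₀
  projective₀ : Module.Projective Λ P₀
  exact : Function.Exact f π
  surjective : Function.Surjective π

/-- The submodule `zM` of `M`, for a central element `z`. -/
def centralSMul {Λ : Type u} [Ring Λ] {z : Λ} (hz : z ∈ Set.center Λ) (M : Type v)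
    [AddCommGroup M] [Module Λ M] : Submodule Λ M :=
  LinearMap.range (Module.End.smulLeft (M := M) z hz)

variable {Λ : Type u} [Ring Λ] {T : ModuleClass Λ} {z : Λ} {n : ℕ} {X Y P₁ P₀ A B : Type u}
  [AddCommGroup X] [Module Λ X] [AddCommGroup Y] [Module Λ Y]
  [AddCommGroup P₁] [Module Λ P₁] [AddCommGroup P₀] [Module Λ P₀]
  [AddCommGroup A] [Module Λ A] [AddCommGroup B] [Module Λ B]

theorem smul_quotient_centralSMul (hz : z ∈ Set.center Λ) (y : Y ⧸ centralSMul hz Y) :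
    z • y = 0 := by
  obtain ⟨y, rfl⟩ := Submodule.mkQ_surjective _ y
  rw [← map_smul, ← LinearMap.mem_ker, Submodule.ker_mkQ]
  exact ⟨y, rfl⟩

theorem pow_smul_centralSMul (hz : z ∈ Set.center Λ) (h : ∀ y : Y, z ^ (n + 1) • y = 0)
    (v : centralSMul hz Y) : z ^ n • v = 0 := by
  obtain ⟨_, y, rfl⟩ := v
  refine Subtype.ext ((smul_smul _ _ _).trans ?_)
  rw [← pow_succ, h, Submodule.coe_zero]

theorem eq_top_of_sup_centralSMul_eq_top (hz : z ∈ Set.center Λ) (h : ∀ y : Y, z ^ n • y = 0)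
    {S : Submodule Λ Y} (hS : S ⊔ centralSMul hz Y = ⊤) : S = ⊤ := by
  have hpow (k : ℕ) (y : Y) : ∃ s ∈ S, ∃ w, s + z ^ k • w = y := by
    induction k with
    | zero => exact ⟨0, S.zero_mem, y, by simp⟩
    | succ k ih =>
      obtain ⟨s, hs, w, rfl⟩ := ih
      obtain ⟨s', hs', _, ⟨w', rfl⟩, rfl⟩ := Submodule.mem_sup.1 (hS ▸ Submodule.mem_top (x := w))
      refine ⟨s + z ^ k • s', S.add_mem hs (S.smul_mem _ hs'), w', ?_⟩
      rw [Module.End.smulLeft_apply, smul_add, pow_succ, mul_smul, add_assoc]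
  refine (Submodule.eq_top_iff').2 fun y => ?_
  obtain ⟨s, hs, w, rfl⟩ := hpow n y
  rwa [h, add_zero]

theorem exists_isProjectiveCover [IsArtinianRing Λ] (M : Type u) [AddCommGroup M] [Module Λ M]
    [Module.Finite Λ M] :
    ∃ (P : ModuleCat.{u} Λ) (σ : P →ₗ[Λ] M), IsProjectiveCover σ := by
  obtain ⟨P, ⟨hfin, hproj, σ, hσ⟩, hmin⟩ := exists_minimal_length
    (fun P : ModuleCat.{u} Λ =>
      Module.Finite Λ P ∧ Module.Projective Λ P ∧ ∃ σ : P →ₗ[Λ] M, Function.Surjective σ) (by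
      obtain ⟨n, f, hf⟩ := Module.Finite.exists_fin' Λ M
      exact ⟨.of Λ (Fin n → Λ), inferInstanceAs (Module.Finite Λ (Fin n → Λ)),
        inferInstanceAs (Module.Projective Λ (Fin n → Λ)), f, hf⟩)
  refine ⟨P, σ, hfin, hproj, hσ, fun φ hφ => ?_⟩
  obtain ⟨n, hn, hn1⟩ := (φ.eventually_isCompl_ker_pow_range_pow.and
    (Filter.eventually_ne_atTop 0)).exists
  have hsummand := IsSummand.of_isCompl hn.symm
  have hpow (k : ℕ) : σ ∘ₗ φ ^ k = σ := by
    induction k with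
    | zero => rfl
    | succ k ih => rw [pow_succ, Module.End.mul_eq_comp, ← LinearMap.comp_assoc, ih, hφ]
  have htop : LinearMap.range (φ ^ n) = ⊤ := by
    by_contra hne
    refine (Submodule.length_lt hne).not_ge (hmin (.of Λ (LinearMap.range (φ ^ n)))
      ⟨hsummand.finite, hsummand.projective, σ ∘ₗ (LinearMap.range (φ ^ n)).subtype, fun y => ?_⟩)
    obtain ⟨x, rfl⟩ := hσ y
    exact ⟨⟨(φ ^ n) x, x, rfl⟩, LinearMap.congr_fun (hpow n) x⟩
  have hsurj : Function.Surjective φ := by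
    obtain ⟨m, rfl⟩ := Nat.exists_eq_succ_of_ne_zero hn1
    rw [pow_succ', LinearMap.range_eq_top] at htop
    exact .of_comp htop
  exact IsNoetherian.bijective_of_surjective_endomorphism φ hsurj

namespace IsProjectiveCover

variable {σ : P₁ →ₗ[Λ] B}

theorem exists_comp_eq (hσ : IsProjectiveCover σ) {k l : P₁ →ₗ[Λ] Y}
    (h : ∀ p, k p - l p ∈ (LinearMap.ker σ).map k) :
    ∃ φ : P₁ →ₗ[Λ] P₁, Function.Bijective φ ∧ σ ∘ₗ φ = σ ∧ k ∘ₗ φ = l := by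
  have := hσ.projective
  obtain ⟨ψ, hψ⟩ := Module.projective_lifting_property (k.submoduleMap (LinearMap.ker σ))
    ((k - l).codRestrict _ h) (k.submoduleMap_surjective _)
  have hkψ : ∀ p, k (ψ p) = k p - l p := fun p => congrArg Subtype.val (LinearMap.congr_fun hψ p)
  let φ : P₁ →ₗ[Λ] P₁ := LinearMap.id - (LinearMap.ker σ).subtype ∘ₗ ψ
  have hφ : σ ∘ₗ φ = σ := by
    ext p
    have : σ (ψ p) = 0 := (ψ p).2
    simp [φ, this]
  refine ⟨φ, hσ.bijective_of_comp_eq φ hφ, hφ, ?_⟩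
  ext p
  simp [φ, hkψ]

theorem precompSurjective [Module.Projective Λ P₀] (hσ : IsProjectiveCover σ) {ι : B →ₗ[Λ] A}
    {c : P₀ →ₗ[Λ] A} {f : P₁ →ₗ[Λ] P₀} (hf : c ∘ₗ f = ι ∘ₗ σ)
    (hY : ∀ m : P₀ →ₗ[Λ] Y, LinearMap.ker c ≤ LinearMap.ker m)
    (hι : ∀ N : Submodule Λ Y, PrecompSurjective ι (Y ⧸ N)) : PrecompSurjective f Y := by
  intro k
  let N := (LinearMap.ker σ).map k
  obtain ⟨k', hk'⟩ := exists_comp_eq_of_ker_le_ker (g := N.mkQ ∘ₗ k) hσ.surjective fun p hp => by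
    rw [LinearMap.ker_comp, Submodule.ker_mkQ]
    exact Submodule.mem_map_of_mem hp
  obtain ⟨m', rfl⟩ := hι N k'
  obtain ⟨m, hm⟩ := Module.projective_lifting_property N.mkQ (m' ∘ₗ c) N.mkQ_surjective
  have hcf : ∀ p, c (f p) = ι (σ p) := LinearMap.congr_fun hf
  obtain ⟨φ, hφ, hσφ, hkφ⟩ := hσ.exists_comp_eq (k := k) (l := m ∘ₗ f) fun p => by
    have h₁ : m' (ι (σ p)) = N.mkQ (k p) := LinearMap.congr_fun hk' p
    have h₂ : N.mkQ (m (f p)) = m' (c (f p)) := LinearMap.congr_fun hm (f p)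
    have h₃ : N.mkQ (k p - m (f p)) = 0 := by rw [map_sub, ← h₁, h₂, hcf, sub_self]
    exact (Submodule.Quotient.mk_eq_zero N).1 h₃
  refine ⟨m, LinearMap.ext fun x => ?_⟩
  obtain ⟨p, rfl⟩ := hφ.2 x
  have hσp : σ (φ p) = σ p := LinearMap.congr_fun hσφ p
  have hker : m (f (φ p) - f p) = 0 := hY m (by
    rw [LinearMap.mem_ker, map_sub, hcf, hcf, hσp, sub_self])
  have hkp : k (φ p) = m (f p) := LinearMap.congr_fun hkφ p
  rw [LinearMap.comp_apply, hkp, ← sub_eq_zero, ← map_sub, hker]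

end IsProjectiveCover

theorem killedBy_quotient_centralSMul (hT : IsTorsionClass T) (hz : z ∈ Set.center Λ) (hY : T Y) :
    killedBy T z (Y ⧸ centralSMul hz Y) :=
  ⟨hT.quot _ (Submodule.mkQ_surjective _) hY, smul_quotient_centralSMul hz⟩

theorem IsTorsionClass.apply_centralSMul (hT : IsTorsionClass T) (hz : z ∈ Set.center Λ)
    (hY : T Y) : T (centralSMul hz Y) :=
  hT.quot _ (LinearMap.surjective_rangeRestrict _) hY

theorem IsTorsionClass.of_quotient_centralSMul (hT : IsTorsionClass T) (hz : z ∈ Set.center Λ)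
    (h : ∀ y : Y, z ^ n • y = 0) (hY : T (Y ⧸ centralSMul hz Y)) : T Y := by
  suffices ∀ Y : ModuleCat.{u} Λ, (∀ y : Y, z ^ n • y = 0) →
      T (Y ⧸ centralSMul hz Y) → T Y from this (.of Λ Y) h hY
  clear h hY
  induction n with
  | zero => exact fun Y h _ => hT.zero ⟨fun a b => by simpa using (h a).trans (h b).symm⟩
  | succ n ih =>
    intro Y h hY
    let V := centralSMul hz Y
    let W := centralSMul hz V
    let s : Y →ₗ[Λ] V := (Module.End.smulLeft (M := Y) z hz).rangeRestrict
    have hV : T (V ⧸ W) := by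
      refine hT.quot (V.liftQ (W.mkQ ∘ₗ s) ?_) ?_ hY
      · rintro _ ⟨y, rfl⟩
        exact (Submodule.Quotient.mk_eq_zero W).2 ⟨⟨z • y, y, rfl⟩, rfl⟩
      · intro w
        obtain ⟨⟨_, y, rfl⟩, rfl⟩ := W.mkQ_surjective w
        exact ⟨V.mkQ y, rfl⟩
    exact hT.ext V (ih (.of Λ V) (pow_smul_centralSMul hz h) hV) hY

theorem PrecompSurjective.of_killedBy [Module.Projective Λ P₀] {f : P₁ →ₗ[Λ] P₀}
    (hT : IsTorsionClass T) (hz : z ∈ Set.center Λ)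
    (hf : ∀ (Y : Type u) [AddCommGroup Y] [Module Λ Y], killedBy T z Y → PrecompSurjective f Y)
    (h : ∀ y : Y, z ^ n • y = 0) (hY : T Y) : PrecompSurjective f Y := by
  suffices ∀ Y : ModuleCat.{u} Λ, (∀ y : Y, z ^ n • y = 0) → T Y → PrecompSurjective f Y from
    this (.of Λ Y) h hY
  clear h hY
  induction n with
  | zero =>
    intro Y h _ k
    have : Subsingleton Y := ⟨fun a b => by simpa using (h a).trans (h b).symm⟩
    exact ⟨0, LinearMap.ext fun x => Subsingleton.elim _ _⟩
  | succ n ih =>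
    intro Y h hY
    refine .of_ker (centralSMul hz Y).mkQ_surjective
      (hf _ (killedBy_quotient_centralSMul hT hz hY)) ?_
    rw [Submodule.ker_mkQ]
    exact ih (.of Λ (centralSMul hz Y)) (pow_smul_centralSMul hz h) (hT.apply_centralSMul hz hY)

variable [IsArtinianRing Λ]

theorem IsExtProjective.exists_presentation_lift (hT : IsTorsionClass T) (hz : z ∈ Set.center Λ)
    (hX : IsExtProjective (killedBy T z) X) :
    ∃ (P₁ P₀ G : ModuleCat.{u} Λ) (f : P₁ →ₗ[Λ] P₀) (q : P₀ →ₗ[Λ] G) (r : G →ₗ[Λ] X),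
      IsProjectivePresentation f q ∧ Function.Surjective r ∧
      LinearMap.ker r = centralSMul hz G ∧
      ∀ (Y : Type u) [AddCommGroup Y] [Module Λ Y], killedBy T z Y → PrecompSurjective f Y := by
  have : Module.Finite Λ X := hT.finite hX.1.1
  obtain ⟨n, π, hπ⟩ := Module.Finite.exists_fin' Λ X
  let P₀ := Fin n → Λ
  let S := centralSMul hz P₀
  have hSker (M : Type u) [AddCommGroup M] [Module Λ M] (hM : ∀ m : M, z • m = 0)
      (m : P₀ →ₗ[Λ] M) : S ≤ LinearMap.ker m := by
    rintro _ ⟨w, rfl⟩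
    exact (map_smul m z w).trans (hM _)
  let π' : (P₀ ⧸ S) →ₗ[Λ] X := S.liftQ π (hSker X hX.1.2 π)
  have hπ' : Function.Surjective π' := fun x => (hπ x).imp' S.mkQ fun _ h => h
  obtain ⟨P₁, σ, hσ⟩ := exists_isProjectiveCover (Λ := Λ) (LinearMap.ker π')
  have := hσ.projective
  obtain ⟨f, hf⟩ := Module.projective_lifting_property S.mkQ ((LinearMap.ker π').subtype ∘ₗ σ)
    S.mkQ_surjective
  have hfσ : ∀ p, S.mkQ (f p) = σ p := LinearMap.congr_fun hf
  have hrange : LinearMap.range f ≤ LinearMap.ker π := by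
    rintro _ ⟨p, rfl⟩
    exact (congrArg π' (hfσ p)).trans (σ p).2
  let q := (LinearMap.range f).mkQ
  let r : (P₀ ⧸ LinearMap.range f) →ₗ[Λ] X := (LinearMap.range f).liftQ π hrange
  refine ⟨P₁, .of Λ P₀, .of Λ (P₀ ⧸ LinearMap.range f), f, q, r, ⟨hσ.finite, hσ.projective,
    inferInstanceAs (Module.Finite Λ (Fin n → Λ)),
    inferInstanceAs (Module.Projective Λ (Fin n → Λ)),
    LinearMap.exact_map_mkQ_range f, Submodule.mkQ_surjective _⟩,
    fun x => (hπ x).imp' q fun _ h => h, le_antisymm ?_ ?_, fun Y _ _ hY => ?_⟩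
  · intro g hg
    obtain ⟨x, rfl⟩ := Submodule.mkQ_surjective _ g
    obtain ⟨p, hp⟩ := hσ.surjective ⟨S.mkQ x, hg⟩
    have hmem : x - f p ∈ S := by
      rw [← Submodule.ker_mkQ S, LinearMap.mem_ker, map_sub, hfσ, hp, sub_self]
    obtain ⟨w, hw⟩ := hmem
    refine ⟨q w, ?_⟩
    have hqf : q (f p) = 0 := LinearMap.exact_map_mkQ_range f |>.apply_apply_eq_zero p
    rw [Module.End.smulLeft_apply] at hw ⊢
    rw [← map_smul, hw, map_sub, hqf, sub_zero]
  · rintro _ ⟨w, rfl⟩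
    exact (map_smul r z w).trans (hX.1.2 _)
  · refine hσ.precompSurjective hf
      (fun m => S.ker_mkQ.trans_le (hSker Y hY.2 m)) fun N => ?_
    exact hX.exists_extend hT hπ' (smul_quotient_centralSMul hz)
      ((hT.isFacClosed.killedBy z).quot _ N.mkQ_surjective hY)

theorem IsTorsionClass.exists_generator_of_killedBy (hT : IsTorsionClass T)
    (hz : z ∈ Set.center Λ) (hzn : z ^ n = 0) (hX : IsExtProjective (killedBy T z) X)
    (hgen : ∀ (Y : Type u) [AddCommGroup Y] [Module Λ Y], killedBy T z Y → Generates Λ X Y) :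
    ∃ G : ModuleCat.{u} Λ, T G ∧
      ∀ (Y : Type u) [AddCommGroup Y] [Module Λ Y], T Y → Generates Λ G Y := by
  obtain ⟨P₁, P₀, G, f, q, r, hq, hr, hker, hf⟩ := hX.exists_presentation_lift hT hz
  have := hq.projective₀
  have hnil (Y : Type u) [AddCommGroup Y] [Module Λ Y] (y : Y) : z ^ n • y = 0 := by
    rw [hzn, zero_smul]
  refine ⟨G, ?_, fun Y _ _ hY => ?_⟩
  · obtain ⟨g, hg⟩ := exists_comp_eq_of_ker_le_ker (g := (centralSMul hz G).mkQ) hr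
      (hker.trans_le (Submodule.ker_mkQ _).ge)
    refine hT.of_quotient_centralSMul hz (hnil G) (hT.quot g (.of_comp (g := r) ?_) hX.1.1)
    rw [← LinearMap.coe_comp, hg]
    exact Submodule.mkQ_surjective _
  · let V := centralSMul hz Y
    have hV : PrecompSurjective f (LinearMap.ker V.mkQ) := by
      rw [Submodule.ker_mkQ]
      exact .of_killedBy hT hz hf (hnil _) (hT.apply_centralSMul hz hY)
    obtain ⟨k, g, hg⟩ := (Generates.of_surjective r hr).trans
      (hgen _ (killedBy_quotient_centralSMul hT hz hY))
    obtain ⟨v, hv⟩ := exists_comp_eq_of_pow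
      (PrecompSurjective.exists_lift hq.surjective hq.exact V.mkQ_surjective hV) g
    refine ⟨k, v, LinearMap.range_eq_top.1 <|
      eq_top_of_sup_centralSMul_eq_top hz (hnil Y) ?_⟩
    refine (Submodule.eq_top_iff').2 fun y => ?_
    obtain ⟨x, hx⟩ := hg (V.mkQ y)
    have hvx : V.mkQ (v x) = g x := LinearMap.congr_fun hv x
    have hmem : y - v x ∈ V := by
      rw [← Submodule.ker_mkQ V, LinearMap.mem_ker, map_sub, hvx, hx, sub_self]
    exact Submodule.mem_sup.2 ⟨v x, ⟨x, rfl⟩, _, hmem, add_sub_cancel _ _⟩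

theorem IsExtProjective.exists_presentation (hT : IsTorsionClass T) (hX : IsExtProjective T X) :
    ∃ (P₁ P₀ : ModuleCat.{u} Λ) (f : P₁ →ₗ[Λ] P₀) (π : P₀ →ₗ[Λ] X),
      IsProjectivePresentation f π ∧
      ∀ (Y : Type u) [AddCommGroup Y] [Module Λ Y], T Y → PrecompSurjective f Y := by
  have hX₀ : IsExtProjective (killedBy T 0) X :=
    ⟨⟨hX.1, zero_smul Λ⟩, fun p hE hp hk => hX.2 p hE.1 hp hk.1⟩
  obtain ⟨P₁, P₀, G, f, q, r, hq, hr, hker, hf⟩ :=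
    hX₀.exists_presentation_lift hT (Set.zero_mem_center (M₀ := Λ))
  have hr_inj : Function.Injective r := by
    rw [← LinearMap.ker_eq_bot, hker, eq_bot_iff]
    rintro _ ⟨w, rfl⟩
    exact zero_smul Λ w
  refine ⟨P₁, P₀, f, r ∘ₗ q, ⟨hq.finite₁, hq.projective₁, hq.finite₀, hq.projective₀, fun x => ?_,
    hr.comp hq.surjective⟩, fun Y _ _ hY => hf Y ⟨hY, zero_smul Λ⟩⟩
  rw [← hq.exact x, LinearMap.comp_apply, map_eq_zero_iff r hr_inj]

end ProjectivePresentations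

section Approximations

/-- The map `r ↦ r • t` is a left `T`-approximation of the regular module: every element of a
module in `T` is the image of `t` under a homomorphism. -/
structure IsApproximation {Λ : Type u} [Ring Λ] (T : ModuleClass Λ) {M : Type u} [AddCommGroup M]
    [Module Λ M] (t : M) : Prop where
  mem : T M
  exists_apply_eq : ∀ {U : Type u} [AddCommGroup U] [Module Λ U], T U → ∀ x : U,
    ∃ g : M →ₗ[Λ] U, g t = x

section ArtinAlgebra

variable {Λ : Type u} [Ring Λ] {M N : Type v} [AddCommGroup M] [Module Λ M]
  [AddCommGroup N] [Module Λ N]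

theorem exists_pow_forall_exists_apply_eq (S : Type w) [CommRing S] [Algebra S Λ]
    [Module.Finite S Λ] [Module.Finite Λ N] :
    ∃ (n : ℕ) (t : Fin n → N), ∀ y : N, ∃ φ : (Fin n → N) →ₗ[Λ] N, φ t = y := by
  let _ : Module S N := .compHom N (algebraMap S Λ)
  have : IsScalarTower S Λ N := .of_algebraMap_smul fun _ _ => rfl
  have : SMulCommClass Λ S N := IsScalarTower.to_smulCommClass'
  have : Module.Finite S N := .trans Λ N
  obtain ⟨n, t, ht⟩ := Module.Finite.exists_fin (R := S) (M := N)
  refine ⟨n, t, fun y => ?_⟩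
  obtain ⟨c, rfl⟩ := (Submodule.mem_span_range_iff_exists_fun S).1 (ht ▸ Submodule.mem_top (x := y))
  exact ⟨∑ j, c j • LinearMap.proj j, by simp⟩

theorem exists_pow_forall_exists_comp_eq (S : Type w) [CommRing S] [IsNoetherianRing S]
    [Algebra S Λ] [Module.Finite S Λ] [Module.Finite Λ M] [Module.Finite Λ N] :
    ∃ (n : ℕ) (g : (Fin n → M) →ₗ[Λ] N), ∀ y : M →ₗ[Λ] N, ∃ c : M →ₗ[Λ] (Fin n → M),
      g ∘ₗ c = y := by
  let _ : Module S N := .compHom N (algebraMap S Λ)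
  let _ : Module S M := .compHom M (algebraMap S Λ)
  have : IsScalarTower S Λ N := .of_algebraMap_smul fun _ _ => rfl
  have : IsScalarTower S Λ M := .of_algebraMap_smul fun _ _ => rfl
  have : SMulCommClass Λ S N := IsScalarTower.to_smulCommClass'
  have : SMulCommClass Λ S M := IsScalarTower.to_smulCommClass'
  have : Module.Finite S N := .trans Λ N
  have : Module.Finite S M := .trans Λ M
  have : Module.Finite S (M →ₗ[Λ] N) := .of_injective (LinearMap.restrictScalarsₗ S Λ M N S)
    (LinearMap.restrictScalars_injective S)
  obtain ⟨n, g, hg⟩ := Module.Finite.exists_fin (R := S) (M := M →ₗ[Λ] N)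
  refine ⟨n, LinearMap.lsum Λ (fun _ => M) ℕ g, fun y => ?_⟩
  obtain ⟨c, rfl⟩ := (Submodule.mem_span_range_iff_exists_fun S).1 (hg ▸ Submodule.mem_top (x := y))
  refine ⟨LinearMap.pi fun j => c j • LinearMap.id, LinearMap.ext fun x => ?_⟩
  simp [LinearMap.lsum_apply]

end ArtinAlgebra

variable {Λ : Type u} [Ring Λ] {T : ModuleClass Λ} {X Y M N : Type u}
  [AddCommGroup X] [Module Λ X] [AddCommGroup Y] [Module Λ Y]
  [AddCommGroup M] [Module Λ M] [AddCommGroup N] [Module Λ N] {t : M}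

theorem IsFacClosed.exists_isApproximation (S : Type w) [CommRing S] [Algebra S Λ]
    [Module.Finite S Λ] (hT : IsFacClosed T) (hX : T X)
    (hgen : ∀ (U : Type u) [AddCommGroup U] [Module Λ U], T U → Generates Λ X U) :
    ∃ (M : ModuleCat.{u} Λ) (t : M), IsApproximation T t := by
  have := hT.finite hX
  obtain ⟨n, t, ht⟩ := exists_pow_forall_exists_apply_eq S (Λ := Λ) (N := X)
  refine ⟨.of Λ (Fin n → X), t, hT.pow hX n, fun {U} _ _ hU u => ?_⟩
  obtain ⟨k, p, hp⟩ := hgen U hU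
  obtain ⟨y, rfl⟩ := hp u
  choose φ hφ using fun i => ht (y i)
  exact ⟨p ∘ₗ LinearMap.pi φ, congrArg p (funext hφ)⟩

theorem IsFacClosed.exists_minimal_isApproximation [IsArtinianRing Λ] (hT : IsFacClosed T)
    (h : ∃ (M : ModuleCat.{u} Λ) (t : M), IsApproximation T t) :
    ∃ (M : ModuleCat.{u} Λ) (t : M), IsApproximation T t ∧
      ∀ φ : M →ₗ[Λ] M, φ t = t → Function.Bijective φ := by
  obtain ⟨M, ⟨t, ht⟩, hmin⟩ :=
    exists_minimal_length (fun M : ModuleCat.{u} Λ => ∃ t : M, IsApproximation T t) h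
  refine ⟨M, t, ht, fun φ hφ => ?_⟩
  have := hT.finite ht.mem
  have happrox : IsApproximation T (⟨t, t, hφ⟩ : LinearMap.range φ) := by
    refine ⟨hT.quot _ φ.surjective_rangeRestrict ht.mem, fun hU x => ?_⟩
    obtain ⟨g, hg⟩ := ht.exists_apply_eq hU x
    exact ⟨g ∘ₗ (LinearMap.range φ).subtype, hg⟩
  have htop : LinearMap.range φ = ⊤ := by
    by_contra hne
    exact (Submodule.length_lt hne).not_ge (hmin (.of Λ (LinearMap.range φ)) ⟨_, happrox⟩)
  exact IsNoetherian.bijective_of_surjective_endomorphism φ (LinearMap.range_eq_top.1 htop)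

namespace IsApproximation

theorem generates (h : IsApproximation T t) (hY : T Y) [Module.Finite Λ Y] : Generates Λ M Y :=
  .of_forall_mem_range fun y => (h.exists_apply_eq hY y).imp fun _ hg => ⟨t, hg⟩

theorem isExtProjective (h : IsApproximation T t)
    (hmin : ∀ φ : M →ₗ[Λ] M, φ t = t → Function.Bijective φ) : IsExtProjective T M := by
  refine ⟨h.mem, fun p hE hp _ => ?_⟩
  obtain ⟨e, he⟩ := hp t
  obtain ⟨g, rfl⟩ := h.exists_apply_eq hE e
  let φ := LinearEquiv.ofBijective (p ∘ₗ g) (hmin (p ∘ₗ g) he)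
  exact ⟨g ∘ₗ φ.symm, LinearMap.ext φ.apply_symm_apply⟩

end IsApproximation

namespace IsExtProjective

theorem prod (hT : IsTorsionClass T) (hX : IsExtProjective T X) (hY : IsExtProjective T Y) :
    IsExtProjective T (X × Y) := by
  refine ⟨hT.isFacClosed.prod hX.1 hY.1, fun p _ hp hk => ?_⟩
  obtain ⟨v, hv⟩ := hX.exists_section hT hp hk (LinearMap.inl Λ X Y)
  obtain ⟨w, hw⟩ := hY.exists_section hT hp hk (LinearMap.inr Λ X Y)
  refine ⟨v.coprod w, ?_⟩
  rw [LinearMap.comp_coprod, hv, hw, LinearMap.coprod_inl_inr]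

theorem of_inAdd (hT : IsTorsionClass T) (h : InAdd Λ X Y) (hY : IsExtProjective T Y) :
    IsExtProjective T X := by
  obtain ⟨k, h⟩ := h
  refine .of_isSummand hT h ⟨hT.isFacClosed.pow hY.1 k, fun p _ hp hk => ?_⟩
  exact exists_comp_eq_of_pow (hY.exists_section hT hp hk) LinearMap.id

theorem quotient_span_singleton (hT : IsTorsionClass T) (h : IsApproximation T t)
    (hM : IsExtProjective T M) : IsExtProjective T (M ⧸ Submodule.span Λ {t}) := by
  refine ⟨hT.quot _ (Submodule.mkQ_surjective _) h.mem, fun p _ hp hk => ?_⟩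
  obtain ⟨v, hv⟩ := hM.exists_section hT hp hk (Submodule.mkQ _)
  have hvt : p (v t) = 0 := by
    rw [← LinearMap.comp_apply, hv, ← LinearMap.mem_ker, Submodule.ker_mkQ]
    exact Submodule.mem_span_singleton_self t
  obtain ⟨g, hg⟩ := h.exists_apply_eq hk ⟨v t, hvt⟩
  have hle : Submodule.span Λ {t} ≤ LinearMap.ker (v - (LinearMap.ker p).subtype ∘ₗ g) := by
    rw [Submodule.span_le, Set.singleton_subset_iff]
    simp [hg]
  refine ⟨Submodule.liftQ _ _ hle, Submodule.linearMap_qext _ ?_⟩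
  rw [LinearMap.comp_assoc, Submodule.liftQ_mkQ, LinearMap.comp_sub, hv, ← LinearMap.comp_assoc,
    LinearMap.comp_ker_subtype, LinearMap.zero_comp, sub_zero, LinearMap.id_comp]

theorem inAdd_of_isApproximation (S : Type w) [CommRing S] [IsNoetherianRing S] [Algebra S Λ]
    [Module.Finite S Λ] (hT : IsTorsionClass T) (h : IsApproximation T t)
    (hN : IsExtProjective T N) : InAdd Λ N (M × (M ⧸ Submodule.span Λ {t})) := by
  have : IsNoetherianRing Λ := isNoetherian_of_tower S inferInstance
  let V := Submodule.span Λ {t}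
  have hV : T (M ⧸ V) := hT.quot _ V.mkQ_surjective h.mem
  have := hT.finite hV
  have := hT.finite hN.1
  obtain ⟨k, p, hp⟩ := h.generates hN.1
  obtain ⟨n, g, hg⟩ := exists_pow_forall_exists_comp_eq S (Λ := Λ) (M := M ⧸ V) (N := N)
  let D := (Fin k → M) × (Fin n → M ⧸ V)
  let v : D →ₗ[Λ] N := p.coprod g
  have hv : Function.Surjective v := fun x => by
    obtain ⟨y, rfl⟩ := hp x
    exact ⟨(y, 0), by rw [LinearMap.coprod_apply, map_zero, add_zero]⟩
  have hD : T D := hT.isFacClosed.prod (hT.isFacClosed.pow h.mem _) (hT.isFacClosed.pow hV _)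
  have := hT.finite hD
  -- A map `a : M → D` with `a t ∈ ker v` is corrected, by the choice of `g`, to land in `ker v`.
  have hker : T (LinearMap.ker v) := by
    refine hT.isFacClosed.of_generates (.of_forall_mem_range fun x => ?_) h.mem
    obtain ⟨a, ha⟩ := h.exists_apply_eq hD (x : D)
    have hle : V ≤ LinearMap.ker (v ∘ₗ a) := by
      rw [Submodule.span_le, Set.singleton_subset_iff]
      simp [ha]
    obtain ⟨c, hc⟩ := hg (V.liftQ (v ∘ₗ a) hle)
    have hcm : ∀ m, g (c (V.mkQ m)) = v (a m) := fun m => LinearMap.congr_fun hc (V.mkQ m)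
    let b : M →ₗ[Λ] D := a - LinearMap.inr Λ _ _ ∘ₗ c ∘ₗ V.mkQ
    have hb : ∀ m, b m ∈ LinearMap.ker v := fun m => by
      have hinr : v (0, c (V.mkQ m)) = v (a m) := by
        rw [LinearMap.coprod_apply, map_zero, zero_add, hcm]
      exact LinearMap.mem_ker.2 ((map_sub v _ _).trans (sub_eq_zero.2 hinr.symm))
    have ht : V.mkQ t = 0 :=
      (Submodule.Quotient.mk_eq_zero V).2 (Submodule.mem_span_singleton_self t)
    have hbt : a t - (0, c (V.mkQ t)) = (x : D) := by
      rw [ht, map_zero, Prod.mk_zero_zero, sub_zero, ha]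
    exact ⟨b.codRestrict (LinearMap.ker v) hb, t, Subtype.ext hbt⟩
  obtain ⟨s, hs⟩ := hN.2 v hD hv hker
  have hND : IsSummand Λ N D := ⟨s, v, LinearMap.congr_fun hs⟩
  exact hND.inAdd.trans (.prod (.trans ⟨k, .refl⟩ IsSummand.fst.inAdd)
    (.trans ⟨n, .refl⟩ IsSummand.snd.inAdd))

end IsExtProjective

end Approximations

/-! ### Support τ-tilting modules -/

section SupportTauTilting

/-- A τ-rigid pair `(M, P)`: the module `M` satisfies `Hom(M, τM) = 0`, expressed by a projective
presentation as in `IsTauRigidMod`, and `P` is a projective module with `Hom(P, M) = 0`. -/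
structure IsTauRigidPair (Λ : Type u) [Ring Λ] (M P : Type u) [AddCommGroup M] [Module Λ M]
    [AddCommGroup P] [Module Λ P] : Prop where
  finite : Module.Finite Λ M
  exists_presentation : ∃ (P₁ P₀ : ModuleCat.{u} Λ) (f : P₁ →ₗ[Λ] P₀) (π : P₀ →ₗ[Λ] M),
    IsProjectivePresentation f π ∧ PrecompSurjective f M
  finite_right : Module.Finite Λ P
  projective_right : Module.Projective Λ P
  hom_eq_zero : ∀ u : P →ₗ[Λ] M, u = 0

/-- Support τ-tilting modules, the unbundled form of `IsSupportTauTiltingMod`. -/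
def IsSupportTauTilting (Λ : Type u) [Ring Λ] (M : Type u) [AddCommGroup M] [Module Λ M] : Prop :=
  ∃ P : ModuleCat.{u} Λ, IsTauRigidPair Λ M P ∧
    ∀ N Q : ModuleCat.{u} Λ, IsTauRigidPair Λ (M × N) (P × Q) → InAdd Λ N M ∧ InAdd Λ Q P

variable {Λ : Type u} [Ring Λ] {T : ModuleClass Λ}
  {X Y M N L P P₁ P₀ Q₁ Q₀ : Type u} [AddCommGroup X] [Module Λ X] [AddCommGroup Y] [Module Λ Y]
  [AddCommGroup M] [Module Λ M] [AddCommGroup N] [Module Λ N] [AddCommGroup L] [Module Λ L]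
  [AddCommGroup P] [Module Λ P] [AddCommGroup P₁] [Module Λ P₁] [AddCommGroup P₀] [Module Λ P₀]
  [AddCommGroup Q₁] [Module Λ Q₁] [AddCommGroup Q₀] [Module Λ Q₀]

theorem hom_eq_zero_of_isSummand (hX : IsSummand Λ X M) (hY : IsSummand Λ Y N)
    (h : ∀ u : M →ₗ[Λ] N, u = 0) (u : X →ₗ[Λ] Y) : u = 0 := by
  obtain ⟨i, p, hp⟩ := hX
  obtain ⟨j, q, hq⟩ := hY
  ext x
  rw [← hq (u x), ← hp x, LinearMap.zero_apply, ← map_zero q]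
  exact congrArg q (LinearMap.congr_fun (h (j ∘ₗ u ∘ₗ p)) (i x))

theorem exists_comp_eq_of_exact [Module.Projective Λ X] {f : P₁ →ₗ[Λ] P₀} {π : P₀ →ₗ[Λ] Y}
    (hex : Function.Exact f π) {g : X →ₗ[Λ] P₀} (hg : π ∘ₗ g = 0) :
    ∃ l : X →ₗ[Λ] P₁, f ∘ₗ l = g := by
  obtain ⟨l, hl⟩ := Module.projective_lifting_property f.rangeRestrict
    (g.codRestrict (LinearMap.range f) fun x => (hex _).1 (LinearMap.congr_fun hg x))
    f.surjective_rangeRestrict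
  exact ⟨l, LinearMap.ext fun x => congrArg Subtype.val (LinearMap.congr_fun hl x)⟩

theorem InAdd.of_projective [Module.Finite Λ X] [Module.Projective Λ X] : InAdd Λ X Λ := by
  obtain ⟨n, p, hp⟩ := Module.Finite.exists_fin' Λ X
  obtain ⟨i, hi⟩ := Module.projective_lifting_property p LinearMap.id hp
  exact ⟨n, i, p, LinearMap.congr_fun hi⟩

namespace PrecompSurjective

theorem compLeft {f : P₁ →ₗ[Λ] P₀} (hN : PrecompSurjective f N) (ι : Type) [Finite ι] :
    PrecompSurjective (f.compLeft ι) N := by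
  classical
  have := Fintype.ofFinite ι
  intro k
  choose g hg using fun j => hN (k ∘ₗ LinearMap.single Λ (fun _ : ι => P₁) j)
  refine ⟨LinearMap.lsum Λ (fun _ => P₀) ℕ g, LinearMap.ext fun x => ?_⟩
  have hgx : ∀ j, g j (f (x j)) = k (Pi.single j (x j)) := fun j => LinearMap.congr_fun (hg j) (x j)
  simp only [LinearMap.comp_apply, LinearMap.lsum_apply, LinearMap.sum_apply, LinearMap.proj_apply,
    LinearMap.compLeft_apply, Function.comp_apply, hgx]
  rw [← map_sum, Finset.univ_sum_single]

theorem prodMap {f : P₁ →ₗ[Λ] P₀} {g : Q₁ →ₗ[Λ] Q₀} (hf : PrecompSurjective f N)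
    (hg : PrecompSurjective g N) : PrecompSurjective (f.prodMap g) N := by
  intro k
  obtain ⟨m, hm⟩ := hf (k ∘ₗ LinearMap.inl Λ P₁ Q₁)
  obtain ⟨n, hn⟩ := hg (k ∘ₗ LinearMap.inr Λ P₁ Q₁)
  refine ⟨m.coprod n, LinearMap.prod_ext ?_ ?_⟩
  · rw [← hm]; ext; simp
  · rw [← hn]; ext; simp

theorem coprod_toSpanSingleton {d : P₁ →ₗ[Λ] P₀} {π : P₀ →ₗ[Λ] M} (hex : Function.Exact d π)
    {q : P₀} (hd : PrecompSurjective d Y) (hq : ∀ y : Y, ∃ g : M →ₗ[Λ] Y, g (π q) = y) :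
    PrecompSurjective (d.coprod (LinearMap.toSpanSingleton Λ P₀ q)) Y := by
  intro k
  obtain ⟨m, hm⟩ := hd (k ∘ₗ LinearMap.inl Λ P₁ Λ)
  obtain ⟨g, hg⟩ := hq (k (0, 1) - m q)
  refine ⟨m + g ∘ₗ π, LinearMap.prod_ext ?_ ?_⟩
  · rw [← hm]; ext; simp [hex.apply_apply_eq_zero]
  · ext; simp [hg]

theorem exists_apply_eq {d : P₁ →ₗ[Λ] P₀} {π : P₀ →ₗ[Λ] M} (hex : Function.Exact d π)
    (hπ : Function.Surjective π) {q : P₀}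
    (h : PrecompSurjective (d.coprod (LinearMap.toSpanSingleton Λ P₀ q)) N) (n : N) :
    ∃ g : M →ₗ[Λ] N, g (π q) = n := by
  obtain ⟨m, hm⟩ := h (LinearMap.toSpanSingleton Λ N n ∘ₗ LinearMap.snd Λ P₁ Λ)
  have hmd : ∀ a, m (d a) = 0 := fun a => by simpa using LinearMap.congr_fun hm (a, 0)
  have hmq : m q = n := by simpa using LinearMap.congr_fun hm (0, 1)
  obtain ⟨g, rfl⟩ := exists_comp_eq_of_ker_le_ker hπ (g := m) fun a ha => by
    obtain ⟨b, rfl⟩ := (hex a).1 ha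
    exact hmd b
  exact ⟨g, hmq⟩

end PrecompSurjective

namespace IsProjectivePresentation

theorem pow {f : P₁ →ₗ[Λ] P₀} {π : P₀ →ₗ[Λ] X} (h : IsProjectivePresentation f π) (k : ℕ) :
    IsProjectivePresentation (f.compLeft (Fin k)) (π.compLeft (Fin k)) := by
  obtain ⟨_, _, _, _, hex, hπ⟩ := h
  refine ⟨inferInstance, InAdd.projective ⟨k, .refl⟩, inferInstance,
    InAdd.projective ⟨k, .refl⟩, fun x => ⟨fun hx => ?_, ?_⟩, hπ.comp_left⟩
  · choose y hy using fun j => (hex (x j)).1 (congrFun hx j)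
    exact ⟨y, funext hy⟩
  · rintro ⟨y, rfl⟩
    exact funext fun j => hex.apply_apply_eq_zero (y j)

theorem prod {f : P₁ →ₗ[Λ] P₀} {π : P₀ →ₗ[Λ] X} {g : Q₁ →ₗ[Λ] Q₀} {ρ : Q₀ →ₗ[Λ] Y}
    (h : IsProjectivePresentation f π) (h' : IsProjectivePresentation g ρ) :
    IsProjectivePresentation (f.prodMap g) (π.prodMap ρ) := by
  obtain ⟨_, _, _, _, hex, hπ⟩ := h
  obtain ⟨_, _, _, _, hex', hρ⟩ := h'
  refine ⟨inferInstance, inferInstance, inferInstance, inferInstance, fun x => ⟨fun hx => ?_, ?_⟩,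
    hπ.prodMap hρ⟩
  · obtain ⟨a, ha⟩ := (hex x.1).1 (congrArg Prod.fst hx)
    obtain ⟨b, hb⟩ := (hex' x.2).1 (congrArg Prod.snd hx)
    exact ⟨(a, b), Prod.ext ha hb⟩
  · rintro ⟨y, rfl⟩
    exact Prod.ext (hex.apply_apply_eq_zero _) (hex'.apply_apply_eq_zero _)

theorem of_equiv {f : P₁ →ₗ[Λ] P₀} {π : P₀ →ₗ[Λ] X} (h : IsProjectivePresentation f π)
    (e : X ≃ₗ[Λ] Y) : IsProjectivePresentation f (e.toLinearMap ∘ₗ π) where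
  __ := h
  exact x := by rw [← h.exact]; simp
  surjective := e.surjective.comp h.surjective

theorem quotient_span_singleton {f : P₁ →ₗ[Λ] P₀} {π : P₀ →ₗ[Λ] X}
    (h : IsProjectivePresentation f π) (q : P₀) :
    IsProjectivePresentation (f.coprod (LinearMap.toSpanSingleton Λ P₀ q))
      ((Submodule.span Λ {π q}).mkQ ∘ₗ π) := by
  obtain ⟨_, _, _, _, hex, hπ⟩ := h
  refine ⟨inferInstance, inferInstance, ‹_›, ‹_›, fun x => ?_,
    (Submodule.mkQ_surjective _).comp hπ⟩
  rw [LinearMap.comp_apply, ← LinearMap.mem_ker, Submodule.ker_mkQ, Submodule.mem_span_singleton]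
  constructor
  · rintro ⟨r, hr⟩
    obtain ⟨a, ha⟩ := (hex (x - r • q)).1 (by rw [map_sub, map_smul, hr, sub_self])
    exact ⟨(a, r), by simp [ha]⟩
  · rintro ⟨⟨a, r⟩, rfl⟩
    exact ⟨r, by simp [hex.apply_apply_eq_zero]⟩

/-- Lifting the inclusion and the projection of the summand to the presentations, the composite
`1 + ψ` on `P₁`, corrected by a homotopy, factors through the presentation of the big module. -/
theorem exists_end_of_isSummand {f : P₁ →ₗ[Λ] P₀} {π : P₀ →ₗ[Λ] X} {h : Q₁ →ₗ[Λ] Q₀}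
    {ρ : Q₀ →ₗ[Λ] L} (hf : IsProjectivePresentation f π) (hh : IsProjectivePresentation h ρ)
    (hX : IsSummand Λ X L) (hN : PrecompSurjective h N) :
    ∃ ψ : Module.End Λ P₁, f ∘ₗ ψ = 0 ∧
      ∀ k : P₁ →ₗ[Λ] N, ∃ m : P₀ →ₗ[Λ] N, m ∘ₗ f = k + k ∘ₗ ψ := by
  obtain ⟨-, _, -, _, hex, hπ⟩ := hf
  obtain ⟨-, _, -, _, hex', hρ⟩ := hh
  obtain ⟨i, p, hp⟩ := hX
  obtain ⟨a₀, ha₀⟩ := Module.projective_lifting_property ρ (i ∘ₗ π) hρ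
  obtain ⟨a₁, ha₁⟩ := exists_comp_eq_of_exact hex' (g := a₀ ∘ₗ f) <| by
    rw [← LinearMap.comp_assoc, ha₀, LinearMap.comp_assoc, hex.linearMap_comp_eq_zero,
      LinearMap.comp_zero]
  obtain ⟨b₀, hb₀⟩ := Module.projective_lifting_property π (p ∘ₗ ρ) hπ
  obtain ⟨b₁, hb₁⟩ := exists_comp_eq_of_exact hex (g := b₀ ∘ₗ h) <| by
    rw [← LinearMap.comp_assoc, hb₀, LinearMap.comp_assoc, hex'.linearMap_comp_eq_zero,
      LinearMap.comp_zero]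
  have ha₀' : ∀ x, ρ (a₀ x) = i (π x) := LinearMap.congr_fun ha₀
  have ha₁' : ∀ x, h (a₁ x) = a₀ (f x) := LinearMap.congr_fun ha₁
  have hb₀' : ∀ x, π (b₀ x) = p (ρ x) := LinearMap.congr_fun hb₀
  have hb₁' : ∀ x, f (b₁ x) = b₀ (h x) := LinearMap.congr_fun hb₁
  obtain ⟨s, hs⟩ := exists_comp_eq_of_exact hex (g := b₀ ∘ₗ a₀ - LinearMap.id) <|
    LinearMap.ext fun x => by simp [hb₀', ha₀', hp (π x)]
  have hs' : ∀ x, f (s x) = b₀ (a₀ x) - x := LinearMap.congr_fun hs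
  refine ⟨b₁ ∘ₗ a₁ - LinearMap.id - s ∘ₗ f, LinearMap.ext fun x => ?_, fun k => ?_⟩
  · simp [hb₁', ha₁', hs']
  · obtain ⟨m, hm⟩ := hN (k ∘ₗ b₁)
    have hm' : ∀ x, m (h x) = k (b₁ x) := LinearMap.congr_fun hm
    exact ⟨m ∘ₗ a₀ - k ∘ₗ s, LinearMap.ext fun x => by simp [← hm', ha₁']; abel⟩

end IsProjectivePresentation

theorem comp_eq_zero_of_comp_pow_eq_zero {ψ : Module.End Λ P} {k : P →ₗ[Λ] N}
    (hk : k ∘ₗ ψ + k ∘ₗ ψ ∘ₗ ψ = 0) (n : ℕ) (hn : k ∘ₗ ψ ^ (n + 1) = 0) : k ∘ₗ ψ = 0 := by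
  induction n with
  | zero => simpa using hn
  | succ n ih =>
    refine ih ?_
    have hmul : (k ∘ₗ ψ + k ∘ₗ ψ ∘ₗ ψ) ∘ₗ ψ ^ n = k ∘ₗ ψ ^ (n + 1) + k ∘ₗ ψ ^ (n + 2) := by
      rw [pow_succ' ψ n, pow_succ' ψ (n + 1), pow_succ' ψ n]
      rfl
    simpa [hk, hn] using hmul.symm

section Artinian

variable [IsArtinianRing Λ]

/-- By Fitting's lemma applied to `ψ`, the image of a high power of `ψ` is one of the summands `F`
on which every homomorphism to `N` vanishes. -/
theorem PrecompSurjective.of_end [Module.Finite Λ P₁] {f : P₁ →ₗ[Λ] P₀} (ψ : Module.End Λ P₁)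
    (hfψ : f ∘ₗ ψ = 0)
    (hψ : ∀ k : P₁ →ₗ[Λ] N, ∃ m : P₀ →ₗ[Λ] N, m ∘ₗ f = k + k ∘ₗ ψ)
    (hF : ∀ F G : Submodule Λ P₁, IsCompl F G → F ≤ LinearMap.ker f → ∀ u : F →ₗ[Λ] N, u = 0) :
    PrecompSurjective f N := by
  intro k
  obtain ⟨m, hm⟩ := hψ k
  obtain ⟨n, hn, hn1⟩ := ((LinearMap.eventually_isCompl_ker_pow_range_pow ψ).and
    (Filter.eventually_ge_atTop 1)).exists
  obtain ⟨n, rfl⟩ := Nat.exists_eq_add_of_le' hn1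
  have hle : LinearMap.range (ψ ^ (n + 1)) ≤ LinearMap.ker f := by
    rw [LinearMap.range_le_ker_iff, pow_succ', Module.End.mul_eq_comp, ← LinearMap.comp_assoc, hfψ,
      LinearMap.zero_comp]
  have hpow : k ∘ₗ ψ ^ (n + 1) = 0 := LinearMap.ext fun x =>
    LinearMap.congr_fun (hF _ _ hn.symm hle (k ∘ₗ Submodule.subtype _)) ⟨_, x, rfl⟩
  have hrec : k ∘ₗ ψ + k ∘ₗ ψ ∘ₗ ψ = 0 := by
    rw [← LinearMap.comp_assoc, ← LinearMap.add_comp, ← hm, LinearMap.comp_assoc, hfψ,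
      LinearMap.comp_zero]
  exact ⟨m, by rw [hm, comp_eq_zero_of_comp_pow_eq_zero hrec n hpow, add_zero]⟩

theorem exists_isBasic_inAdd (W : ModuleCat.{u} Λ) (hW : Module.Finite Λ W) :
    ∃ M : ModuleCat.{u} Λ, InAdd Λ M W ∧ InAdd Λ W M ∧ IsBasic Λ M := by
  obtain ⟨M, ⟨hMW, hWM⟩, hmin⟩ := exists_minimal_length
    (fun M : ModuleCat.{u} Λ => InAdd Λ M W ∧ InAdd Λ W M)
    ⟨W, IsSummand.refl.inAdd, IsSummand.refl.inAdd⟩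
  have := hMW.finite
  refine ⟨M, hMW, hWM, fun N hN => ?_⟩
  by_contra hns
  have := not_subsingleton_iff_nontrivial.1 hns
  obtain ⟨C, ⟨e⟩⟩ := hN.exists_equiv_prod
  let e' : M ≃ₗ[Λ] N × (N × C) := e ≪≫ₗ LinearEquiv.prodAssoc Λ N N C
  have hs : IsSummand Λ (N × C) M := .trans .snd (.of_equiv e'.symm)
  have hadd : InAdd Λ M (N × C) := .trans (IsSummand.of_equiv e').inAdd
    (.prod (IsSummand.inAdd .fst) (IsSummand.inAdd .refl))
  have := hs.finite
  have hN1 : 0 < Module.length Λ N := Module.length_pos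
  have hle := hmin (.of Λ (N × C)) ⟨hs.inAdd.trans hMW, hWM.trans hadd⟩
  rw [e'.length_eq, Module.length_prod (R := Λ) (M := N)] at hle
  have hfin : Module.length Λ (N × C) ≠ ⊤ := Module.length_ne_top
  exact hle.not_gt (ENat.lt_add_left hfin hN1)

theorem exists_maximal_projective_hom_eq_zero (M : Type u) [AddCommGroup M] [Module Λ M] :
    ∃ P : ModuleCat.{u} Λ, Module.Finite Λ P ∧ Module.Projective Λ P ∧
      (∀ u : P →ₗ[Λ] M, u = 0) ∧ ∀ U : ModuleCat.{u} Λ, Module.Finite Λ U →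
        Module.Projective Λ U → (∀ u : U →ₗ[Λ] M, u = 0) → InAdd Λ U P := by
  obtain ⟨P, hP, hPΛ, hmax⟩ := exists_inAdd_generator
    (fun U : ModuleCat.{u} Λ => ∀ u : U →ₗ[Λ] M, u = 0)
    (fun _ _ h hY => hom_eq_zero_of_isSummand h .refl hY)
    (fun X Y hX hY u => by
      rw [← u.comp_id, ← LinearMap.coprod_inl_inr, LinearMap.comp_coprod, hX (u ∘ₗ .inl Λ X Y),
        hY (u ∘ₗ .inr Λ X Y), LinearMap.coprod_zero_left, LinearMap.zero_comp])
    (fun _ _ _ => Subsingleton.elim _ _) (.of Λ Λ) (Module.Finite.self Λ)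
  have hPΛ' : InAdd Λ P Λ := hPΛ
  exact ⟨P, hPΛ'.finite, hPΛ'.projective, hP, fun U _ _ hU => hmax U hU .of_projective⟩

namespace IsTorsionClass

/-- A module which is compatible with the presentation of `X ⧸ Λt` and whose support is contained
in that of `T` has the approximation property of the modules in `T`, hence is generated by `X`. -/
theorem mem_of_precompSurjective (hT : IsTorsionClass T) {t : X} (ht : IsApproximation T t)
    (hX : IsExtProjective T X) {h : Q₁ →ₗ[Λ] Q₀} {ρ : Q₀ →ₗ[Λ] L}
    (hh : IsProjectivePresentation h ρ) (hXL : InAdd Λ (X ⧸ Submodule.span Λ {t}) L)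
    [Module.Finite Λ N] (hN : PrecompSurjective h N)
    (hsupp : ∀ P : ModuleCat.{u} Λ, Module.Finite Λ P → Module.Projective Λ P →
      (∀ (Y : Type u) [AddCommGroup Y] [Module Λ Y], T Y → ∀ u : P →ₗ[Λ] Y, u = 0) →
      ∀ u : P →ₗ[Λ] N, u = 0) : T N := by
  obtain ⟨P₁, P₀, d, π, hd, hdT⟩ := hX.exists_presentation hT
  obtain ⟨q, rfl⟩ := hd.surjective t
  have hq := hd.quotient_span_singleton q
  obtain ⟨k, hk⟩ := hXL
  obtain ⟨ψ, hdψ, hψ⟩ := hq.exists_end_of_isSummand (hh.pow k) hk (hN.compLeft (Fin k))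
  have := hq.finite₁
  have := hq.projective₁
  have hqN := PrecompSurjective.of_end ψ hdψ hψ fun F G hFG hF => by
    have hs := IsSummand.of_isCompl hFG
    refine hsupp (.of Λ F) hs.finite hs.projective fun Y _ _ hY w => ?_
    obtain ⟨m, hm⟩ := PrecompSurjective.coprod_toSpanSingleton hd.exact (hdT Y hY)
      (ht.exists_apply_eq hY) (w ∘ₗ F.projectionOnto G hFG)
    ext x
    have hx := LinearMap.congr_fun hm (x : P₁ × Λ)
    rw [LinearMap.comp_apply, LinearMap.mem_ker.1 (hF x.2), map_zero, LinearMap.comp_apply,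
      Submodule.projectionOnto_apply_left] at hx
    exact hx.symm
  exact hT.isFacClosed.of_generates (.of_forall_mem_range fun n =>
    (hqN.exists_apply_eq hd.exact hd.surjective n).imp fun _ hg => ⟨_, hg⟩) ht.mem

theorem isSupportTauTilting (S : Type w) [CommRing S] [IsNoetherianRing S] [Algebra S Λ]
    [Module.Finite S Λ] (hT : IsTorsionClass T) {t : X} (ht : IsApproximation T t)
    (hX : IsExtProjective T X) (hMX : InAdd Λ M (X × (X ⧸ Submodule.span Λ {t})))
    (hXM : InAdd Λ (X × (X ⧸ Submodule.span Λ {t})) M) : IsSupportTauTilting Λ M := by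
  have hM : IsExtProjective T M := .of_inAdd hT hMX (hX.prod hT (hX.quotient_span_singleton hT ht))
  have hgen : ∀ (Y : Type u) [AddCommGroup Y] [Module Λ Y], T Y → Generates Λ M Y :=
    fun Y _ _ hY => have := hT.finite hY
      (Generates.of_inAdd ((IsSummand.inAdd .fst).trans hXM)).trans (ht.generates hY)
  obtain ⟨P, hPfin, hPproj, hPM, hPmax⟩ := exists_maximal_projective_hom_eq_zero (Λ := Λ) M
  obtain ⟨P₁, P₀, f, π, hf, hfT⟩ := hM.exists_presentation hT
  refine ⟨P, ⟨hT.finite hM.1, ⟨P₁, P₀, f, π, hf, hfT M hM.1⟩, hPfin, hPproj, hPM⟩, ?_⟩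
  rintro N Q ⟨_, ⟨Q₁, Q₀, h, ρ, hh, hMN⟩, _, _, hPQ⟩
  have hMMN : IsSummand Λ M (M × N) := .fst
  have hNMN : IsSummand Λ N (M × N) := .snd
  have := hNMN.finite
  have := hh.projective₁
  have := hh.projective₀
  have hQ : IsSummand Λ Q (P × Q) := .snd
  have hPN := hom_eq_zero_of_isSummand (.fst : IsSummand Λ P (P × Q)) hNMN hPQ
  refine ⟨?_, hPmax Q hQ.finite hQ.projective (hom_eq_zero_of_isSummand hQ hMMN hPQ)⟩
  have hTN : T N := hT.mem_of_precompSurjective ht hX hh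
    (((IsSummand.inAdd .snd).trans hXM).trans hMMN.inAdd)
    (hMN.of_generates (.of_inAdd hNMN.inAdd))
    fun U _ _ hU => (hPmax U ‹_› ‹_› (hU M hM.1)).hom_eq_zero hPN
  have hMN' : IsExtProjective T (M × N) := PrecompSurjective.isExtProjective hh.surjective hh.exact
    (hT.isFacClosed.prod hM.1 hTN) fun Y _ _ hY =>
      hMN.of_generates ((Generates.of_inAdd hMMN.inAdd).trans (hgen Y hY))
  exact (IsExtProjective.inAdd_of_isApproximation S hT ht (.of_isSummand hT hNMN hMN')).trans hXM

theorem exists_isSupportTauTilting (S : Type w) [CommRing S] [IsNoetherianRing S] [Algebra S Λ]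
    [Module.Finite S Λ] (hT : IsTorsionClass T) (hX : T X)
    (hgen : ∀ (Y : Type u) [AddCommGroup Y] [Module Λ Y], T Y → Generates Λ X Y) :
    ∃ M : ModuleCat.{u} Λ, IsSupportTauTilting Λ M ∧ IsBasic Λ M ∧
      ∀ (Y : Type u) [AddCommGroup Y] [Module Λ Y], T Y ↔ Generates Λ M Y := by
  obtain ⟨A, t, ht, hmin⟩ := hT.isFacClosed.exists_minimal_isApproximation
    (hT.isFacClosed.exists_isApproximation S hX hgen)
  have hA := ht.isExtProjective hmin
  have hW := hA.prod hT (hA.quotient_span_singleton hT ht)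
  obtain ⟨M, hMW, hWM, hM⟩ := exists_isBasic_inAdd (.of Λ (A × (A ⧸ Submodule.span Λ {t})))
    (hT.finite hW.1)
  refine ⟨M, hT.isSupportTauTilting S ht hA hMW hWM, hM, fun Y _ _ => ⟨fun hY => ?_, fun hY => ?_⟩⟩
  · have := hT.finite hY
    exact (Generates.of_inAdd ((IsSummand.inAdd .fst).trans hWM)).trans (ht.generates hY)
  · exact hT.isFacClosed.of_generates hY (IsExtProjective.of_inAdd hT hMW hW).1

end IsTorsionClass

end Artinian

theorem IsTauRigidPair.prod_of_generates (hM : IsTauRigidPair Λ M P) {f : P₁ →ₗ[Λ] P₀}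
    {π : P₀ →ₗ[Λ] N} (hf : IsProjectivePresentation f π) (hfN : PrecompSurjective f N)
    (hMN : Generates Λ M N) (hNM : Generates Λ N M) :
    IsTauRigidPair Λ (M × N) (P × PUnit.{u + 1}) := by
  obtain ⟨_, ⟨Q₁, Q₀, g, ρ, hg, hgM⟩, _, _, hPM⟩ := hM
  have := hf.projective₁
  have := hg.projective₁
  have := hMN.finite
  have hPN : ∀ u : P →ₗ[Λ] N, u = 0 := fun u => by
    obtain ⟨k, p, hp⟩ := hMN
    obtain ⟨v, rfl⟩ := Module.projective_lifting_property p u hp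
    have hv : v = 0 := LinearMap.ext fun x => funext fun j =>
      LinearMap.congr_fun (hPM (LinearMap.proj j ∘ₗ v)) x
    rw [hv, LinearMap.comp_zero]
  refine ⟨inferInstance, ⟨.of Λ (Q₁ × P₁), .of Λ (Q₀ × P₀), g.prodMap f, ρ.prodMap π, hg.prod hf,
    .prodMap (.prod hgM (hgM.of_generates hMN)) (.prod (hfN.of_generates hNM) hfN)⟩,
    inferInstance, inferInstance, fun u => LinearMap.prod_ext (LinearMap.ext fun x => ?_)
      (Subsingleton.elim _ _)⟩
  exact Prod.ext (LinearMap.congr_fun (hPM (.fst Λ M N ∘ₗ u ∘ₗ .inl Λ P PUnit.{u + 1})) x)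
    (LinearMap.congr_fun (hPN (.snd Λ M N ∘ₗ u ∘ₗ .inl Λ P PUnit.{u + 1})) x)

namespace IsSupportTauTilting

theorem finite (h : IsSupportTauTilting Λ M) : Module.Finite Λ M := h.choose_spec.1.finite

theorem isTorsionClass (h : IsSupportTauTilting Λ M) :
    IsTorsionClass (fun Y _ _ => Generates Λ M Y : ModuleClass Λ) := by
  obtain ⟨P, ⟨_, ⟨P₁, P₀, f, π, hf, hfM⟩, -⟩, -⟩ := h
  have := hf.projective₁
  have := hf.projective₀
  exact PrecompSurjective.isTorsionClass_generates hf.surjective hf.exact hfM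

theorem inAdd (hM : IsSupportTauTilting Λ M) (hN : IsSupportTauTilting Λ N)
    (hMN : Generates Λ M N) (hNM : Generates Λ N M) : InAdd Λ N M := by
  obtain ⟨P, hP, hmax⟩ := hM
  obtain ⟨-, ⟨-, ⟨P₁, P₀, f, π, hf, hfN⟩, -⟩, -⟩ := hN
  exact (hmax (.of Λ N) (.of Λ PUnit) (hP.prod_of_generates hf hfN hMN hNM)).1

theorem nonempty_equiv [IsArtinianRing Λ] (hM : IsSupportTauTilting Λ M)
    (hN : IsSupportTauTilting Λ N) (hM' : IsBasic Λ M) (hN' : IsBasic Λ N)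
    (hMN : Generates Λ M N) (hNM : Generates Λ N M) : Nonempty (M ≃ₗ[Λ] N) :=
  have := hM.finite
  have := hN.finite
  hM'.nonempty_equiv hN' (hN.inAdd hM hNM hMN) (hM.inAdd hN hMN hNM)

end IsSupportTauTilting

theorem IsTauRigidPair.congr {M' P' : Type u} [AddCommGroup M'] [Module Λ M'] [AddCommGroup P']
    [Module Λ P'] (e : M ≃ₗ[Λ] M') (e' : P ≃ₗ[Λ] P') (h : IsTauRigidPair Λ M P) :
    IsTauRigidPair Λ M' P' := by
  obtain ⟨_, ⟨P₁, P₀, f, π, hf, hfM⟩, _, _, hPM⟩ := h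
  have := hf.projective₁
  exact ⟨.equiv e, ⟨P₁, P₀, f, e.toLinearMap ∘ₗ π, hf.of_equiv e,
    hfM.of_surjective (g := e.toLinearMap) e.surjective⟩, .equiv e', .of_equiv e',
    hom_eq_zero_of_isSummand (.of_equiv e'.symm) (.of_equiv e.symm) hPM⟩

end SupportTauTilting

section Translation

theorem isTauRigidPairMod_iff {M P : ModCat R} : IsTauRigidPairMod M P ↔ IsTauRigidPair R M P := by
  constructor
  · rintro ⟨hM, ⟨P₁, P₀, f, g, h₁, h₀, hf₁, hf₀, hg, hex, hfM⟩, hP, hP', hPM⟩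
    refine ⟨hM, ⟨P₁, P₀, f.hom, g.hom, ⟨hf₁, (IsProjective.iff_projective P₁).2 h₁, hf₀,
      (IsProjective.iff_projective P₀).2 h₀, hex, hg⟩, fun k => ?_⟩, hP,
      (IsProjective.iff_projective P).2 hP', fun u => ?_⟩
    · obtain ⟨m, hm⟩ := hfM (ModuleCat.ofHom k)
      exact ⟨m.hom, congrArg ModuleCat.Hom.hom hm⟩
    · exact congrArg ModuleCat.Hom.hom (hPM (ModuleCat.ofHom u))
  · rintro ⟨hM, ⟨P₁, P₀, f, π, ⟨hf₁, h₁, hf₀, h₀, hex, hπ⟩, hfM⟩, hP, hP', hPM⟩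
    refine ⟨hM, ⟨P₁, P₀, ModuleCat.ofHom f, ModuleCat.ofHom π,
      (IsProjective.iff_projective P₁).1 h₁, (IsProjective.iff_projective P₀).1 h₀,
      hf₁, hf₀, hπ, hex, fun k => ?_⟩, hP,
      (IsProjective.iff_projective P).1 hP', fun u => ModuleCat.hom_ext (hPM u.hom)⟩
    obtain ⟨m, hm⟩ := hfM k.hom
    exact ⟨ModuleCat.ofHom m, ModuleCat.hom_ext hm⟩

theorem memAddMod_iff {N M : ModCat R} : MemAddMod N M ↔ InAdd R N M := by
  refine exists_congr fun k => ?_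
  let e := (ModuleCat.biproductIsoPi fun _ : Fin k => M).toLinearEquiv
  constructor
  · rintro ⟨g, h, hgh⟩
    have hsum : IsSummand R N (⨁ fun _ : Fin k => M : ModCat R) :=
      ⟨g.hom, h.hom, LinearMap.congr_fun (congrArg ModuleCat.Hom.hom hgh)⟩
    exact hsum.trans (.of_equiv e)
  · intro h
    obtain ⟨i, p, hp⟩ := h.trans (.of_equiv e.symm)
    exact ⟨ModuleCat.ofHom i, ModuleCat.ofHom p, ModuleCat.hom_ext (LinearMap.ext hp)⟩

theorem isSupportTauTiltingMod_iff {M : ModCat R} :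
    IsSupportTauTiltingMod M ↔ IsSupportTauTilting R M := by
  refine exists_congr fun P => and_congr isTauRigidPairMod_iff <| forall₂_congr fun N Q => ?_
  let e := (ModuleCat.biprodIsoProd M N).toLinearEquiv
  let e' := (ModuleCat.biprodIsoProd P Q).toLinearEquiv
  rw [isTauRigidPairMod_iff, memAddMod_iff, memAddMod_iff]
  exact imp_congr_left ⟨.congr e e', .congr e.symm e'.symm⟩

theorem isBasicMod_iff {M : ModCat R} : IsBasicMod M ↔ IsBasic R M := by
  constructor
  · intro h N hN
    obtain ⟨C, ⟨e⟩⟩ := hN.exists_equiv_prod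
    let e' : ((N × N) × C) ≃ₗ[R] ((N ⊞ N) ⊞ ModuleCat.of R C : ModCat R) :=
      LinearEquiv.prodCongr (ModuleCat.biprodIsoProd N N).toLinearEquiv.symm (.refl R C) ≪≫ₗ
        (ModuleCat.biprodIsoProd (N ⊞ N) (.of R C)).toLinearEquiv.symm
    exact ModuleCat.subsingleton_of_isZero (h N (.of R C) ⟨(e ≪≫ₗ e').toModuleIso⟩)
  · rintro h N C ⟨e⟩
    let e' := (ModuleCat.biprodIsoProd (N ⊞ N) C).toLinearEquiv.symm ≪≫ₗ e.toLinearEquiv.symm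
    have hs : IsSummand R (N × N) ((N ⊞ N : ModCat R) × C) :=
      .trans (.of_equiv (ModuleCat.biprodIsoProd N N).toLinearEquiv.symm) .fst
    have := h N (hs.trans (.of_equiv e'))
    exact ModuleCat.isZero_of_subsingleton N

end Translation

/-! ### The algebra `A₇` -/

/-- The source of a generator of `A₇`; the generators `0, …, 3` are the idempotents at the
vertices, and `4, …, 9` are the arrows `α, β, δ, γ, ε, ξ`. -/
def src : Fin 10 → Fin 4 := ![0, 1, 2, 3, 0, 1, 1, 2, 2, 3]

/-- The target of a generator of `A₇`. -/
def tgt : Fin 10 → Fin 4 := ![0, 1, 2, 3, 1, 0, 2, 1, 3, 2]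

/-- The generator of `A₇` that is the idempotent at the vertex `i`. -/
def vertex (i : Fin 4) : Fin 10 := i.castLE (by decide)

/-- The arrow of `A₇` opposite to a given one; the idempotents are left alone. -/
def reverse : Fin 10 → Fin 10 := ![0, 1, 2, 3, 5, 4, 7, 6, 9, 8]

theorem src_vertex (i : Fin 4) : src (vertex i) = i := by revert i; decide

theorem tgt_vertex (i : Fin 4) : tgt (vertex i) = i := by revert i; decide

/-- The family `g` satisfies the relations between the generators of `A₇`, with the orthogonality
of the idempotents and the position of the arrows expressed through `src` and `tgt`. -/
structure IsA7Family {A : Type*} [Ring A] (g : Fin 10 → A) : Prop where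
  mul_eq_zero : ∀ i j, tgt i ≠ src j → g i * g j = 0
  vertex_mul : ∀ i, g (vertex (src i)) * g i = g i
  mul_vertex : ∀ i, g i * g (vertex (tgt i)) = g i
  sum_vertex : ∑ i, g (vertex i) = 1
  beta_alpha : g 5 * g 4 = g 6 * g 7
  gamma_delta : g 7 * g 6 = g 8 * g 9
  alpha_delta_epsilon : g 4 * g 6 * g 8 = 0
  xi_gamma_beta : g 9 * g 7 * g 5 = 0

section Family

variable {A : Type*} [Ring A] {g : Fin 10 → A}

/-- The loop at each vertex of `A₇` from which its central element is assembled. -/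
def loop (g : Fin 10 → A) : Fin 4 → A := ![g 4 * g 5, g 5 * g 4, g 7 * g 6, g 9 * g 8]

/-- The central element `αβ + βα + γδ + ξε` of `A₇`. -/
def centralElement (g : Fin 10 → A) : A := ∑ i, loop g i

/-- The path of `A₇` that runs monotonically from the vertex `i` to the vertex `j`. -/
def monotonePath (g : Fin 10 → A) : Fin 4 → Fin 4 → A :=
  ![![g 0, g 4, g 4 * g 6, g 4 * g 6 * g 8],
    ![g 5, g 1, g 6, g 6 * g 8],
    ![g 7 * g 5, g 7, g 2, g 8],
    ![g 9 * g 7 * g 5, g 9 * g 7, g 9, g 3]]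

theorem IsA7Family.of_position
    (idempotent : ∀ i, g (vertex i) * g (vertex i) = g (vertex i))
    (orthogonal : ∀ i j, i ≠ j → g (vertex i) * g (vertex j) = 0)
    (position : ∀ i, g (vertex (src i)) * g i * g (vertex (tgt i)) = g i)
    (sum_vertex : ∑ i, g (vertex i) = 1)
    (beta_alpha : g 5 * g 4 = g 6 * g 7) (gamma_delta : g 7 * g 6 = g 8 * g 9)
    (alpha_delta_epsilon : g 4 * g 6 * g 8 = 0) (xi_gamma_beta : g 9 * g 7 * g 5 = 0) :
    IsA7Family g where
  mul_eq_zero i j h := by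
    rw [← position i, ← position j, mul_assoc, mul_assoc (g (vertex (src j))),
      ← mul_assoc _ (g (vertex (src j))), orthogonal _ _ h, zero_mul, mul_zero]
  vertex_mul i := by
    rw [← position i, ← mul_assoc, ← mul_assoc, idempotent]
  mul_vertex i := by
    rw [← position i, mul_assoc, idempotent]
  sum_vertex := sum_vertex
  beta_alpha := beta_alpha
  gamma_delta := gamma_delta
  alpha_delta_epsilon := alpha_delta_epsilon
  xi_gamma_beta := xi_gamma_beta

theorem IsA7Family.position (hg : IsA7Family g) (i : Fin 10) :
    g (vertex (src i)) * g i * g (vertex (tgt i)) = g i := by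
  rw [hg.vertex_mul, hg.mul_vertex]

theorem isA7Family_iff (K : Type) [Field K] [Algebra K A] :
    IsA7Family g ↔ ∀ u v, A7Rel K u v → FreeAlgebra.lift K g u = FreeAlgebra.lift K g v := by
  have uncurry : (∀ u v, A7Rel K u v → FreeAlgebra.lift K g u = FreeAlgebra.lift K g v) ↔
      ∀ q : FreeAlgebra K (Fin 10) × FreeAlgebra K (Fin 10), A7Rel K q.1 q.2 →
        FreeAlgebra.lift K g q.1 = FreeAlgebra.lift K g q.2 :=
    ⟨fun h q => h q.1 q.2, fun h u v => h (u, v)⟩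
  rw [uncurry]
  simp only [A7Rel, Prod.mk.eta, List.forall_mem_cons, map_mul, map_add, map_zero, map_one,
    FreeAlgebra.lift_ι_apply, List.not_mem_nil, false_imp_iff, implies_true, and_true]
  constructor
  · intro hg
    have idem (i : Fin 10) := hg.vertex_mul i
    have orth (i j : Fin 10) (h : tgt i ≠ src j) := hg.mul_eq_zero i j h
    have pos (i : Fin 10) := (hg.position i).symm
    exact ⟨idem 0, orth 0 1 (by decide), orth 0 2 (by decide), orth 0 3 (by decide),
      orth 1 0 (by decide), idem 1, orth 1 2 (by decide), orth 1 3 (by decide),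
      orth 2 0 (by decide), orth 2 1 (by decide), idem 2, orth 2 3 (by decide),
      orth 3 0 (by decide), orth 3 1 (by decide), orth 3 2 (by decide), idem 3,
      (Fin.sum_univ_four _).symm.trans hg.sum_vertex, pos 4, pos 5, pos 6, pos 7, pos 8, pos 9,
      hg.beta_alpha, hg.gamma_delta, hg.alpha_delta_epsilon, hg.xi_gamma_beta⟩
  · rintro ⟨h00, h01, h02, h03, h10, h11, h12, h13, h20, h21, h22, h23, h30, h31, h32, h33, hsum,
      hα, hβ, hδ, hγ, hε, hξ, hβα, hγδ, hαδε, hξγβ⟩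
    have idem : ∀ i, g (vertex i) * g (vertex i) = g (vertex i) := by
      intro i; fin_cases i <;> assumption
    refine .of_position idem ?_ ?_ ((Fin.sum_univ_four _).trans hsum) hβα hγδ hαδε hξγβ
    · intro i j hij
      fin_cases i <;> fin_cases j <;> first | exact absurd rfl hij | assumption
    · have vertex_pos (i : Fin 4) : g (vertex i) * g (vertex i) * g (vertex i) = g (vertex i) := by
        rw [idem, idem]
      intro i
      fin_cases i
      exacts [vertex_pos 0, vertex_pos 1, vertex_pos 2, vertex_pos 3, hα.symm, hβ.symm, hδ.symm,
        hγ.symm, hε.symm, hξ.symm]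

namespace IsA7Family

variable (hg : IsA7Family g)
include hg

theorem mul_eq_zero_assoc (i j : Fin 10) (h : tgt i ≠ src j) (x : A) : g i * (g j * x) = 0 := by
  rw [← mul_assoc, hg.mul_eq_zero i j h, zero_mul]

theorem loop_mul_eq_zero (i : Fin 4) (j : Fin 10) (h : i ≠ src j) : loop g i * g j = 0 := by
  fin_cases i <;> rw [loop]
  exacts [(mul_assoc _ _ _).trans (by rw [hg.mul_eq_zero 5 j h, mul_zero]),
    (mul_assoc _ _ _).trans (by rw [hg.mul_eq_zero 4 j h, mul_zero]),
    (mul_assoc _ _ _).trans (by rw [hg.mul_eq_zero 6 j h, mul_zero]),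
    (mul_assoc _ _ _).trans (by rw [hg.mul_eq_zero 8 j h, mul_zero])]

theorem mul_loop_eq_zero (i : Fin 4) (j : Fin 10) (h : tgt j ≠ i) : g j * loop g i = 0 := by
  fin_cases i
  exacts [hg.mul_eq_zero_assoc j 4 h _, hg.mul_eq_zero_assoc j 5 h _,
    hg.mul_eq_zero_assoc j 7 h _, hg.mul_eq_zero_assoc j 9 h _]

theorem centralElement_mul (j : Fin 10) : centralElement g * g j = loop g (src j) * g j := by
  rw [centralElement, Finset.sum_mul]
  exact Finset.sum_eq_single _ (fun i _ hi => hg.loop_mul_eq_zero i j hi) (by simp)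

theorem mul_centralElement (j : Fin 10) : g j * centralElement g = g j * loop g (tgt j) := by
  rw [centralElement, Finset.mul_sum]
  exact Finset.sum_eq_single _ (fun i _ hi => hg.mul_loop_eq_zero i j hi.symm) (by simp)

theorem loop_mul_vertex (i : Fin 4) : loop g i * g (vertex i) = loop g i := by
  fin_cases i
  exacts [(mul_assoc _ _ _).trans (congrArg _ (hg.mul_vertex 5)),
    (mul_assoc _ _ _).trans (congrArg _ (hg.mul_vertex 4)),
    (mul_assoc _ _ _).trans (congrArg _ (hg.mul_vertex 6)),
    (mul_assoc _ _ _).trans (congrArg _ (hg.mul_vertex 8))]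

theorem vertex_mul_loop (i : Fin 4) : g (vertex i) * loop g i = loop g i := by
  fin_cases i
  exacts [(mul_assoc _ _ _).symm.trans (congrArg (· * g 5) (hg.vertex_mul 4)),
    (mul_assoc _ _ _).symm.trans (congrArg (· * g 4) (hg.vertex_mul 5)),
    (mul_assoc _ _ _).symm.trans (congrArg (· * g 6) (hg.vertex_mul 7)),
    (mul_assoc _ _ _).symm.trans (congrArg (· * g 8) (hg.vertex_mul 9))]

theorem centralElement_mul_vertex (i : Fin 4) : centralElement g * g (vertex i) = loop g i := by
  rw [hg.centralElement_mul, src_vertex, hg.loop_mul_vertex]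

theorem loop_mul (j : Fin 10) : loop g (src j) * g j = g j * loop g (tgt j) := by
  have vertex_case (i : Fin 4) : loop g i * g (vertex i) = g (vertex i) * loop g i := by
    rw [hg.loop_mul_vertex, hg.vertex_mul_loop]
  fin_cases j
  exacts [vertex_case 0, vertex_case 1, vertex_case 2, vertex_case 3,
    mul_assoc _ _ _, mul_assoc _ _ _,
    (congrArg (· * g 6) hg.beta_alpha).trans (mul_assoc _ _ _),
    (mul_assoc _ _ _).trans (congrArg (g 7 * ·) hg.beta_alpha.symm),
    (congrArg (· * g 8) hg.gamma_delta).trans (mul_assoc _ _ _),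
    (mul_assoc _ _ _).trans (congrArg (g 9 * ·) hg.gamma_delta.symm)]

theorem commute_centralElement (j : Fin 10) : Commute (centralElement g) (g j) := by
  rw [Commute, SemiconjBy, hg.centralElement_mul, hg.loop_mul, hg.mul_centralElement]

theorem loop_pow_three (i : Fin 4) : loop g i ^ 3 = 0 := by
  have βα := hg.beta_alpha
  have γδ := hg.gamma_delta
  have αδε (x : A) : g 4 * g 6 * (g 8 * x) = 0 := by
    rw [← mul_assoc, hg.alpha_delta_epsilon, zero_mul]
  rw [pow_three]
  fin_cases i
  · calc g 4 * g 5 * (g 4 * g 5 * (g 4 * g 5))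
      _ = g 4 * (g 5 * g 4) * (g 5 * g 4) * g 5 := by simp only [mul_assoc]
      _ = g 4 * g 6 * (g 7 * g 6 * g 7 * g 5) := by simp only [βα, mul_assoc]
      _ = 0 := by rw [γδ]; simp only [mul_assoc (g 8), αδε]
  · calc g 5 * g 4 * (g 5 * g 4 * (g 5 * g 4))
      _ = g 5 * (g 4 * g 6 * (g 7 * g 6 * g 7)) := by
        nth_rw 2 3 [βα]; simp only [mul_assoc]
      _ = 0 := by rw [γδ, mul_assoc (g 8), αδε, mul_zero]
  · calc g 7 * g 6 * (g 7 * g 6 * (g 7 * g 6))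
      _ = g 7 * (g 6 * g 7) * (g 6 * (g 7 * g 6)) := by simp only [mul_assoc]
      _ = g 7 * g 5 * (g 4 * g 6 * (g 7 * g 6)) := by rw [← βα]; simp only [mul_assoc]
      _ = 0 := by rw [γδ, αδε, mul_zero]
  · calc g 9 * g 8 * (g 9 * g 8 * (g 9 * g 8))
      _ = g 9 * (g 8 * g 9) * (g 8 * g 9) * g 8 := by simp only [mul_assoc]
      _ = g 9 * g 7 * (g 6 * g 7) * (g 6 * g 8) := by simp only [← γδ, mul_assoc]
      _ = 0 := by
        rw [← βα]
        simp only [mul_assoc, ← mul_assoc (g 4), hg.alpha_delta_epsilon, mul_zero]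

theorem centralElement_pow_three : centralElement g ^ 3 = 0 := by
  have pow_mul_vertex (i : Fin 4) : ∀ n, centralElement g ^ (n + 1) * g (vertex i) =
      loop g i ^ (n + 1) := by
    intro n
    induction n with
    | zero => rw [zero_add, pow_one, pow_one, hg.centralElement_mul_vertex]
    | succ n ih =>
      rw [pow_succ, mul_assoc, hg.centralElement_mul_vertex, ← hg.vertex_mul_loop, ← mul_assoc, ih,
        hg.vertex_mul_loop, ← pow_succ]
  rw [← mul_one (centralElement g ^ 3), ← hg.sum_vertex, Finset.mul_sum]
  exact Finset.sum_eq_zero fun i _ => (pow_mul_vertex i 2).trans (hg.loop_pow_three i)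

theorem vertex_mul_monotonePath (i j : Fin 4) :
    g (vertex i) * monotonePath g i j = monotonePath g i j := by
  have key (a : Fin 10) : g (vertex (src a)) * g a = g a := hg.vertex_mul a
  have key' (a : Fin 10) (x : A) : g (vertex (src a)) * (g a * x) = g a * x := by
    rw [← mul_assoc, key]
  have key'' (a : Fin 10) (x y : A) : g (vertex (src a)) * (g a * x * y) = g a * x * y := by
    rw [mul_assoc, key']
  fin_cases i <;> fin_cases j
  exacts [key 0, key 4, key' 4 _, key'' 4 _ _, key 5, key 1, key 6, key' 6 _, key' 7 _, key 7,
    key 2, key 8, key'' 9 _ _, key' 9 _, key 9, key 3]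

theorem mul_reverse (a : Fin 10) (ha : 4 ≤ a) : g a * g (reverse a) = loop g (src a) := by
  fin_cases a
  iterate 4 exact absurd ha (by decide)
  exacts [rfl, rfl, hg.beta_alpha.symm, rfl, hg.gamma_delta.symm, rfl]

theorem monotonePath_step (a : Fin 10) (ha : 4 ≤ a) (j : Fin 4) :
    g a * monotonePath g (tgt a) j = monotonePath g (src a) j ∨
      monotonePath g (tgt a) j = g (reverse a) * monotonePath g (src a) j := by
  fin_cases a
  iterate 4 exact absurd ha (by decide)
  all_goals
    fin_cases j <;> first
      | exact .inl rfl
      | exact .inr rfl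
      | exact .inl (hg.mul_vertex _)
      | exact .inr (hg.mul_vertex _).symm
      | exact .inl (mul_assoc _ _ _).symm
      | exact .inr (mul_assoc _ _ _)

theorem mul_monotonePath (a : Fin 10) (j : Fin 4) :
    g a * monotonePath g (tgt a) j = monotonePath g (src a) j ∨
      g a * monotonePath g (tgt a) j = centralElement g * monotonePath g (src a) j := by
  rcases lt_or_ge a 4 with ha | ha
  · obtain ⟨i, rfl⟩ : ∃ i, a = vertex i := ⟨⟨a, ha⟩, rfl⟩
    rw [src_vertex, tgt_vertex, hg.vertex_mul_monotonePath]
    exact .inl rfl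
  · refine (hg.monotonePath_step a ha j).imp_right fun step => ?_
    rw [step, ← mul_assoc, hg.mul_reverse a ha, ← hg.centralElement_mul_vertex, mul_assoc,
      hg.vertex_mul_monotonePath]

end IsA7Family

end Family

section Presentation

variable (K : Type) [Field K]

/-- The quotient map that presents `A₇`. -/
def presentation : FreeAlgebra K (Fin 10) →ₐ[K] A7 K := RingQuot.mkAlgHom K (A7Rel K)

theorem presentation_surjective : Function.Surjective (presentation K) :=
  RingQuot.mkAlgHom_surjective K _

/-- The generators of `A₇`. -/
def gen (i : Fin 10) : A7 K := presentation K (FreeAlgebra.ι K i)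

theorem isA7Family_gen : IsA7Family (gen K) := by
  have lift_gen : FreeAlgebra.lift K (gen K) = presentation K :=
    FreeAlgebra.hom_ext (FreeAlgebra.ι_comp_lift _)
  exact (isA7Family_iff K).2 fun u v h => by rw [lift_gen]; exact RingQuot.mkAlgHom_rel K h

theorem adjoin_range_gen : Algebra.adjoin K (Set.range (gen K)) = ⊤ := by
  have range_gen : Set.range (gen K) = presentation K '' Set.range (FreeAlgebra.ι K) :=
    Set.range_comp _ _
  rw [range_gen, ← AlgHom.map_adjoin, FreeAlgebra.adjoin_range_ι, Algebra.map_top,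
    AlgHom.range_eq_top]
  exact presentation_surjective K

section Lift

variable {K} {A : Type*} [Ring A] [Algebra K A] {g : Fin 10 → A}

/-- The representation of `A₇` determined by a family that satisfies the relations. -/
def IsA7Family.lift (hg : IsA7Family g) : A7 K →ₐ[K] A :=
  RingQuot.liftAlgHom K ⟨FreeAlgebra.lift K g, (isA7Family_iff K).1 hg⟩

theorem IsA7Family.lift_gen (hg : IsA7Family g) (i : Fin 10) : hg.lift (gen K i) = g i :=
  (RingQuot.liftAlgHom_mkAlgHom_apply K _ _ _).trans (FreeAlgebra.lift_ι_apply _ _)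

end Lift

variable {K}

theorem A7.induction {p : A7 K → Prop} (gen : ∀ i, p (gen K i))
    (algebraMap : ∀ r, p (algebraMap K _ r)) (add : ∀ x y, p x → p y → p (x + y))
    (mul : ∀ x y, p x → p y → p (x * y)) (x : A7 K) : p x := by
  have hx : x ∈ Algebra.adjoin K (Set.range (PaperSilting.gen K)) := by
    rw [adjoin_range_gen]
    exact Algebra.mem_top
  induction hx using Algebra.adjoin_induction with
  | mem x hx =>
    obtain ⟨i, rfl⟩ := hx
    exact gen i
  | algebraMap r => exact algebraMap r
  | add x y _ _ hx hy => exact add x y hx hy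
  | mul x y _ _ hx hy => exact mul x y hx hy

theorem eq_top_of_one_mem_of_gen_mul_mem {N : Submodule K (A7 K)} (one_mem : 1 ∈ N)
    (gen_mul_mem : ∀ i, ∀ x ∈ N, gen K i * x ∈ N) : N = ⊤ := by
  have mul_mem (x : A7 K) : ∀ y ∈ N, x * y ∈ N := by
    induction x using A7.induction with
    | gen i => exact gen_mul_mem i
    | algebraMap r =>
      intro y hy
      rw [← Algebra.smul_def]
      exact N.smul_mem r hy
    | add x y hx hy =>
      intro w hw
      rw [add_mul]
      exact N.add_mem (hx w hw) (hy w hw)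
    | mul x y hx hy =>
      intro w hw
      rw [mul_assoc]
      exact hx _ (hy w hw)
  exact eq_top_iff.2 fun x _ => mul_one x ▸ mul_mem x 1 one_mem

variable (K)

instance : Module.Finite K (A7 K) := by
  have hg := isA7Family_gen K
  set z := centralElement (gen K)
  let B : Fin 3 × Fin 4 × Fin 4 → A7 K := fun q => z ^ q.1.val * monotonePath (gen K) q.2.1 q.2.2
  let N := Submodule.span K (Set.range B)
  have pow_mul_mem (n : ℕ) (i j : Fin 4) : z ^ n * monotonePath (gen K) i j ∈ N := by
    rcases lt_or_ge n 3 with hn | hn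
    · exact Submodule.subset_span ⟨(⟨n, hn⟩, i, j), rfl⟩
    · rw [pow_eq_zero_of_le hn hg.centralElement_pow_three, zero_mul]
      exact N.zero_mem
  have one_mem : 1 ∈ N := by
    rw [← hg.sum_vertex]
    refine N.sum_mem fun i _ => ?_
    have := pow_mul_mem 0 i i
    rw [pow_zero, one_mul] at this
    fin_cases i <;> exact this
  have gen_mul_mem (a : Fin 10) : ∀ x ∈ N, gen K a * x ∈ N := by
    suffices N ≤ N.comap (LinearMap.mulLeft K (gen K a)) from fun x hx => this hx
    refine Submodule.span_le.2 ?_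
    rintro _ ⟨⟨n, i, j⟩, rfl⟩
    change gen K a * (z ^ n.val * monotonePath (gen K) i j) ∈ N
    rw [← mul_assoc, ← ((hg.commute_centralElement a).pow_left _).eq, mul_assoc]
    by_cases hi : tgt a = i
    · subst hi
      rcases hg.mul_monotonePath a j with h | h
      · rw [h]
        exact pow_mul_mem n _ j
      · rw [h, ← mul_assoc, ← pow_succ]
        exact pow_mul_mem (n + 1) _ j
    · rw [← hg.vertex_mul_monotonePath, ← mul_assoc (gen K a),
        hg.mul_eq_zero a _ (by rwa [src_vertex]), zero_mul, mul_zero]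
      exact N.zero_mem
  exact ⟨Submodule.fg_def.2
    ⟨Set.range B, Set.finite_range B, eq_top_of_one_mem_of_gen_mul_mem one_mem gen_mul_mem⟩⟩

instance : Module.Finite K (A7 K)ᵐᵒᵖ := Module.Finite.equiv (MulOpposite.opLinearEquiv K)

instance : IsArtinianRing (A7 K)ᵐᵒᵖ := IsArtinianRing.of_finite K _

theorem op_centralElement_mem_center :
    MulOpposite.op (centralElement (gen K)) ∈ Set.center (A7 K)ᵐᵒᵖ := by
  have commute (x : A7 K) : Commute (centralElement (gen K)) x := by
    induction x using A7.induction with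
    | gen i => exact (isA7Family_gen K).commute_centralElement i
    | algebraMap r => exact (Algebra.commutes r _).symm
    | add x y hx hy => exact hx.add_right hy
    | mul x y hx hy => exact hx.mul_right hy
  exact Semigroup.mem_center_iff.2 fun x => (commute x.unop).op.symm.eq

theorem op_centralElement_pow_three : MulOpposite.op (centralElement (gen K)) ^ 3 = 0 := by
  rw [← MulOpposite.op_pow, (isA7Family_gen K).centralElement_pow_three, MulOpposite.op_zero]

end Presentation

/-! ### Thin modules over `A₇` -/

section Action

variable (K : Type) [Field K] {X Y : Type} [AddCommGroup X] [Module K X] [Module (A7 K)ᵐᵒᵖ X]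
  [IsScalarTower K (A7 K)ᵐᵒᵖ X] [AddCommGroup Y] [Module K Y] [Module (A7 K)ᵐᵒᵖ Y]
  [IsScalarTower K (A7 K)ᵐᵒᵖ Y]

/-- The action of a generator of `A₇` on a right module. -/
def act (i : Fin 10) : Module.End K Y :=
  Algebra.lsmul K K Y (MulOpposite.op (gen K i))

theorem act_act (i j : Fin 10) (y : Y) :
    act K j (act K i y) = MulOpposite.op (gen K i * gen K j) • y :=
  (mul_smul (MulOpposite.op (gen K j)) (MulOpposite.op (gen K i)) y).symm

theorem act_act_eq_zero (i j : Fin 10) (h : tgt i ≠ src j) (y : Y) : act K j (act K i y) = 0 := by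
  rw [act_act, (isA7Family_gen K).mul_eq_zero i j h, MulOpposite.op_zero, zero_smul]

theorem act_vertex_act (i : Fin 10) (y : Y) : act K i (act K (vertex (src i)) y) = act K i y := by
  rw [act_act, (isA7Family_gen K).vertex_mul]
  rfl

theorem act_act_vertex (i : Fin 10) (y : Y) : act K (vertex (tgt i)) (act K i y) = act K i y := by
  rw [act_act, (isA7Family_gen K).mul_vertex]
  rfl

theorem sum_act_vertex (y : Y) : ∑ i, act K (vertex i) y = y := by
  simp only [act, Algebra.lsmul_coe, ← Finset.sum_smul, ← Finset.op_sum]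
  rw [(isA7Family_gen K).sum_vertex, MulOpposite.op_one, one_smul]

theorem op_centralElement_smul (y : Y) : MulOpposite.op (centralElement (gen K)) • y =
    act K 5 (act K 4 y) + act K 4 (act K 5 y) + act K 6 (act K 7 y) + act K 8 (act K 9 y) := by
  simp only [act_act, centralElement, Fin.sum_univ_four, MulOpposite.op_add, add_smul]
  rfl

/-- A linear map that commutes with the generators of `A₇`, as a homomorphism of modules. -/
def homOfCommute (f : X →ₗ[K] Y) (hf : ∀ i x, f (act K i x) = act K i (f x)) :
    X →ₗ[(A7 K)ᵐᵒᵖ] Y where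
  toFun := f
  map_add' := f.map_add
  map_smul' r x := by
    obtain ⟨r, rfl⟩ := MulOpposite.op_surjective r
    induction r using A7.induction generalizing x with
    | gen i => exact hf i x
    | algebraMap c =>
      rw [← MulOpposite.algebraMap_apply, RingHom.id_apply, algebraMap_smul, algebraMap_smul,
        f.map_smul]
    | add a b ha hb =>
      simp only [RingHom.id_apply, MulOpposite.op_add, add_smul, map_add] at ha hb ⊢
      rw [ha, hb]
    | mul a b ha hb =>
      simp only [RingHom.id_apply, MulOpposite.op_mul, mul_smul] at ha hb ⊢
      rw [hb, ha]

end Action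

/-- The shape of a module over `A₇` with a basis indexed by a set of vertices: `coeff` holds at the
idempotents of these vertices and at the arrows that map a basis vector to a basis vector, all
other arrows being zero. -/
structure ThinDiagram where
  coeff : Fin 10 → Bool
  coeff_src : ∀ i, coeff i → coeff (vertex (src i))
  coeff_tgt : ∀ i, coeff i → coeff (vertex (tgt i))
  coeff_reverse : ∀ i, 4 ≤ i → coeff i → ¬ coeff (reverse i)
  alpha_delta_epsilon : coeff 4 → coeff 6 → ¬ coeff 8
  xi_gamma_beta : coeff 9 → coeff 7 → ¬ coeff 5

/-- The underlying space of the module of shape `D`: the functions on the vertices that are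
supported on `D`. -/
def ThinDiagram.space (D : ThinDiagram) (K : Type) [Field K] : Submodule K (Fin 4 → K) where
  carrier := {y | ∀ i, ¬ D.coeff (vertex i) → y i = 0}
  add_mem' hx hy i hi := by rw [Pi.add_apply, hx i hi, hy i hi, add_zero]
  zero_mem' _ _ := rfl
  smul_mem' c _ hx i hi := by rw [Pi.smul_apply, hx i hi, smul_zero]

/-- The module over `A₇` of shape `D`. -/
def ThinModule (K : Type) [Field K] (D : ThinDiagram) : Type := D.space K

namespace ThinModule

variable {K : Type} [Field K] {D : ThinDiagram}

instance : AddCommGroup (ThinModule K D) := inferInstanceAs (AddCommGroup (D.space K))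

instance : Module K (ThinModule K D) := inferInstanceAs (Module K (D.space K))

instance : Module.Finite K (ThinModule K D) := inferInstanceAs (Module.Finite K (D.space K))

/-- The coordinate at a vertex. -/
def coord (i : Fin 4) : ThinModule K D →ₗ[K] K := LinearMap.proj i ∘ₗ (D.space K).subtype

theorem ext {x y : ThinModule K D} (h : ∀ i, coord i x = coord i y) : x = y :=
  Subtype.ext (funext h)

theorem coord_eq_zero {i : Fin 4} (h : ¬ D.coeff (vertex i)) (x : ThinModule K D) :
    coord i x = 0 := x.2 i h

section Mk

variable {Y : Type} [AddCommGroup Y] [Module K Y]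

/-- The linear map into a thin module with given coordinates on the support. -/
def mk (l : Fin 4 → Y →ₗ[K] K) : Y →ₗ[K] ThinModule K D :=
  (LinearMap.pi fun i => if D.coeff (vertex i) then l i else 0).codRestrict (D.space K)
    fun y i hi => by rw [LinearMap.pi_apply, if_neg hi, LinearMap.zero_apply]

theorem coord_mk (l : Fin 4 → Y →ₗ[K] K) (y : Y) (i : Fin 4) :
    coord i (mk l y : ThinModule K D) = if D.coeff (vertex i) then l i y else 0 := by
  change (if D.coeff (vertex i) then l i else 0 : Y →ₗ[K] K) y = _
  split_ifs <;> rfl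

end Mk

/-- The operator by which a generator of `A₇` acts on a thin module. -/
def genAct (a : Fin 10) : Module.End K (ThinModule K D) :=
  mk fun k => if k = tgt a ∧ D.coeff a then coord (src a) else 0

theorem coord_genAct (a : Fin 10) (y : ThinModule K D) (k : Fin 4) :
    coord k (genAct a y) = if k = tgt a ∧ D.coeff a then coord (src a) y else 0 := by
  rw [genAct, coord_mk]
  split_ifs with hk hka hka
  · rfl
  · rfl
  · exact absurd (hka.1 ▸ D.coeff_tgt a hka.2) hk
  · rfl

theorem coord_genAct_genAct (a b : Fin 10) (y : ThinModule K D) (k : Fin 4) :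
    coord k (genAct b (genAct a y)) =
      if k = tgt b ∧ D.coeff b ∧ src b = tgt a ∧ D.coeff a then coord (src a) y else 0 := by
  rw [coord_genAct, coord_genAct, ← ite_and]
  simp only [and_assoc]

theorem genAct_genAct_eq_zero {a b : Fin 10} (h : ¬ (D.coeff b ∧ src b = tgt a ∧ D.coeff a))
    (y : ThinModule K D) : genAct b (genAct a y) = 0 :=
  ext fun k => by rw [coord_genAct_genAct, if_neg fun hk => h hk.2, map_zero]

theorem genAct_reverse {a : Fin 10} (ha : 4 ≤ a) (y : ThinModule K D) :
    genAct (reverse a) (genAct a y) = 0 :=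
  genAct_genAct_eq_zero (fun h => D.coeff_reverse a ha h.2.2 h.1) y

theorem genAct_genAct_genAct_eq_zero {a b c : Fin 10} (h : D.coeff a → D.coeff b → ¬ D.coeff c)
    (y : ThinModule K D) : genAct c (genAct b (genAct a y)) = 0 := by
  refine ext fun k => ?_
  rw [coord_genAct, coord_genAct_genAct, ← ite_and, if_neg, map_zero]
  rintro ⟨⟨-, hc⟩, -, hb, -, ha⟩
  exact h ha hb hc

theorem isA7Family_op_genAct :
    IsA7Family fun a => MulOpposite.op (genAct a : Module.End K (ThinModule K D)) where
  mul_eq_zero a b h := congrArg MulOpposite.op <|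
    LinearMap.ext (genAct_genAct_eq_zero fun h' => h h'.2.1.symm)
  vertex_mul a := congrArg MulOpposite.op <| LinearMap.ext fun y => ext fun k => by
    refine (coord_genAct_genAct _ _ y k).trans ?_
    rw [src_vertex, tgt_vertex]
    refine Eq.trans ?_ (coord_genAct a y k).symm
    exact if_congr ⟨fun h => ⟨h.1, h.2.1⟩, fun h => ⟨h.1, h.2, rfl, D.coeff_src a h.2⟩⟩ rfl rfl
  mul_vertex a := congrArg MulOpposite.op <| LinearMap.ext fun y => ext fun k => by
    refine (coord_genAct_genAct _ _ y k).trans ?_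
    rw [src_vertex, tgt_vertex]
    refine Eq.trans ?_ (coord_genAct a y k).symm
    exact if_congr ⟨fun h => ⟨h.1, h.2.2.2⟩, fun h => ⟨h.1, D.coeff_tgt a h.2, rfl, h.2⟩⟩ rfl rfl
  sum_vertex := by
    rw [← Finset.op_sum, ← MulOpposite.op_one]
    refine congrArg MulOpposite.op (LinearMap.ext fun y => ext fun k => ?_)
    rw [LinearMap.sum_apply, map_sum, Finset.sum_eq_single k]
    · rw [coord_genAct, tgt_vertex, src_vertex, Module.End.one_apply]
      split_ifs with h
      · rfl
      · exact (coord_eq_zero (fun hk => h ⟨rfl, hk⟩) y).symm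
    · intro i _ hik
      rw [coord_genAct, tgt_vertex, if_neg fun h => hik h.1.symm]
    · exact fun h => absurd (Finset.mem_univ k) h
  beta_alpha := congrArg MulOpposite.op <| LinearMap.ext fun y =>
    (genAct_reverse (a := 5) (by decide) y).trans (genAct_reverse (a := 6) (by decide) y).symm
  gamma_delta := congrArg MulOpposite.op <| LinearMap.ext fun y =>
    (genAct_reverse (a := 7) (by decide) y).trans (genAct_reverse (a := 8) (by decide) y).symm
  alpha_delta_epsilon := congrArg MulOpposite.op <|
    LinearMap.ext (genAct_genAct_genAct_eq_zero D.alpha_delta_epsilon)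
  xi_gamma_beta := congrArg MulOpposite.op <|
    LinearMap.ext (genAct_genAct_genAct_eq_zero D.xi_gamma_beta)

/-- The representation of `A₇` that defines the module of shape `D`. -/
def rep (K : Type) [Field K] (D : ThinDiagram) :
    (A7 K)ᵐᵒᵖ →ₐ[K] Module.End K (ThinModule K D) :=
  (AlgEquiv.opOp K (Module.End K (ThinModule K D))).symm.toAlgHom.comp
    (AlgHom.op isA7Family_op_genAct.lift)

instance : Module (A7 K)ᵐᵒᵖ (ThinModule K D) := Module.compHom _ (rep K D).toRingHom

instance : IsScalarTower K (A7 K)ᵐᵒᵖ (ThinModule K D) :=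
  .of_algebraMap_smul fun c y => LinearMap.congr_fun ((rep K D).commutes c) y

instance : Module.Finite (A7 K)ᵐᵒᵖ (ThinModule K D) :=
  Module.Finite.of_restrictScalars_finite K _ _

theorem act_eq_genAct (a : Fin 10) : (act K a : Module.End K (ThinModule K D)) = genAct a := by
  refine LinearMap.ext fun y => ?_
  exact LinearMap.congr_fun (congrArg MulOpposite.unop (isA7Family_op_genAct.lift_gen a)) y

theorem coord_act (a : Fin 10) (y : ThinModule K D) (k : Fin 4) :
    coord k (act K a y) = if k = tgt a ∧ D.coeff a then coord (src a) y else 0 := by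
  rw [act_eq_genAct, coord_genAct]

theorem op_centralElement_smul_eq_zero (y : ThinModule K D) :
    MulOpposite.op (centralElement (gen K)) • y = 0 := by
  have act_reverse (a : Fin 10) (ha : 4 ≤ a) : act K (reverse a) (act K a y) = 0 := by
    rw [act_eq_genAct, act_eq_genAct, genAct_reverse ha]
  have h₄ : act K 5 (act K 4 y) = 0 := act_reverse 4 (by decide)
  have h₅ : act K 4 (act K 5 y) = 0 := act_reverse 5 (by decide)
  have h₇ : act K 6 (act K 7 y) = 0 := act_reverse 7 (by decide)
  have h₉ : act K 8 (act K 9 y) = 0 := act_reverse 9 (by decide)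
  rw [op_centralElement_smul, h₄, h₅, h₇, h₉, add_zero, add_zero, add_zero]

/-- The basis vector at a vertex; it is zero off the support. -/
def basisVector (K : Type) [Field K] (D : ThinDiagram) (i : Fin 4) : ThinModule K D :=
  mk (fun k => LinearMap.proj k) (Pi.single i 1 : Fin 4 → K)

theorem coord_basisVector (i k : Fin 4) :
    coord k (basisVector K D i) = if k = i ∧ D.coeff (vertex i) then 1 else 0 := by
  rw [basisVector, coord_mk, LinearMap.proj_apply, Pi.single_apply, ← ite_and]
  refine if_congr ⟨?_, ?_⟩ rfl rfl
  · rintro ⟨h, rfl⟩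
    exact ⟨rfl, h⟩
  · rintro ⟨rfl, h⟩
    exact ⟨h, rfl⟩

theorem basisVector_eq_zero {i : Fin 4} (h : ¬ D.coeff (vertex i)) : basisVector K D i = 0 :=
  ext fun k => by rw [coord_basisVector, if_neg fun h' => h h'.2, map_zero]

theorem sum_coord_smul_basisVector (y : ThinModule K D) :
    ∑ i, coord i y • basisVector K D i = y := by
  refine ext fun k => ?_
  rw [map_sum, Finset.sum_eq_single k]
  · rw [map_smul, coord_basisVector, smul_eq_mul]
    split_ifs with h
    · rw [mul_one]
    · rw [mul_zero, coord_eq_zero (fun hk => h ⟨rfl, hk⟩)]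
  · intro i _ hik
    rw [map_smul, coord_basisVector, if_neg fun h => hik h.1.symm, smul_zero]
  · exact fun h => absurd (Finset.mem_univ k) h

theorem act_basisVector (a : Fin 10) : act K a (basisVector K D (src a)) =
    if D.coeff a then basisVector K D (tgt a) else 0 := by
  refine ext fun k => ?_
  by_cases h : D.coeff a
  · simp only [coord_act, coord_basisVector, h, D.coeff_src a h, D.coeff_tgt a h, and_true, if_true]
  · simp only [coord_act, h, and_false, if_false, map_zero, Bool.false_eq_true]

theorem act_vertex (i : Fin 4) (y : ThinModule K D) :
    act K (vertex i) y = coord i y • basisVector K D i := by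
  refine ext fun k => ?_
  rw [coord_act, map_smul, coord_basisVector, src_vertex, tgt_vertex, smul_ite, smul_eq_mul,
    mul_one, smul_zero]

section Families

variable {Y : Type} [AddCommGroup Y] [Module K Y] [Module (A7 K)ᵐᵒᵖ Y]
  [IsScalarTower K (A7 K)ᵐᵒᵖ Y]

variable (K) in
/-- The vectors `u i`, for `i` in the support of `D`, are mapped to each other by the generators as
the basis vectors of the module of shape `D` are. -/
def IsVectorFamily (D : ThinDiagram) (u : Fin 4 → Y) : Prop :=
  ∀ a, act K a (u (src a)) = if D.coeff a then u (tgt a) else 0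

/-- The functionals `l i`, for `i` in the support of `D`, are mapped to each other by the transposes
of the generators as the coordinates on the module of shape `D` are. -/
def IsCovectorFamily (D : ThinDiagram) (l : Fin 4 → Y →ₗ[K] K) : Prop :=
  ∀ a y, l (tgt a) (act K a y) = if D.coeff a then l (src a) y else 0

theorem IsVectorFamily.act_vertex {u : Fin 4 → Y} (hu : IsVectorFamily K D u) {i : Fin 4}
    (hi : D.coeff (vertex i)) : act K (vertex i) (u i) = u i := by
  have := hu (vertex i)
  rwa [src_vertex, tgt_vertex, if_pos hi] at this

theorem IsCovectorFamily.apply_act_vertex {l : Fin 4 → Y →ₗ[K] K} (hl : IsCovectorFamily D l)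
    {i : Fin 4} (hi : D.coeff (vertex i)) (y : Y) : l i (act K (vertex i) y) = l i y := by
  have := hl (vertex i) y
  rwa [src_vertex, tgt_vertex, if_pos hi] at this

theorem IsVectorFamily.act_eq_zero {u : Fin 4 → Y} (hu : IsVectorFamily K D u) {i : Fin 4}
    (hi : D.coeff (vertex i)) {a : Fin 10} (ha : src a ≠ i) : act K a (u i) = 0 := by
  rw [← hu.act_vertex hi, act_act_eq_zero K _ _ (by rw [tgt_vertex]; exact ha.symm)]

theorem IsCovectorFamily.apply_act_eq_zero {l : Fin 4 → Y →ₗ[K] K} (hl : IsCovectorFamily D l)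
    {i : Fin 4} (hi : D.coeff (vertex i)) {a : Fin 10} (ha : tgt a ≠ i) (y : Y) :
    l i (act K a y) = 0 := by
  rw [← hl.apply_act_vertex hi, act_act_eq_zero K _ _ (by rwa [src_vertex]), map_zero]

/-- The homomorphism from a thin module that maps the basis vectors to given vectors. -/
def ofVectors {u : Fin 4 → Y} (hu : IsVectorFamily K D u) : ThinModule K D →ₗ[(A7 K)ᵐᵒᵖ] Y :=
  homOfCommute K (∑ i, (coord i).smulRight (u i)) fun a y => by
    simp only [LinearMap.sum_apply, LinearMap.smulRight_apply, map_sum, map_smul]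
    rw [Finset.sum_eq_single (tgt a), Finset.sum_eq_single (src a)]
    · rw [coord_act, hu a]
      by_cases h : D.coeff a <;> simp [h]
    · intro i _ hi
      by_cases h : D.coeff (vertex i)
      · rw [hu.act_eq_zero h hi.symm, smul_zero]
      · rw [coord_eq_zero h, zero_smul]
    · exact fun h => absurd (Finset.mem_univ _) h
    · intro i _ hi
      rw [coord_act, if_neg fun h => hi h.1, zero_smul]
    · exact fun h => absurd (Finset.mem_univ _) h

theorem ofVectors_apply {u : Fin 4 → Y} (hu : IsVectorFamily K D u) (y : ThinModule K D) :
    ofVectors hu y = ∑ i, coord i y • u i := by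
  change (∑ i, (coord i).smulRight (u i)) y = _
  simp only [LinearMap.sum_apply, LinearMap.smulRight_apply]

/-- The homomorphism to a thin module that has given coordinates. -/
def ofCovectors {l : Fin 4 → Y →ₗ[K] K} (hl : IsCovectorFamily D l) :
    Y →ₗ[(A7 K)ᵐᵒᵖ] ThinModule K D :=
  homOfCommute K (mk l) fun a y => ext fun k => by
    rw [coord_mk, coord_act, coord_mk]
    by_cases hk : k = tgt a
    · subst hk
      rw [hl]
      by_cases h : D.coeff a
      · simp [h, D.coeff_src a h, D.coeff_tgt a h]
      · simp [h]
    · rw [if_neg (c := k = tgt a ∧ D.coeff a) fun h => hk h.1]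
      split_ifs with h
      exacts [hl.apply_act_eq_zero h (Ne.symm hk) y, rfl]

theorem coord_ofCovectors {l : Fin 4 → Y →ₗ[K] K} (hl : IsCovectorFamily D l) (y : Y) (k : Fin 4) :
    coord k (ofCovectors hl y) = if D.coeff (vertex k) then l k y else 0 := coord_mk l y k

theorem isSummand_of_families {u : Fin 4 → Y} {l : Fin 4 → Y →ₗ[K] K} (hu : IsVectorFamily K D u)
    (hl : IsCovectorFamily D l) (hlu : ∀ i, D.coeff (vertex i) → l i (u i) = 1) :
    IsSummand (A7 K)ᵐᵒᵖ (ThinModule K D) Y := by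
  refine ⟨ofVectors hu, ofCovectors hl, fun y => ext fun k => ?_⟩
  rw [coord_ofCovectors, ofVectors_apply, map_sum]
  split_ifs with hk
  · rw [Finset.sum_eq_single k]
    · rw [map_smul, hlu k hk, smul_eq_mul, mul_one]
    · intro i _ hi
      by_cases h : D.coeff (vertex i)
      · rw [map_smul, ← hu.act_vertex h, hl.apply_act_eq_zero hk (by rwa [tgt_vertex]), smul_zero]
      · rw [coord_eq_zero h, zero_smul, map_zero]
    · exact fun h => absurd (Finset.mem_univ _) h
  · exact (coord_eq_zero hk y).symm

end Families

/-- The condition on the shapes `D` and `D'` for the existence of a nonzero homomorphism: the basis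
vectors of `D` at the vertices in `χ` can be mapped to those of `D'`, and all others to zero. -/
def HasHom (D D' : ThinDiagram) : Prop :=
  ∃ χ : Fin 4 → Bool, (∃ i, χ i ∧ D.coeff (vertex i)) ∧
    ∀ a, (χ (tgt a) && D.coeff a) = (D'.coeff a && χ (src a))

instance : DecidableRel HasHom := fun D D' => by unfold HasHom; infer_instance

variable {D' : ThinDiagram}

theorem exists_ne_zero_of_hasHom (h : HasHom D D') :
    ∃ f : ThinModule K D →ₗ[(A7 K)ᵐᵒᵖ] ThinModule K D', f ≠ 0 := by
  obtain ⟨χ, ⟨i, hi, hDi⟩, hχ⟩ := h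
  have family : IsVectorFamily K D fun k => if χ k then basisVector K D' k else 0 := by
    intro a
    rw [apply_ite (act K a), act_basisVector, map_zero, ← ite_and, ← ite_and]
    refine if_congr ?_ rfl rfl
    rw [← Bool.and_eq_true, ← Bool.and_eq_true, Bool.and_comm, ← hχ, Bool.and_comm]
  have hD'i : D'.coeff (vertex i) := by
    have := hχ (vertex i)
    rw [src_vertex, tgt_vertex, hi, hDi] at this
    exact (Bool.and_eq_true_iff.1 this.symm).1
  refine ⟨ofVectors family, fun h => one_ne_zero (α := K) ?_⟩
  have := congrArg (coord i) (LinearMap.congr_fun h (basisVector K D i))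
  rw [ofVectors_apply, map_sum, Finset.sum_eq_single i] at this
  · simpa only [coord_basisVector, hi, hDi, hD'i, and_self, if_true, one_smul,
      LinearMap.zero_apply, map_zero] using this
  · intro k _ hk
    rw [coord_basisVector, if_neg fun h => hk h.1, zero_smul, map_zero]
  · exact fun h => absurd (Finset.mem_univ _) h

theorem hasHom_of_ne_zero {f : ThinModule K D →ₗ[(A7 K)ᵐᵒᵖ] ThinModule K D'} (hf : f ≠ 0) :
    HasHom D D' := by
  classical
  let c : Fin 4 → K := fun i => coord i (f (basisVector K D i))
  have map_act (a : Fin 10) (y : ThinModule K D) : f (act K a y) = act K a (f y) := f.map_smul _ y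
  have map_basisVector (i : Fin 4) : f (basisVector K D i) = c i • basisVector K D' i := by
    by_cases hi : D.coeff (vertex i)
    · have := act_basisVector (K := K) (D := D) (vertex i)
      rw [src_vertex, tgt_vertex, if_pos hi] at this
      rw [← act_vertex, ← map_act, this]
    · simp only [c, basisVector_eq_zero hi, map_zero, zero_smul]
  refine ⟨fun i => decide (c i ≠ 0), ?_, fun a => ?_⟩
  · by_contra! h
    refine hf (LinearMap.ext fun y => ?_)
    rw [← sum_coord_smul_basisVector y, map_sum, LinearMap.zero_apply]
    refine Finset.sum_eq_zero fun i _ => ?_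
    rw [f.map_smul_of_tower, map_basisVector]
    by_cases hi : D.coeff (vertex i)
    · have hci : c i = 0 := by
        by_contra hci
        exact h i (decide_eq_true hci) hi
      rw [hci, zero_smul, smul_zero]
    · rw [coord_eq_zero hi, zero_smul]
  · have := congrArg (coord (tgt a)) (map_act a (basisVector K D (src a)))
    rw [act_basisVector, map_basisVector (src a), map_smul, map_smul, act_basisVector] at this
    have c_src_tgt : (if D.coeff a then c (tgt a) else 0) =
        if D'.coeff a then c (src a) else 0 := by
      rw [apply_ite f, apply_ite (coord (tgt a)), map_zero, map_zero] at this
      refine this.trans ?_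
      by_cases ha : D'.coeff a
      · simp [ha, coord_basisVector, D'.coeff_tgt a ha]
      · simp [ha]
    cases ha : D.coeff a <;> cases ha' : D'.coeff a <;> simp_all

end ThinModule

/-! ### Decomposition of modules killed by the central element -/

/-- The strings with last vertex `n` over the double of the linear quiver on `ℕ`, with all
two-cycles being zero: a string starts at a vertex and moves upwards, with a sign `true` for each
forward arrow `i → i + 1` and a sign `false` for each backward arrow `i + 1 → i`. -/
inductive StringWord : ℕ → Type
  | start (n : ℕ) : StringWord n
  | cons {n : ℕ} (b : Bool) (w : StringWord n) : StringWord (n + 1)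

namespace StringWord

variable {n : ℕ}

/-- The vertices of a string. -/
def support : ∀ {n : ℕ}, StringWord n → ℕ → Bool
  | _, start n, i => i = n
  | n + 1, cons _ w, i => i = n + 1 || w.support i

/-- The sign of the arrow of a string between the vertices `i` and `i + 1`, if there is one. -/
def step : ∀ {n : ℕ}, StringWord n → ℕ → Option Bool
  | _, start _, _ => none
  | n + 1, cons b w, i => if i = n then some b else w.step i

/-- The string with all arrows reversed. -/
def flip : ∀ {n : ℕ}, StringWord n → StringWord n
  | _, start n => start n
  | _, cons b w => cons (!b) w.flip

theorem support_self (w : StringWord n) : w.support n := by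
  cases w <;> simp [support]

theorem step_eq_none (w : StringWord n) {i : ℕ} (hi : n ≤ i) : w.step i = none := by
  induction w with
  | start => rfl
  | cons b w ih => rw [step, if_neg (by omega), ih (by omega)]

theorem support_flip (w : StringWord n) : w.flip.support = w.support := by
  induction w with
  | start => rfl
  | cons b w ih => funext i; rw [flip, support, support, ih]

theorem step_flip (w : StringWord n) (i : ℕ) : w.flip.step i = (w.step i).map not := by
  induction w with
  | start => rfl
  | cons b w ih => rw [flip, step, step, ih]; split_ifs <;> rfl

theorem support_of_step (w : StringWord n) {i : ℕ} {b : Bool} (h : w.step i = some b) :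
    w.support i ∧ w.support (i + 1) := by
  induction w with
  | start => cases h
  | @cons n c w ih =>
    rw [step] at h
    split_ifs at h with hi
    · subst hi
      simp [support, w.support_self]
    · simp [support, ih h]

theorem apply_eq_of_support {α : Type*} (w : StringWord n) {f : ℕ → α}
    (h : ∀ i b, w.step i = some b → f i = f (i + 1)) {i : ℕ} (hi : w.support i) : f i = f n := by
  induction w with
  | start => rw [of_decide_eq_true hi]
  | @cons n b w ih =>
    rcases Bool.or_eq_true_iff.1 hi with hi | hi
    · rw [of_decide_eq_true hi]
    · refine (ih (fun j c hj => h j c ?_) hi).trans (h n b (if_pos rfl))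
      rw [step, if_neg, hj]
      rintro rfl
      rw [w.step_eq_none le_rfl] at hj
      cases hj

end StringWord

section StringRep

variable {K : Type} [Field K] {Y : Type} [AddCommGroup Y] [Module K Y]

/-- A representation on `Y` of the double of the linear quiver on `ℕ` that annihilates all
two-cycles: `E i` is the projection to the vertex `i`, while `F i` and `G i` are the actions of the
arrows `i → i + 1` and `i + 1 → i`. -/
structure IsStringRep (E F G : ℕ → Module.End K Y) : Prop where
  E_E : ∀ i y, E i (E i y) = E i y
  F_E : ∀ i y, F i (E i y) = F i y
  E_F : ∀ i y, E (i + 1) (F i y) = F i y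
  G_E : ∀ i y, G i (E (i + 1) y) = G i y
  E_G : ∀ i y, E i (G i y) = G i y
  G_F : ∀ i y, G i (F i y) = 0
  F_G : ∀ i y, F i (G i y) = 0

namespace IsStringRep

variable {E F G : ℕ → Module.End K Y} {n : ℕ}

theorem dual (h : IsStringRep E F G) : IsStringRep (fun i => (E i).dualMap)
    (fun i => (G i).dualMap) (fun i => (F i).dualMap) where
  E_E i v := LinearMap.ext fun y => congrArg v (h.E_E i y)
  F_E i v := LinearMap.ext fun y => congrArg v (h.E_G i y)
  E_F i v := LinearMap.ext fun y => congrArg v (h.G_E i y)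
  G_E i v := LinearMap.ext fun y => congrArg v (h.E_F i y)
  E_G i v := LinearMap.ext fun y => congrArg v (h.F_E i y)
  G_F i v := LinearMap.ext fun y => (congrArg v (h.G_F i y)).trans (map_zero v)
  F_G i v := LinearMap.ext fun y => (congrArg v (h.F_G i y)).trans (map_zero v)

end IsStringRep

variable (E F G : ℕ → Module.End K Y) {n : ℕ}

/-- The subspace at the last vertex of a string that corresponds, under the arrows of the string, to
the subspace `U i` at its starting vertex `i`. -/
def transport (U : ℕ → Submodule K Y) : ∀ {n : ℕ}, StringWord n → Submodule K Y
  | _, .start n => U n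
  | n + 1, .cons true w => (transport U w).map (F n)
  | n + 1, .cons false w => (transport U w).comap (G n) ⊓ LinearMap.range (E (n + 1))

/-- The smaller of the two subspaces in the functorial filtration that belong to a string. -/
def lowerFilter : StringWord n → Submodule K Y :=
  transport E F G fun
    | 0 => ⊥
    | n + 1 => LinearMap.range (F n)

/-- The larger of the two subspaces in the functorial filtration that belong to a string. -/
def upperFilter : StringWord n → Submodule K Y :=
  transport E F G fun
    | 0 => LinearMap.range (E 0)
    | n + 1 => LinearMap.ker (G n) ⊓ LinearMap.range (E (n + 1))

/-- The vectors `u i`, for `i` in the support of the string `w`, form a basis of a string module of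
shape `w`, except that nothing is required of the arrows that join the vertices `n` and `n + 1`. -/
structure IsStringFamily (w : StringWord n) (u : ℕ → Y) : Prop where
  E_apply : ∀ i, E i (u i) = if w.support i then u i else 0
  F_apply : ∀ i ≠ n, F i (u i) = if w.step i = some true then u (i + 1) else 0
  G_apply : ∀ i ≠ n, G i (u (i + 1)) = if w.step i = some false then u i else 0

variable {E F G} {w : StringWord n}

theorem IsStringFamily.dual_apply_eq {u : ℕ → Y} {l : ℕ → Module.Dual K Y}
    (hu : IsStringFamily E F G w u)
    (hl : IsStringFamily (fun i => (E i).dualMap) (fun i => (G i).dualMap)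
      (fun i => (F i).dualMap) w.flip l) {i : ℕ} (hi : w.support i) : l i (u i) = l n (u n) := by
  refine w.apply_eq_of_support (f := fun i => l i (u i)) (fun i b hb => ?_) hi
  have hi : i ≠ n := by
    rintro rfl
    rw [w.step_eq_none le_rfl] at hb
    cases hb
  have hb' : w.flip.step i = some (!b) := by rw [w.step_flip, hb, Option.map_some]
  cases b with
  | false =>
    have hG : G i (u (i + 1)) = u i := (hu.G_apply i hi).trans (if_pos hb)
    have hG' : l i ∘ₗ G i = l (i + 1) := (hl.F_apply i hi).trans (if_pos hb')
    rw [← hG, ← hG', LinearMap.comp_apply]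
  | true =>
    have hF : F i (u i) = u (i + 1) := (hu.F_apply i hi).trans (if_pos hb)
    have hF' : l (i + 1) ∘ₗ F i = l i := (hl.G_apply i hi).trans (if_pos hb')
    rw [← hF, ← hF', LinearMap.comp_apply]

namespace IsStringRep

theorem apply_of_mem_range (h : IsStringRep E F G) {y : Y} (hy : y ∈ LinearMap.range (E n)) :
    E n y = y := by
  obtain ⟨x, rfl⟩ := hy
  exact h.E_E n x

theorem transport_le_range (h : IsStringRep E F G) {U : ℕ → Submodule K Y}
    (hU : ∀ i, U i ≤ LinearMap.range (E i)) (w : StringWord n) :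
    transport E F G U w ≤ LinearMap.range (E n) :=
  match w with
  | .start n => hU n
  | .cons true w => by
    rintro _ ⟨x, -, rfl⟩
    exact ⟨_, h.E_F _ x⟩
  | .cons false w => inf_le_right

theorem lowerFilter_le_range (h : IsStringRep E F G) (w : StringWord n) :
    lowerFilter E F G w ≤ LinearMap.range (E n) :=
  h.transport_le_range (fun
    | 0 => bot_le
    | i + 1 => by
      rintro _ ⟨x, rfl⟩
      exact ⟨_, h.E_F i x⟩) w

theorem upperFilter_le_range (h : IsStringRep E F G) (w : StringWord n) :
    upperFilter E F G w ≤ LinearMap.range (E n) :=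
  h.transport_le_range (fun
    | 0 => le_rfl
    | _ + 1 => inf_le_right) w

-- The filtration refines `0 ≤ range F ≤ ker G ≤ range E` at each vertex, by pushing the filtration
-- at the previous vertex forward along `F` and pulling it back along `G`.
theorem filter_le_of_forall (h : IsStringRep E F G) (n : ℕ)
    (Φ : Submodule K Y → Submodule K Y)
    (hΦ : ∀ w : StringWord n, Φ (upperFilter E F G w) ≤ Φ (lowerFilter E F G w)) :
    Φ (LinearMap.range (E n)) ≤ Φ ⊥ := by
  induction n generalizing Φ with
  | zero => exact hΦ (.start 0)
  | succ n ih =>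
    have comap_range : (LinearMap.range (E n)).comap (G n) ⊓ LinearMap.range (E (n + 1)) =
        LinearMap.range (E (n + 1)) := inf_eq_right.2 fun y _ => ⟨_, h.E_G n y⟩
    have map_range : (LinearMap.range (E n)).map (F n) = LinearMap.range (F n) := by
      refine le_antisymm LinearMap.map_le_range ?_
      rintro _ ⟨x, rfl⟩
      exact ⟨E n x, ⟨x, rfl⟩, h.F_E n x⟩
    have above_ker := ih (fun U => Φ (U.comap (G n) ⊓ LinearMap.range (E (n + 1))))
      fun w => hΦ (.cons false w)
    have below_range := ih (fun U => Φ (U.map (F n))) fun w => hΦ (.cons true w)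
    simp only [comap_range, map_range, Submodule.map_bot] at above_ker below_range
    exact above_ker.trans ((hΦ (.start (n + 1))).trans below_range)

theorem exists_not_upperFilter_le (h : IsStringRep E F G) (hn : E n ≠ 0) :
    ∃ w : StringWord n, ¬ upperFilter E F G w ≤ lowerFilter E F G w := by
  by_contra! hle
  exact hn (LinearMap.range_eq_bot.1 (le_bot_iff.1 (h.filter_le_of_forall n id hle)))

theorem isStringFamily_start {v : Y} (hE : E n v = v) (hG : ∀ i, i + 1 = n → G i v = 0) :
    IsStringFamily E F G (.start n) (Pi.single n v) where
  E_apply i := by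
    rcases eq_or_ne i n with rfl | hi
    · simp [StringWord.support, hE]
    · simp [hi]
  F_apply i hi := by simp [hi, StringWord.step]
  G_apply i _ := by
    rcases eq_or_ne (i + 1) n with rfl | hi
    · simp [StringWord.step, hG i rfl]
    · simp [StringWord.step, hi]

theorem isStringFamily_cons {u : ℕ → Y} (hu : IsStringFamily E F G w u) {b : Bool} {v : Y}
    (hE : E (n + 1) v = v) (hF : F n (u n) = if b then v else 0)
    (hG : G n v = if b then 0 else u n) :
    IsStringFamily E F G (.cons b w) (Function.update u (n + 1) v) where
  E_apply i := by
    rcases eq_or_ne i (n + 1) with rfl | hi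
    · simp [StringWord.support, hE]
    · simp [StringWord.support, hi, hu.E_apply]
  F_apply i hi := by
    rw [Function.update_of_ne hi, StringWord.step]
    rcases eq_or_ne i n with rfl | hin
    · simpa using hF
    · rw [if_neg hin, hu.F_apply i hin, Function.update_of_ne fun h => hin (Nat.succ_injective h)]
  G_apply i hi := by
    rw [Function.update_of_ne hi, StringWord.step]
    rcases eq_or_ne i n with rfl | hin
    · cases b <;> simpa using hG
    · rw [if_neg hin, Function.update_of_ne fun h => hin (Nat.succ_injective h), hu.G_apply i hin]

theorem exists_isStringFamily (h : IsStringRep E F G) {v : Y} (hv : v ∈ upperFilter E F G w) :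
    ∃ u, u n = v ∧ IsStringFamily E F G w u := by
  induction w generalizing v with
  | start n =>
    have hE := h.apply_of_mem_range (h.upperFilter_le_range _ hv)
    refine ⟨_, Pi.single_eq_same (M := fun _ => Y) n v, isStringFamily_start hE ?_⟩
    rintro i rfl
    exact hv.1
  | @cons n b w ih =>
    have hE := h.apply_of_mem_range (h.upperFilter_le_range _ hv)
    obtain ⟨v', hv', hF, hG⟩ : ∃ v' ∈ upperFilter E F G w,
        (F n v' = if b then v else 0) ∧ G n v = if b then 0 else v' := by
      cases b with
      | false => exact ⟨G n v, hv.1, h.F_G n v, rfl⟩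
      | true =>
        obtain ⟨v', hv', rfl⟩ := hv
        exact ⟨v', hv', rfl, h.G_F n v'⟩
    obtain ⟨u, rfl, hu⟩ := ih hv'
    exact ⟨_, Function.update_self .., isStringFamily_cons hu hE hF hG⟩

theorem exists_comp_eq (h : IsStringRep E F G) {U : Submodule K Y}
    (hU : U ≤ LinearMap.range (E n)) {v : Module.Dual K Y} (hE : v ∘ₗ E (n + 1) = v)
    (hv : ∀ y ∈ U.comap (G n) ⊓ LinearMap.range (E (n + 1)), v y = 0) :
    ∃ v' : Module.Dual K Y, v' ∘ₗ E n = v' ∧ (∀ y ∈ U, v' y = 0) ∧ v' ∘ₗ G n = v := by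
  let q : Y →ₗ[K] Y ⧸ U := U.mkQ ∘ₗ G n
  have hvq : v ∈ LinearMap.range q.dualMap := by
    rw [LinearMap.range_dualMap_eq_dualAnnihilator_ker, Submodule.mem_dualAnnihilator]
    intro y hy
    rw [← hE]
    refine hv _ ⟨?_, ⟨y, rfl⟩⟩
    rw [SetLike.mem_coe, Submodule.mem_comap, h.G_E]
    exact (Submodule.Quotient.mk_eq_zero U).1 hy
  obtain ⟨μ, rfl⟩ := hvq
  refine ⟨μ ∘ₗ U.mkQ ∘ₗ E n, LinearMap.ext fun y => ?_, fun y hy => ?_, LinearMap.ext fun y => ?_⟩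
  · exact congrArg (μ ∘ₗ U.mkQ) (h.E_E n y)
  · change μ (U.mkQ (E n y)) = 0
    rw [h.apply_of_mem_range (hU hy), Submodule.mkQ_apply, (Submodule.Quotient.mk_eq_zero U).2 hy,
      map_zero]
  · exact congrArg (μ ∘ₗ U.mkQ) (h.E_G n y)

theorem mem_upperFilter_dual (h : IsStringRep E F G) {v : Module.Dual K Y} (hE : v ∘ₗ E n = v)
    (hv : ∀ y ∈ lowerFilter E F G w, v y = 0) :
    v ∈ upperFilter (fun i => (E i).dualMap) (fun i => (G i).dualMap) (fun i => (F i).dualMap)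
      w.flip := by
  induction w generalizing v with
  | start n =>
    cases n with
    | zero => exact ⟨v, hE⟩
    | succ n => exact ⟨LinearMap.ext fun y => hv _ ⟨y, rfl⟩, v, hE⟩
  | @cons n b w ih =>
    cases b with
    | false =>
      obtain ⟨v', hE', hv', rfl⟩ := h.exists_comp_eq (h.lowerFilter_le_range w) hE hv
      exact ⟨v', ih hE' hv', rfl⟩
    | true =>
      refine ⟨ih (v := v ∘ₗ F n) ?_ fun y hy => hv _ ⟨y, hy, rfl⟩, v, hE⟩
      exact LinearMap.ext fun y => congrArg v (h.F_E n y)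

theorem exists_dual_families (h : IsStringRep E F G) (hn : E n ≠ 0) :
    ∃ (w : StringWord n) (u : ℕ → Y) (l : ℕ → Module.Dual K Y), IsStringFamily E F G w u ∧
      IsStringFamily (fun i => (E i).dualMap) (fun i => (G i).dualMap) (fun i => (F i).dualMap)
        w.flip l ∧ ∀ i, w.support i → l i (u i) = 1 := by
  obtain ⟨w, hw⟩ := h.exists_not_upperFilter_le hn
  obtain ⟨v, hv, hv'⟩ := SetLike.not_le_iff_exists.1 hw
  have hvE := h.apply_of_mem_range (h.upperFilter_le_range w hv)
  obtain ⟨f, hfv, hf⟩ := Submodule.exists_le_ker_of_notMem hv'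
  let g : Module.Dual K Y := (f v)⁻¹ • f ∘ₗ E n
  have hgE : g ∘ₗ E n = g := LinearMap.ext fun y => congrArg ((f v)⁻¹ • f) (h.E_E n y)
  have hg (y) (hy : y ∈ lowerFilter E F G w) : g y = 0 := by
    change (f v)⁻¹ • f (E n y) = 0
    rw [h.apply_of_mem_range (h.lowerFilter_le_range w hy), LinearMap.mem_ker.1 (hf hy), smul_zero]
  have hgv : g v = 1 := by
    change (f v)⁻¹ • f (E n v) = 1
    rw [hvE, smul_eq_mul, inv_mul_cancel₀ hfv]
  obtain ⟨u, rfl, hu⟩ := h.exists_isStringFamily hv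
  obtain ⟨l, hln, hl⟩ := h.dual.exists_isStringFamily (h.mem_upperFilter_dual hgE hg)
  exact ⟨w, u, l, hu, hl, fun i hi => (hu.dual_apply_eq hl hi).trans (hln ▸ hgv)⟩

end IsStringRep

end StringRep

/-! ### String modules over `A₇` -/

theorem IsStringFamily.F_apply_of_E_eq_zero {K : Type} [Field K] {Y : Type} [AddCommGroup Y]
    [Module K Y] {E F G : ℕ → Module.End K Y} {n : ℕ} {w : StringWord n} {u : ℕ → Y}
    (hu : IsStringFamily E F G w u) (h : IsStringRep E F G) (hE : E (n + 1) = 0) (i : ℕ) :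
    F i (u i) = if w.step i = some true then u (i + 1) else 0 := by
  rcases eq_or_ne i n with rfl | hi
  · rw [w.step_eq_none le_rfl, if_neg (Option.some_ne_none _).symm, ← h.E_F, hE,
      LinearMap.zero_apply]
  · exact hu.F_apply i hi

theorem IsStringFamily.G_apply_of_E_eq_zero {K : Type} [Field K] {Y : Type} [AddCommGroup Y]
    [Module K Y] {E F G : ℕ → Module.End K Y} {n : ℕ} {w : StringWord n} {u : ℕ → Y}
    (hu : IsStringFamily E F G w u) (h : IsStringRep E F G) (hE : E (n + 1) = 0) (i : ℕ) :
    G i (u (i + 1)) = if w.step i = some false then u i else 0 := by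
  rcases eq_or_ne i n with rfl | hi
  · rw [w.step_eq_none le_rfl, if_neg (Option.some_ne_none _).symm, ← h.G_E, hE,
      LinearMap.zero_apply, map_zero]
  · exact hu.G_apply i hi

namespace StringWord

variable {n : ℕ}

/-- A string that does not contain the path `αδε` or the path `ξγβ`. -/
def IsAdmissible (w : StringWord n) : Prop :=
  ∀ b, w.step 0 = some b → w.step 1 = some b → w.step 2 ≠ some b

instance : DecidablePred (IsAdmissible (n := n)) := fun w => by
  unfold IsAdmissible
  infer_instance

/-- The shape of the module over `A₇` that belongs to a string. -/
def diagram (w : StringWord n) (hw : w.IsAdmissible) : ThinDiagram where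
  coeff := ![w.support 0, w.support 1, w.support 2, w.support 3,
    w.step 0 = some true, w.step 0 = some false, w.step 1 = some true, w.step 1 = some false,
    w.step 2 = some true, w.step 2 = some false]
  coeff_src i hi := by
    fin_cases i <;> first
      | exact hi
      | exact (w.support_of_step (of_decide_eq_true hi)).1
      | exact (w.support_of_step (of_decide_eq_true hi)).2
  coeff_tgt i hi := by
    fin_cases i <;> first
      | exact hi
      | exact (w.support_of_step (of_decide_eq_true hi)).1
      | exact (w.support_of_step (of_decide_eq_true hi)).2
  coeff_reverse i h hi hi' := by
    fin_cases i <;> first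
      | exact absurd h (by decide)
      | exact absurd ((of_decide_eq_true hi).symm.trans (of_decide_eq_true hi')) (by decide)
  alpha_delta_epsilon h₄ h₆ h₈ :=
    hw true (of_decide_eq_true h₄) (of_decide_eq_true h₆) (of_decide_eq_true h₈)
  xi_gamma_beta h₉ h₇ h₅ :=
    hw false (of_decide_eq_true h₅) (of_decide_eq_true h₇) (of_decide_eq_true h₉)

/-- All strings with a given last vertex. -/
def all : ∀ n, List (StringWord n)
  | 0 => [start 0]
  | n + 1 => start (n + 1) :: (all n).flatMap fun w => [cons true w, cons false w]

theorem mem_all (w : StringWord n) : w ∈ all n := by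
  induction w with
  | start n => cases n <;> simp [all]
  | cons b w ih => cases b <;> simp [all, ih]

end StringWord

/-- The shapes of the string modules over `A₇`. -/
def strings : List ThinDiagram :=
  (List.range 4).flatMap fun n =>
    (StringWord.all n).filterMap fun w => if hw : w.IsAdmissible then some (w.diagram hw) else none

theorem StringWord.diagram_mem_strings {n : ℕ} (hn : n < 4) (w : StringWord n)
    (hw : w.IsAdmissible) : w.diagram hw ∈ strings :=
  List.mem_flatMap.2
    ⟨n, List.mem_range.2 hn, List.mem_filterMap.2 ⟨w, w.mem_all, dif_pos hw⟩⟩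

section StringSummand

variable (K : Type) [Field K] {Y : Type} [AddCommGroup Y] [Module K Y] [Module (A7 K)ᵐᵒᵖ Y]
  [IsScalarTower K (A7 K)ᵐᵒᵖ Y]

/-- The actions of the idempotents of `A₇`, extended by zero. -/
def vertexAct : ℕ → Module.End K Y
  | 0 => act K 0
  | 1 => act K 1
  | 2 => act K 2
  | 3 => act K 3
  | _ => 0

/-- The actions of the arrows `α`, `δ`, `ε` of `A₇`, extended by zero. -/
def forwardAct : ℕ → Module.End K Y
  | 0 => act K 4
  | 1 => act K 6
  | 2 => act K 8
  | _ => 0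

/-- The actions of the arrows `β`, `γ`, `ξ` of `A₇`, extended by zero. -/
def backwardAct : ℕ → Module.End K Y
  | 0 => act K 5
  | 1 => act K 7
  | 2 => act K 9
  | _ => 0

variable {K}

theorem act_reverse_act (hz : ∀ y : Y, MulOpposite.op (centralElement (gen K)) • y = 0)
    {a : Fin 10} (ha : 4 ≤ a) (y : Y) : act K (reverse a) (act K a y) = 0 := by
  rw [act_act, (isA7Family_gen K).mul_reverse a ha,
    ← (isA7Family_gen K).centralElement_mul_vertex, MulOpposite.op_mul, mul_smul, hz, smul_zero]

theorem isStringRep (hz : ∀ y : Y, MulOpposite.op (centralElement (gen K)) • y = 0) :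
    IsStringRep (Y := Y) (vertexAct K) (forwardAct K) (backwardAct K) where
  E_E i y := by
    rcases i with _ | _ | _ | _ | i
    exacts [act_vertex_act K 0 y, act_vertex_act K 1 y, act_vertex_act K 2 y,
      act_vertex_act K 3 y, rfl]
  F_E i y := by
    rcases i with _ | _ | _ | i
    exacts [act_vertex_act K 4 y, act_vertex_act K 6 y, act_vertex_act K 8 y, rfl]
  E_F i y := by
    rcases i with _ | _ | _ | i
    exacts [act_act_vertex K 4 y, act_act_vertex K 6 y, act_act_vertex K 8 y, rfl]
  G_E i y := by
    rcases i with _ | _ | _ | i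
    exacts [act_vertex_act K 5 y, act_vertex_act K 7 y, act_vertex_act K 9 y, rfl]
  E_G i y := by
    rcases i with _ | _ | _ | i
    exacts [act_act_vertex K 5 y, act_act_vertex K 7 y, act_act_vertex K 9 y, map_zero _]
  G_F i y := by
    rcases i with _ | _ | _ | i
    exacts [act_reverse_act hz (a := 4) (by decide) y, act_reverse_act hz (a := 6) (by decide) y,
      act_reverse_act hz (a := 8) (by decide) y, rfl]
  F_G i y := by
    rcases i with _ | _ | _ | i
    exacts [act_reverse_act hz (a := 5) (by decide) y, act_reverse_act hz (a := 7) (by decide) y,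
      act_reverse_act hz (a := 9) (by decide) y, rfl]

theorem act_alpha_delta_epsilon (y : Y) : act K 8 (act K 6 (act K 4 y)) = 0 := by
  change MulOpposite.op (gen K 8) • act K 6 (act K 4 y) = 0
  rw [act_act, ← mul_smul, ← MulOpposite.op_mul, (isA7Family_gen K).alpha_delta_epsilon,
    MulOpposite.op_zero, zero_smul]

theorem act_xi_gamma_beta (y : Y) : act K 5 (act K 7 (act K 9 y)) = 0 := by
  change MulOpposite.op (gen K 5) • act K 7 (act K 9 y) = 0
  rw [act_act, ← mul_smul, ← MulOpposite.op_mul, (isA7Family_gen K).xi_gamma_beta,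
    MulOpposite.op_zero, zero_smul]

section Families

variable {n : ℕ} {w : StringWord n} {u : ℕ → Y} {l : ℕ → Module.Dual K Y}

theorem isAdmissible_of_isStringFamily
    (hz : ∀ y : Y, MulOpposite.op (centralElement (gen K)) • y = 0)
    (hn : vertexAct (Y := Y) K (n + 1) = 0)
    (hu : IsStringFamily (vertexAct K) (forwardAct K) (backwardAct K) w u)
    (hu₀ : ∀ i, w.support i → u i ≠ 0) : w.IsAdmissible := by
  intro b h₀ h₁ h₂
  cases b with
  | true =>
    have F_apply {i} (hi : w.step i = some true) : forwardAct K i (u i) = u (i + 1) :=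
      (hu.F_apply_of_E_eq_zero (isStringRep hz) hn i).trans (if_pos hi)
    have path : act K 8 (act K 6 (act K 4 (u 0))) = u 3 :=
      (congrArg (fun y => act K 8 (act K 6 y)) (F_apply h₀)).trans
        ((congrArg (act K 8) (F_apply h₁)).trans (F_apply h₂))
    exact hu₀ 3 (w.support_of_step h₂).2 (path.symm.trans (act_alpha_delta_epsilon (u 0)))
  | false =>
    have G_apply {i} (hi : w.step i = some false) : backwardAct K i (u (i + 1)) = u i :=
      (hu.G_apply_of_E_eq_zero (isStringRep hz) hn i).trans (if_pos hi)
    have path : act K 5 (act K 7 (act K 9 (u 3))) = u 0 :=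
      (congrArg (fun y => act K 5 (act K 7 y)) (G_apply h₂)).trans
        ((congrArg (act K 5) (G_apply h₁)).trans (G_apply h₀))
    exact hu₀ 0 (w.support_of_step h₀).1 (path.symm.trans (act_xi_gamma_beta (u 3)))

theorem isVectorFamily_diagram (hz : ∀ y : Y, MulOpposite.op (centralElement (gen K)) • y = 0)
    (hn : vertexAct (Y := Y) K (n + 1) = 0)
    (hu : IsStringFamily (vertexAct K) (forwardAct K) (backwardAct K) w u)
    (hw : w.IsAdmissible) : ThinModule.IsVectorFamily K (w.diagram hw) fun i => u i := by
  have hF (i) : forwardAct K i (u i) = if decide (w.step i = some true) then u (i + 1) else 0 := by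
    simpa only [decide_eq_true_iff] using hu.F_apply_of_E_eq_zero (isStringRep hz) hn i
  have hG (i) : backwardAct K i (u (i + 1)) =
      if decide (w.step i = some false) then u i else 0 := by
    simpa only [decide_eq_true_iff] using hu.G_apply_of_E_eq_zero (isStringRep hz) hn i
  intro a
  fin_cases a
  exacts [hu.E_apply 0, hu.E_apply 1, hu.E_apply 2, hu.E_apply 3, hF 0, hG 0, hF 1, hG 1, hF 2,
    hG 2]

theorem isCovectorFamily_diagram (hz : ∀ y : Y, MulOpposite.op (centralElement (gen K)) • y = 0)
    (hn : vertexAct (Y := Y) K (n + 1) = 0)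
    (hl : IsStringFamily (fun i => (vertexAct K i).dualMap) (fun i => (backwardAct K i).dualMap)
      (fun i => (forwardAct K i).dualMap) w.flip l)
    (hw : w.IsAdmissible) : ThinModule.IsCovectorFamily (w.diagram hw) fun i => l i := by
  have hn' : (vertexAct (Y := Y) K (n + 1)).dualMap = 0 := by
    rw [hn]
    exact map_zero Module.Dual.transpose
  have hE (i y) : l i (vertexAct K i y) = if w.support i then l i y else 0 := by
    have := LinearMap.congr_fun (hl.E_apply i) y
    rw [w.support_flip] at this
    split_ifs at this ⊢ <;> exact this
  have hF (i y) : l (i + 1) (forwardAct K i y) =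
      if decide (w.step i = some true) then l i y else 0 := by
    have := LinearMap.congr_fun (hl.G_apply_of_E_eq_zero (isStringRep hz).dual hn' i) y
    rw [w.step_flip] at this
    rcases hi : w.step i with _ | _ | _ <;> rw [hi] at this <;> exact this
  have hG (i y) : l i (backwardAct K i y) =
      if decide (w.step i = some false) then l (i + 1) y else 0 := by
    have := LinearMap.congr_fun (hl.F_apply_of_E_eq_zero (isStringRep hz).dual hn' i) y
    rw [w.step_flip] at this
    rcases hi : w.step i with _ | _ | _ <;> rw [hi] at this <;> exact this
  intro a y
  fin_cases a
  exacts [hE 0 y, hE 1 y, hE 2 y, hE 3 y, hF 0 y, hG 0 y, hF 1 y, hG 1 y, hF 2 y, hG 2 y]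

end Families

theorem exists_vertexAct_ne_zero [Nontrivial Y] : ∃ n < 4, vertexAct (Y := Y) K n ≠ 0 := by
  by_contra! h
  obtain ⟨y, hy⟩ := exists_ne (0 : Y)
  refine hy ?_
  rw [← sum_act_vertex K y]
  refine Finset.sum_eq_zero fun i _ => ?_
  fin_cases i
  exacts [LinearMap.congr_fun (h 0 (by decide)) y, LinearMap.congr_fun (h 1 (by decide)) y,
    LinearMap.congr_fun (h 2 (by decide)) y, LinearMap.congr_fun (h 3 (by decide)) y]

theorem vertexAct_eq_zero {n : ℕ} (hn : 4 ≤ n) : vertexAct (Y := Y) K n = 0 := by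
  obtain ⟨n, rfl⟩ := Nat.exists_eq_add_of_le' hn
  rfl

theorem exists_last_vertexAct_ne_zero [Nontrivial Y] :
    ∃ n < 4, vertexAct (Y := Y) K n ≠ 0 ∧ vertexAct (Y := Y) K (n + 1) = 0 := by
  by_contra! h
  obtain ⟨n, -, hn⟩ := exists_vertexAct_ne_zero (K := K) (Y := Y)
  have ne_zero (k : ℕ) : vertexAct (Y := Y) K (n + k) ≠ 0 := by
    induction k with
    | zero => exact hn
    | succ k ih => exact h (n + k) (not_le.1 fun h4 => ih (vertexAct_eq_zero h4)) ih
  exact ne_zero 4 (vertexAct_eq_zero (Nat.le_add_left 4 n))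

theorem exists_isSummand_string [Nontrivial Y]
    (hz : ∀ y : Y, MulOpposite.op (centralElement (gen K)) • y = 0) :
    ∃ D ∈ strings, IsSummand (A7 K)ᵐᵒᵖ (ThinModule K D) Y := by
  obtain ⟨n, hn4, hn, hn'⟩ := exists_last_vertexAct_ne_zero (K := K) (Y := Y)
  obtain ⟨w, u, l, hu, hl, hlu⟩ := (isStringRep hz).exists_dual_families hn
  have hw : w.IsAdmissible := isAdmissible_of_isStringFamily hz hn' hu fun i hi h => by
    have := hlu i hi
    rw [h, map_zero] at this
    exact zero_ne_one this
  refine ⟨w.diagram hw, w.diagram_mem_strings hn4 hw, ThinModule.isSummand_of_families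
    (isVectorFamily_diagram hz hn' hu hw) (isCovectorFamily_diagram hz hn' hl hw) fun i hi => ?_⟩
  fin_cases i
  exacts [hlu 0 hi, hlu 1 hi, hlu 2 hi, hlu 3 hi]

end StringSummand

/-! ### Torsion classes and complete families -/

section CompleteFamilies

/-- The finitely generated modules without non-zero homomorphisms to the members `S j`, `j ∈ t`,
of a family of modules. -/
def leftPerp {Λ : Type u} [Ring Λ] {ι : Type v} (S : ι → ModuleCat.{u} Λ) (t : Set ι) :
    ModuleClass Λ :=
  fun Y _ _ => Module.Finite Λ Y ∧ ∀ j ∈ t, ∀ f : Y →ₗ[Λ] S j, f = 0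

/-- Members `S i` and `S j` of a family of modules with `Hom(S i, S j) = 0`. -/
def HomVanishes {Λ : Type u} [Ring Λ] {ι : Type v} (S : ι → ModuleCat.{u} Λ) (i j : ι) : Prop :=
  ∀ f : S i →ₗ[Λ] S j, f = 0

/-- A family of non-zero finitely generated modules killed by `z`, one of which occurs as a summand
in every non-zero finitely generated module killed by `z`. -/
structure IsCompleteFamily {Λ : Type u} [Ring Λ] (z : Λ) {ι : Type v} (S : ι → ModuleCat.{u} Λ) :
    Prop where
  finite : ∀ i, Module.Finite Λ (S i)
  nontrivial : ∀ i, Nontrivial (S i)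
  smul_eq_zero : ∀ i (x : S i), z • x = 0
  exists_isSummand : ∀ {Y : Type u} [AddCommGroup Y] [Module Λ Y] [Module.Finite Λ Y]
    [Nontrivial Y], (∀ y : Y, z • y = 0) → ∃ i, IsSummand Λ (S i) Y

variable {Λ : Type u} [Ring Λ] {T T' : ModuleClass Λ} {z : Λ} {ι : Type v}
  {S : ι → ModuleCat.{u} Λ}

theorem isTorsionClass_leftPerp (t : Set ι) : IsTorsionClass (leftPerp S t) where
  finite h := h.1
  quot f hf h := by
    have := h.1
    refine ⟨.of_surjective f hf, fun j hj g => ?_⟩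
    rw [← LinearMap.cancel_right hf, h.2 j hj (g ∘ₗ f), LinearMap.zero_comp]
  ext N h h' := by
    have := h.1
    have := h'.1
    refine ⟨.of_submodule_quotient N, fun j hj g => ?_⟩
    have hle : N ≤ LinearMap.ker g := fun x hx =>
      LinearMap.congr_fun (h.2 j hj (g.domRestrict N)) ⟨x, hx⟩
    rw [← N.liftQ_mkQ g hle, h'.2 j hj (N.liftQ g hle), LinearMap.zero_comp]
  zero _ := ⟨inferInstance, fun _ _ _ => Subsingleton.elim _ _⟩

theorem IsTorsionClass.exists_torsion_submodule (hT : IsTorsionClass T) (M : Type u)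
    [AddCommGroup M] [Module Λ M] [IsNoetherian Λ M] :
    ∃ N : Submodule Λ M, T N ∧ ∀ (Y : Type u) [AddCommGroup Y] [Module Λ Y], T Y →
      ∀ g : Y →ₗ[Λ] M ⧸ N, g = 0 := by
  obtain ⟨N, hN, hmax⟩ := WellFounded.has_min (wellFounded_gt (α := Submodule Λ M))
    {N | T N} ⟨⊥, hT.zero inferInstance⟩
  refine ⟨N, hN, fun Y _ _ hY g => ?_⟩
  -- The preimage of the image of `g` is an extension of a quotient of `Y` by `N`.
  let N' : Submodule Λ M := (LinearMap.range g).comap N.mkQ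
  have hle : N ≤ N' := (N.ker_mkQ).symm.le.trans (LinearMap.ker_le_comap _)
  let j : N →ₗ[Λ] N' := Submodule.inclusion hle
  let p : N' →ₗ[Λ] LinearMap.range g := N.mkQ.restrict fun _ hx => hx
  have hp : Function.Surjective p := fun ⟨y, hy⟩ => by
    obtain ⟨x, rfl⟩ := N.mkQ_surjective y
    exact ⟨⟨x, hy⟩, rfl⟩
  have hjp : Function.Exact j p := fun ⟨x, hx⟩ => by
    rw [Subtype.ext_iff]
    refine (Submodule.Quotient.mk_eq_zero N).trans ⟨fun h => ⟨⟨x, h⟩, rfl⟩, ?_⟩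
    rintro ⟨y, hy⟩
    have hyx : (y : M) = x := congrArg Subtype.val hy
    exact hyx ▸ y.2
  have hN' : T N' := hT.of_exact hjp hp hN (hT.quot _ g.surjective_rangeRestrict hY)
  have hNN' : N = N' := hle.eq_of_not_lt (hmax N' hN')
  refine LinearMap.range_eq_bot.1 ?_
  rw [← Submodule.map_comap_eq_of_surjective N.mkQ_surjective (LinearMap.range g), ← N.mkQ_map_self]
  exact congrArg _ hNN'.symm

theorem IsFacClosed.exists_forall_isSummand (hT : IsFacClosed T) {s : Set ι} (hs : s.Finite)
    (h : ∀ i ∈ s, T (S i)) : ∃ X : ModuleCat.{u} Λ, T X ∧ ∀ i ∈ s, IsSummand Λ (S i) X := by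
  induction s, hs using Set.Finite.induction_on with
  | empty => exact ⟨.of Λ PUnit, hT.zero inferInstance, fun _ hi => hi.elim⟩
  | insert _ _ ih =>
    obtain ⟨hi, hs⟩ := Set.forall_mem_insert.1 h
    obtain ⟨X, hX, hsX⟩ := ih hs
    refine ⟨.of Λ (S _ × X), hT.prod hi hX, Set.forall_mem_insert.2 ⟨.fst, fun j hj => ?_⟩⟩
    exact (hsX j hj).trans .snd

namespace IsCompleteFamily

theorem mem_leftPerp_iff (hS : IsCompleteFamily z S) {t : Set ι} {i : ι} :
    leftPerp S t (S i) ↔ i ∈ lowerPolar (HomVanishes S) t :=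
  and_iff_right (hS.finite i)

variable [IsArtinianRing Λ]

theorem mem_of_mem_lowerPolar_upperPolar (hS : IsCompleteFamily z S) (hT : IsTorsionClass T)
    {i : ι} (hi : i ∈ lowerPolar (HomVanishes S) (upperPolar (HomVanishes S) {i | T (S i)})) :
    T (S i) := by
  have := hS.finite i
  obtain ⟨N, hN, hfree⟩ := hT.exists_torsion_submodule (S i)
  refine hT.ext N hN (hT.zero ?_)
  by_contra hne
  have := not_subsingleton_iff_nontrivial.1 hne
  obtain ⟨j, k, q, hkq⟩ := hS.exists_isSummand (Y := S i ⧸ N) fun y => by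
    obtain ⟨x, rfl⟩ := N.mkQ_surjective y
    rw [← map_smul, hS.smul_eq_zero, map_zero]
  have hj : j ∈ upperPolar (HomVanishes S) {i | T (S i)} := fun c hc f =>
    LinearMap.cancel_left hkq.injective |>.1 <| by
      rw [hfree _ hc (k ∘ₗ f), LinearMap.comp_zero]
  have := hS.nontrivial j
  obtain ⟨y, hy⟩ := exists_ne (0 : S j)
  obtain ⟨x, hx⟩ := N.mkQ_surjective (k y)
  refine hy ?_
  rw [← hkq y, ← hx]
  exact LinearMap.congr_fun (hi hj (q ∘ₗ N.mkQ)) x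

theorem isExtent (hS : IsCompleteFamily z S) (hT : IsTorsionClass T) :
    Order.IsExtent (HomVanishes S) {i | T (S i)} :=
  Order.isExtent_iff.2 <| (Set.Subset.antisymm fun _ => hS.mem_of_mem_lowerPolar_upperPolar hT)
    (subset_lowerPolar_upperPolar _ _)

variable [Finite ι]

theorem exists_generator (hS : IsCompleteFamily z S) (hT : IsFacClosed T) :
    ∃ X : ModuleCat.{u} Λ, T X ∧ ∀ (Y : Type u) [AddCommGroup Y] [Module Λ Y] [Module.Finite Λ Y],
      (∀ y : Y, z • y = 0) → (∀ i, IsSummand Λ (S i) Y → T (S i)) → InAdd Λ Y X := by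
  obtain ⟨X, hX, hSX⟩ := hT.exists_forall_isSummand (Set.toFinite {i | T (S i)}) fun _ hi => hi
  refine ⟨X, hX, fun Y _ _ _ hz hY => .of_isIndec fun Z hZ hZY => ?_⟩
  have := hZ.1
  have := hZY.finite
  have hzZ : ∀ x : Z, z • x = 0 := by
    obtain ⟨i, p, hip⟩ := hZY
    intro x
    rw [← hip (z • x), map_smul, hz, map_zero]
  obtain ⟨i, hi⟩ := hS.exists_isSummand hzZ
  have := hS.nontrivial i
  obtain ⟨e⟩ := hZ.nonempty_equiv_of_isSummand hi
  exact ((IsSummand.of_equiv e.symm).trans (hSX i (hY i (hi.trans hZY)))).inAdd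

theorem le_of_forall (hS : IsCompleteFamily z S) (hz : z ∈ Set.center Λ) (hnil : IsNilpotent z)
    (hT : IsTorsionClass T) (hT' : IsTorsionClass T') (h : ∀ i, T (S i) → T' (S i)) (Y : Type u)
    [AddCommGroup Y] [Module Λ Y] (hY : T Y) : T' Y := by
  obtain ⟨n, hn⟩ := hnil
  obtain ⟨X, hX, hadd⟩ := hS.exists_generator hT'.isFacClosed
  have hYz := killedBy_quotient_centralSMul hT hz hY
  have := hT.finite hYz.1
  refine hT'.of_quotient_centralSMul hz (n := n) (fun y => by rw [hn, zero_smul]) ?_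
  exact hT'.isFacClosed.of_generates (.of_inAdd (hadd _ hYz.2 fun i hi =>
    h i (hT.isFacClosed.of_isSummand hi hYz.1))) hX

theorem exists_isSupportTauTilting (K : Type w) [CommRing K] [IsNoetherianRing K] [Algebra K Λ]
    [Module.Finite K Λ] (hS : IsCompleteFamily z S) (hz : z ∈ Set.center Λ) (hnil : IsNilpotent z)
    (hT : IsTorsionClass T) :
    ∃ M : ModuleCat.{u} Λ, IsSupportTauTilting Λ M ∧ IsBasic Λ M ∧
      ∀ (Y : Type u) [AddCommGroup Y] [Module Λ Y], T Y ↔ Generates Λ M Y := by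
  obtain ⟨n, hn⟩ := hnil
  have hTz := hT.isFacClosed.killedBy z
  obtain ⟨X, hX, hadd⟩ := hS.exists_generator hTz
  obtain ⟨M, t, ht, hmin⟩ := hTz.exists_minimal_isApproximation <|
    hTz.exists_isApproximation K hX fun Y _ _ hY =>
      have := hTz.finite hY
      .of_inAdd (hadd Y hY.2 fun i hi => hTz.of_isSummand hi hY)
  obtain ⟨G, hG, hgen⟩ := hT.exists_generator_of_killedBy hz hn (ht.isExtProjective hmin)
    fun Y _ _ hY =>
      have := hTz.finite hY
      ht.generates hY
  exact hT.exists_isSupportTauTilting K hG hgen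

end IsCompleteFamily

end CompleteFamilies

/-! ### Counting support τ-tilting modules by concepts -/

theorem IsCompleteFamily.supportTauTiltingCount [IsArtinianRing R] (K : Type w) [CommRing K]
    [IsNoetherianRing K] [Algebra K R] [Module.Finite K R] {z : R} {ι : Type v} [Finite ι]
    {S : ι → ModCat R} (hS : IsCompleteFamily z S) (hz : z ∈ Set.center R)
    (hnil : IsNilpotent z) :
    SupportTauTiltingCount R (Nat.card (Concept ι ι (HomVanishes S))) := by
  have : Finite (Concept ι ι (HomVanishes S)) := .of_injective _ Concept.extent_injective
  choose M hM hM' hgen using fun c : Concept ι ι (HomVanishes S) =>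
    hS.exists_isSupportTauTilting K hz hnil (isTorsionClass_leftPerp (S := S) c.intent)
  have mem_extent_iff (c : Concept ι ι (HomVanishes S)) (i : ι) :
      i ∈ c.extent ↔ Generates R (M c) (S i) := by
    rw [← hgen, hS.mem_leftPerp_iff, c.lowerPolar_intent]
  let e := (Finite.equivFin (Concept ι ι (HomVanishes S))).symm
  refine ⟨M ∘ e, fun i => ⟨isSupportTauTiltingMod_iff.2 (hM _), isBasicMod_iff.2 (hM' _)⟩,
    fun i j ⟨f⟩ => e.injective (Concept.ext (Set.ext fun k => ?_)), fun N hN hN' => ?_⟩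
  · let f := f.toLinearEquiv
    rw [mem_extent_iff, mem_extent_iff]
    exact ⟨(Generates.of_surjective f.symm.toLinearMap f.symm.surjective).trans,
      (Generates.of_surjective f.toLinearMap f.surjective).trans⟩
  · rw [isSupportTauTiltingMod_iff] at hN
    rw [isBasicMod_iff] at hN'
    have hT := hN.isTorsionClass
    let c := Concept.ofIsExtent _ _ (hS.isExtent hT)
    have hc (i : ι) : leftPerp S c.intent (S i) ↔ Generates R N (S i) := by
      rw [hS.mem_leftPerp_iff, c.lowerPolar_intent]
      exact Iff.rfl
    have hT' := isTorsionClass_leftPerp (S := S) c.intent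
    have hNM := hS.le_of_forall hz hnil hT' hT (fun i => (hc i).1) (M c)
      ((hgen c _).2 (.of_inAdd IsSummand.refl.inAdd))
    have hMN := hS.le_of_forall hz hnil hT hT' (fun i => (hc i).2) N
      (.of_inAdd IsSummand.refl.inAdd)
    obtain ⟨f⟩ := hN.nonempty_equiv (hM c) hN' (hM' c) hNM ((hgen c _).1 hMN)
    refine ⟨e.symm c, ⟨?_⟩⟩
    rw [Function.comp_apply, e.apply_symm_apply]
    exact f.toModuleIso

section Concepts

variable {m n : ℕ} {β : Type w}

/-- The intersections of subfamilies of a family of subsets of `Fin m`, without repetition. The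
subsets are encoded as bit vectors, on which the kernel computes efficiently. -/
def intersections (row : β → BitVec m) (l : List β) : List (BitVec m) :=
  l.foldr (fun d acc => acc.map (· &&& row d) ∪ acc) [BitVec.allOnes m]

variable {row : β → BitVec m}

theorem nodup_intersections (l : List β) : (intersections row l).Nodup := by
  induction l with
  | nil => exact List.nodup_singleton _
  | cons d l ih => exact ih.union _

theorem mem_intersections {l : List β} {v : BitVec m} : v ∈ intersections row l ↔
    ∃ k, List.Sublist k l ∧ k.foldr (fun d v => v &&& row d) (BitVec.allOnes m) = v := by
  induction l generalizing v with
  | nil => simp [intersections, eq_comm]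
  | cons d l ih =>
    change v ∈ (intersections row l).map (· &&& row d) ∪ intersections row l ↔ _
    rw [List.mem_union_iff, List.mem_map]
    constructor
    · rintro (⟨v, hv, rfl⟩ | hv)
      · obtain ⟨k, hk, rfl⟩ := ih.1 hv
        exact ⟨d :: k, hk.cons_cons d, rfl⟩
      · obtain ⟨k, hk, rfl⟩ := ih.1 hv
        exact ⟨k, hk.cons d, rfl⟩
    · rintro ⟨k, hk, rfl⟩
      cases hk with
      | cons _ hk => exact .inr (ih.2 ⟨_, hk, rfl⟩)
      | cons_cons _ hk => exact .inl ⟨_, ih.2 ⟨_, hk, rfl⟩, rfl⟩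

theorem getLsb_foldr_and (k : List β) (a : Fin m) :
    (k.foldr (fun d v => v &&& row d) (BitVec.allOnes m)).getLsb a = true ↔
      ∀ d ∈ k, (row d).getLsb a = true := by
  induction k with
  | nil => simp
  | cons d k ih => simp_all [and_comm]

variable (r : Fin m → Fin n → Prop) [∀ a d, Decidable (r a d)]

/-- The concepts of a decidable relation, encoded by their extents. -/
def conceptCodes : List (BitVec m) :=
  intersections (fun d => BitVec.ofFnLE fun a => decide (r a d)) (List.finRange n)

theorem isExtent_iff_exists_mem_conceptCodes {s : Set (Fin m)} :
    Order.IsExtent r s ↔ ∃ v ∈ conceptCodes r, {a | v.getLsb a = true} = s := by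
  have setOf_getLsb (k : List (Fin n)) : {a | (k.foldr (fun d v =>
      v &&& BitVec.ofFnLE fun a => decide (r a d)) (BitVec.allOnes m)).getLsb a = true} =
      lowerPolar r {d | d ∈ k} := by
    ext a
    refine (getLsb_foldr_and k a).trans (forall₂_congr fun d _ => ?_)
    rw [BitVec.getLsb_ofFnLE, decide_eq_true_iff]
  constructor
  · rintro ⟨t, rfl⟩
    classical
    refine ⟨_, mem_intersections.2 ⟨_, List.filter_sublist (p := fun d => d ∈ t), rfl⟩, ?_⟩
    rw [setOf_getLsb]
    simp
  · rintro ⟨v, hv, rfl⟩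
    obtain ⟨k, -, rfl⟩ := mem_intersections.1 hv
    exact ⟨_, (setOf_getLsb k).symm⟩

theorem card_concept : Nat.card (Concept (Fin m) (Fin n) r) = (conceptCodes r).length := by
  let f (v : (conceptCodes r).toFinset) : Concept (Fin m) (Fin n) r :=
    .ofIsExtent r {a | v.1.getLsb a = true} <|
      (isExtent_iff_exists_mem_conceptCodes r).2 ⟨v, List.mem_toFinset.1 v.2, rfl⟩
  have hf : Function.Bijective f := by
    constructor
    · intro v w h
      have hvw : {a | v.1.getLsb a = true} = {a | w.1.getLsb a = true} :=
        congrArg Concept.extent h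
      refine Subtype.ext (BitVec.eq_of_getLsbD_eq fun i hi => ?_)
      exact Bool.eq_iff_iff.2 (Set.ext_iff.1 hvw ⟨i, hi⟩)
    · intro c
      obtain ⟨v, hv, h⟩ := (isExtent_iff_exists_mem_conceptCodes r).1 c.isExtent_extent
      exact ⟨⟨v, List.mem_toFinset.2 hv⟩, Concept.ext h⟩
  rw [← Nat.card_eq_of_bijective f hf, Nat.card_eq_fintype_card, Fintype.card_coe,
    List.toFinset_card_of_nodup (l := conceptCodes r) (nodup_intersections _)]

end Concepts

section A7

variable (K : Type) [Field K]

/-- The string modules over `A₇`. -/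
def stringModule (a : Fin strings.length) : ModCat (A7 K)ᵐᵒᵖ :=
  .of (A7 K)ᵐᵒᵖ (ThinModule K (strings.get a))

theorem isCompleteFamily_stringModule :
    IsCompleteFamily (MulOpposite.op (centralElement (gen K))) (stringModule K) where
  finite a := inferInstanceAs (Module.Finite _ (ThinModule K (strings.get a)))
  nontrivial a := by
    have exists_vertex : ∀ a, ∃ i, (strings.get a).coeff (vertex i) := by decide +kernel
    obtain ⟨i, hi⟩ := exists_vertex a
    refine ⟨0, ThinModule.basisVector K (strings.get a) i, fun h => ?_⟩
    have h' := congrArg (ThinModule.coord i) h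
    rw [ThinModule.coord_basisVector, if_pos ⟨rfl, hi⟩] at h'
    exact zero_ne_one h'
  smul_eq_zero _ := ThinModule.op_centralElement_smul_eq_zero
  exists_isSummand {Y} _ _ _ _ hz := by
    let _ : Module K Y := .compHom Y (algebraMap K (A7 K)ᵐᵒᵖ)
    have : IsScalarTower K (A7 K)ᵐᵒᵖ Y := .of_algebraMap_smul fun _ _ => rfl
    obtain ⟨D, hD, h⟩ := exists_isSummand_string hz
    obtain ⟨a, rfl⟩ := List.get_of_mem hD
    exact ⟨a, h⟩

theorem homVanishes_stringModule_iff {a b : Fin strings.length} :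
    HomVanishes (stringModule K) a b ↔ ¬ ThinModule.HasHom (strings.get a) (strings.get b) := by
  constructor
  · intro h hab
    obtain ⟨f, hf⟩ := ThinModule.exists_ne_zero_of_hasHom (K := K) hab
    exact hf (h f)
  · intro h f
    by_contra hf
    exact h (ThinModule.hasHom_of_ne_zero hf)

theorem card_concept_stringModule :
    Nat.card (Concept _ _ (HomVanishes (stringModule K))) = 108 := by
  have h : HomVanishes (stringModule K) =
      fun a b => ¬ ThinModule.HasHom (strings.get a) (strings.get b) := by
    ext a b
    exact homVanishes_stringModule_iff K
  have hlength : (conceptCodes fun a b : Fin strings.length =>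
      ¬ ThinModule.HasHom (strings.get a) (strings.get b)).length = 108 := by decide +kernel
  rw [h, card_concept, hlength]

end A7

theorem A7_has_exactly_108_support_tau_tilting_modules_general (K : Type) [Field K] :
    SupportTauTiltingCount (A7 K)ᵐᵒᵖ 108 := by
  rw [← card_concept_stringModule K]
  exact (isCompleteFamily_stringModule K).supportTauTiltingCount K
    (op_centralElement_mem_center K) ⟨3, op_centralElement_pow_three K⟩

/-- appendix of the paper.  The weakly symmetric algebra
`A₇` of tubular type (quiver `1 ⇄ 2 ⇄ 3 ⇄ 4` with arrows `α : 1 → 2`,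
`β : 2 → 1`, `δ : 2 → 3`, `γ : 3 → 2`, `ε : 3 → 4`, `ξ : 4 → 3`, bound by
`βα = δγ`, `γδ = εξ`, `αδε = 0`, `ξγβ = 0`) has exactly `108` isomorphism
classes of basic support τ-tilting (right) modules. -/
theorem A7_has_exactly_108_support_tau_tilting_modules
    (K : Type) [Field K] [IsAlgClosed K] :
    SupportTauTiltingCount (A7 K)ᵐᵒᵖ 108 := by
  exact A7_has_exactly_108_support_tau_tilting_modules_general K

end PaperSilting
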